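/- arXiv:2206.14447 — 9 statements merged into one kernel-verified Lean document; each statement's English description precedes it below -/
import Mathlib

section
/- There exists a constant C > 0 such that for every s ∈ [0,1] and all measurable u, v : ℝ^{d−1} × ℤ → ℂ with ‖u‖_s < ∞ and ‖v‖_s < ∞, the function B(ξ,λ) := ∫_{ℝ^{d−1}} Σ_{μ∈ℤ, μ≠0, μ≠λ} [μ(λ−μ)/((λ−μ)δ¹ + μδ³)] u(ξ−η, λ−μ) v(η,μ) dη satisfies ‖B‖_s ≤ C ‖u‖_s ‖v‖_s. -/
open MeasureTheory
open scoped ENNReal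

noncomputable section

/-- Squared norm of the analytic space `Y_s`, on the Fourier side:
`‖F‖_s² = ∫_{ℝ^{d−1}} Σ_{λ∈ℤ} e^{2s|(ξ,λ)|} ⟨(ξ,λ)⟩^{2d*} |F(ξ,λ)|² dξ`. -/
def YNormSq (d dstar : ℕ) (s : ℝ) (F : EuclideanSpace ℝ (Fin (d - 1)) × ℤ → ℂ) : ℝ≥0∞ :=
  ∫⁻ ξ : EuclideanSpace ℝ (Fin (d - 1)), ∑' l : ℤ,
    ENNReal.ofReal (Real.exp (2 * s * Real.sqrt (‖ξ‖ ^ 2 + (l : ℝ) ^ 2)) *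
      (1 + ‖ξ‖ ^ 2 + (l : ℝ) ^ 2) ^ dstar * ‖F (ξ, l)‖ ^ 2)

/-!
Multiplying by the weight `e^{s|p|} ⟨p⟩^D` turns `‖·‖_s` into an `L²` norm. By the triangle
inequality `e^{s|p|} ≤ e^{s|p - q|} e^{s|q|}`, and `⟨p⟩` is at most twice the larger of `⟨p - q⟩`
and `⟨q⟩`, so the weight at `p` is at most `2^D` times the product of those at `p - q` and `q`,
with a factor `⟨·⟩^{-D}` of the smaller bracket left over. This factor pays for the kernel, of
size `O(min(|λ - μ|, |μ|)^(m₀ + 2))`, and what remains of it pays for the convolution: by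
Cauchy–Schwarz it suffices that `⟨q⟩^(m₀ + 2 - D)` is square integrable.

For the kernel, with `k = λ - μ` and `l = μ`, write `lδ³ = (kδ¹ + lδ³) - kδ¹`. The first summand
cancels the divisor, and the second costs one more power of `|k|` and the small-divisor estimate.
-/

section Convolution

theorem lintegral_mul_sq_le {α : Type*} [MeasurableSpace α] (μ : Measure α) {f g : α → ℝ≥0∞}
    (hf : AEMeasurable f μ) (hg : AEMeasurable g μ) :
    (∫⁻ a, f a * g a ∂μ) ^ 2 ≤ (∫⁻ a, f a ^ 2 ∂μ) * ∫⁻ a, g a ^ 2 ∂μ := by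
  have h := ENNReal.lintegral_mul_le_Lp_mul_Lq μ Real.HolderConjugate.two_two hf hg
  simp only [Pi.mul_apply, ENNReal.rpow_two] at h
  calc (∫⁻ a, f a * g a ∂μ) ^ 2
      ≤ ((∫⁻ a, f a ^ 2 ∂μ) ^ (1 / 2 : ℝ) * (∫⁻ a, g a ^ 2 ∂μ) ^ (1 / 2 : ℝ)) ^ 2 := by gcongr
    _ = (∫⁻ a, f a ^ 2 ∂μ) * ∫⁻ a, g a ^ 2 ∂μ := by
      have hsqrt : ∀ x : ℝ≥0∞, (x ^ (1 / 2 : ℝ)) ^ 2 = x := fun x => by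
        rw [← ENNReal.rpow_mul_natCast, Nat.cast_two, one_div_mul_cancel two_ne_zero,
          ENNReal.rpow_one]
      rw [mul_pow, hsqrt, hsqrt]

variable {G : Type*} [AddCommGroup G] [MeasurableSpace G] [MeasurableAdd₂ G] [MeasurableSub₂ G]
  (ν : Measure G) [ν.IsAddRightInvariant]

theorem lintegral_add_comp_sub_sq_le {g : G → ℝ≥0∞} (hg : Measurable g)
    (hg_even : ∀ q, g (-q) = g q) (p : G) :
    ∫⁻ q, (g q + g (p - q)) ^ 2 ∂ν ≤ 4 * ∫⁻ q, g q ^ 2 ∂ν := by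
  have hreflect : ∀ q, g (p - q) = g (q - p) := fun q => by rw [← hg_even, neg_sub]
  have hsq : ∀ a b : ℝ≥0∞, (a + b) ^ 2 ≤ 2 * (a ^ 2 + b ^ 2) := fun a b => by
    have h := ENNReal.rpow_add_le_mul_rpow_add_rpow a b one_le_two
    rwa [sub_eq_of_eq_add one_add_one_eq_two.symm, ENNReal.rpow_one, ENNReal.rpow_two,
      ENNReal.rpow_two, ENNReal.rpow_two] at h
  calc ∫⁻ q, (g q + g (p - q)) ^ 2 ∂ν
      ≤ ∫⁻ q, 2 * (g q ^ 2 + g (q - p) ^ 2) ∂ν :=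
        lintegral_mono fun q => by simpa only [hreflect] using hsq _ _
    _ = 2 * (∫⁻ q, g q ^ 2 ∂ν + ∫⁻ q, g q ^ 2 ∂ν) := by
        rw [lintegral_const_mul _ (by fun_prop), lintegral_add_left (by fun_prop),
          lintegral_sub_right_eq_self (fun q => g q ^ 2) p]
    _ = 4 * ∫⁻ q, g q ^ 2 ∂ν := by ring

variable [SFinite ν]

theorem lintegral_lintegral_comp_sub_mul {f h : G → ℝ≥0∞} (hf : Measurable f)
    (hh : Measurable h) :
    ∫⁻ p, ∫⁻ q, f (p - q) * h q ∂ν ∂ν = (∫⁻ q, f q ∂ν) * ∫⁻ q, h q ∂ν := by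
  rw [lintegral_lintegral_swap (by fun_prop), ← lintegral_const_mul _ hh]
  refine lintegral_congr fun q => ?_
  rw [lintegral_mul_const _ (by fun_prop), lintegral_sub_right_eq_self f q]

theorem lintegral_weighted_convolution_sq_le {U V g : G → ℝ≥0∞} (hU : Measurable U)
    (hV : Measurable V) (hg : Measurable g) (hg_even : ∀ q, g (-q) = g q) :
    ∫⁻ p, (∫⁻ q, U (p - q) * V q * (g q + g (p - q)) ∂ν) ^ 2 ∂ν ≤
      4 * (∫⁻ q, g q ^ 2 ∂ν) * ((∫⁻ q, U q ^ 2 ∂ν) * ∫⁻ q, V q ^ 2 ∂ν) := by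
  have hpointwise : ∀ p, (∫⁻ q, U (p - q) * V q * (g q + g (p - q)) ∂ν) ^ 2 ≤
      4 * (∫⁻ q, g q ^ 2 ∂ν) * ∫⁻ q, U (p - q) ^ 2 * V q ^ 2 ∂ν := fun p =>
    calc (∫⁻ q, U (p - q) * V q * (g q + g (p - q)) ∂ν) ^ 2
        ≤ (∫⁻ q, (U (p - q) * V q) ^ 2 ∂ν) * ∫⁻ q, (g q + g (p - q)) ^ 2 ∂ν :=
          lintegral_mul_sq_le ν (by fun_prop) (by fun_prop)
      _ ≤ (∫⁻ q, (U (p - q) * V q) ^ 2 ∂ν) * (4 * ∫⁻ q, g q ^ 2 ∂ν) := by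
          gcongr
          exact lintegral_add_comp_sub_sq_le ν hg hg_even p
      _ = 4 * (∫⁻ q, g q ^ 2 ∂ν) * ∫⁻ q, U (p - q) ^ 2 * V q ^ 2 ∂ν := by
          simp only [mul_pow, mul_comm]
  have hmeas : Measurable fun z : G × G => U (z.1 - z.2) ^ 2 * V z.2 ^ 2 := by fun_prop
  calc ∫⁻ p, (∫⁻ q, U (p - q) * V q * (g q + g (p - q)) ∂ν) ^ 2 ∂ν
      ≤ ∫⁻ p, 4 * (∫⁻ q, g q ^ 2 ∂ν) * ∫⁻ q, U (p - q) ^ 2 * V q ^ 2 ∂ν ∂ν :=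
        lintegral_mono hpointwise
    _ = 4 * (∫⁻ q, g q ^ 2 ∂ν) * ((∫⁻ q, U q ^ 2 ∂ν) * ∫⁻ q, V q ^ 2 ∂ν) := by
        rw [lintegral_const_mul _ hmeas.lintegral_prod_right',
          lintegral_lintegral_comp_sub_mul ν (hU.pow_const 2) (hV.pow_const 2)]

end Convolution

section Weight

/-- The Japanese bracket `⟨r⟩ = (1 + r²)^{1/2}` of the length `r` of a frequency. -/
def japaneseBracket (r : ℝ) : ℝ := √(1 + r ^ 2)

theorem one_le_japaneseBracket (r : ℝ) : 1 ≤ japaneseBracket r :=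
  Real.one_le_sqrt.2 (by nlinarith [sq_nonneg r])

theorem japaneseBracket_pos (r : ℝ) : 0 < japaneseBracket r :=
  one_pos.trans_le (one_le_japaneseBracket r)

theorem le_japaneseBracket (r : ℝ) : r ≤ japaneseBracket r :=
  Real.le_sqrt_of_sq_le (by linarith)

theorem japaneseBracket_le_japaneseBracket {r t : ℝ} (hr : 0 ≤ r) (hrt : r ≤ t) :
    japaneseBracket r ≤ japaneseBracket t := by
  unfold japaneseBracket
  gcongr

theorem japaneseBracket_two_mul_le (r : ℝ) : japaneseBracket (2 * r) ≤ 2 * japaneseBracket r := by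
  refine Real.sqrt_le_iff.2 ⟨by linarith [japaneseBracket_pos r], ?_⟩
  rw [mul_pow, mul_pow, japaneseBracket, Real.sq_sqrt (by positivity)]
  linarith

@[fun_prop]
theorem measurable_japaneseBracket : Measurable japaneseBracket := by
  unfold japaneseBracket
  fun_prop

/-- The weight `e^{sr} ⟨r⟩^D` of the analytic space `Y_s`, as a function of the length `r` of a
frequency. The order `D`, called `d*` in the paper, may be any real number. -/
def analyticWeight (D s r : ℝ) : ℝ := Real.exp (s * r) * japaneseBracket r ^ D

theorem analyticWeight_nonneg (D s r : ℝ) : 0 ≤ analyticWeight D s r :=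
  mul_nonneg (Real.exp_nonneg _) (Real.rpow_nonneg (japaneseBracket_pos r).le _)

theorem analyticWeight_natCast_sq (D : ℕ) (s r : ℝ) :
    analyticWeight D s r ^ 2 = Real.exp (2 * s * r) * (1 + r ^ 2) ^ D := by
  have hexp : Real.exp (s * r) ^ 2 = Real.exp (2 * s * r) := by
    rw [← Real.exp_nat_mul, Nat.cast_two, mul_assoc]
  rw [analyticWeight, Real.rpow_natCast, mul_pow, hexp, ← pow_mul, mul_comm D, pow_mul,
    japaneseBracket, Real.sq_sqrt (by positivity)]

@[fun_prop]
theorem measurable_analyticWeight (D s : ℝ) : Measurable (analyticWeight D s) := by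
  unfold analyticWeight
  fun_prop

variable {D s m a b r x : ℝ}

theorem analyticWeight_mul_rpow_le_of_le (hD : 0 ≤ D) (hs : 0 ≤ s) (hm : 0 ≤ m) (hx : 0 ≤ x)
    (hxa : x ≤ a) (hab : a ≤ b) (hr : 0 ≤ r) (hrab : r ≤ a + b) :
    analyticWeight D s r * x ^ m ≤
      2 ^ D * (analyticWeight D s a * analyticWeight D s b * japaneseBracket a ^ (m - D)) := by
  have ha := japaneseBracket_pos a
  have hb := japaneseBracket_pos b
  have hexp : Real.exp (s * r) ≤ Real.exp (s * a) * Real.exp (s * b) := by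
    rw [← Real.exp_add, ← mul_add]
    gcongr
  have hbracket : japaneseBracket r ^ D ≤ 2 ^ D * japaneseBracket b ^ D := by
    rw [← Real.mul_rpow zero_le_two hb.le]
    refine Real.rpow_le_rpow (japaneseBracket_pos r).le ?_ hD
    exact (japaneseBracket_le_japaneseBracket hr (by linarith)).trans
      (japaneseBracket_two_mul_le b)
  have hpow : x ^ m ≤ japaneseBracket a ^ D * japaneseBracket a ^ (m - D) := by
    rw [← Real.rpow_add ha, add_sub_cancel]
    exact Real.rpow_le_rpow hx (hxa.trans (le_japaneseBracket a)) hm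
  calc analyticWeight D s r * x ^ m
      ≤ Real.exp (s * a) * Real.exp (s * b) * (2 ^ D * japaneseBracket b ^ D) *
          (japaneseBracket a ^ D * japaneseBracket a ^ (m - D)) := by
        unfold analyticWeight
        gcongr
        exact Real.rpow_nonneg (japaneseBracket_pos r).le D
    _ = 2 ^ D * (analyticWeight D s a * analyticWeight D s b * japaneseBracket a ^ (m - D)) := by
        unfold analyticWeight
        ring

theorem analyticWeight_mul_rpow_le (hD : 0 ≤ D) (hs : 0 ≤ s) (hm : 0 ≤ m) (hx : 0 ≤ x)
    (hxa : x ≤ a) (hxb : x ≤ b) (hr : 0 ≤ r) (hrab : r ≤ a + b) :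
    analyticWeight D s r * x ^ m ≤
      2 ^ D * (analyticWeight D s a * analyticWeight D s b *
        (japaneseBracket b ^ (m - D) + japaneseBracket a ^ (m - D))) := by
  have hwa := analyticWeight_nonneg D s a
  have hwb := analyticWeight_nonneg D s b
  have hga := Real.rpow_nonneg (japaneseBracket_pos a).le (m - D)
  have hgb := Real.rpow_nonneg (japaneseBracket_pos b).le (m - D)
  rcases le_total a b with hab | hba
  · refine (analyticWeight_mul_rpow_le_of_le hD hs hm hx hxa hab hr hrab).trans ?_
    gcongr
    exact le_add_of_nonneg_left hgb
  · refine (analyticWeight_mul_rpow_le_of_le hD hs hm hx hxb hba hr (by linarith)).trans ?_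
    rw [mul_comm (analyticWeight D s b)]
    gcongr
    exact le_add_of_nonneg_right hga

end Weight

section FrequencySpace

variable {E : Type*} [NormedAddCommGroup E]

/-- The Euclidean length `|(ξ, λ)| = (‖ξ‖² + λ²)^{1/2}` of a frequency. The norm of the product
type `E × ℤ` is the maximum of the norms of the components, hence the separate definition. -/
def freqNorm (p : E × ℤ) : ℝ := √(‖p.1‖ ^ 2 + (p.2 : ℝ) ^ 2)

theorem freqNorm_eq_norm_toLp (p : E × ℤ) : freqNorm p = ‖WithLp.toLp 2 p‖ := by
  simp [freqNorm, WithLp.prod_norm_eq_of_L2, Int.norm_eq_abs]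

theorem freqNorm_nonneg (p : E × ℤ) : 0 ≤ freqNorm p := Real.sqrt_nonneg _

theorem freqNorm_neg (p : E × ℤ) : freqNorm (-p) = freqNorm p := by simp [freqNorm]

theorem freqNorm_le_sub_add (p q : E × ℤ) : freqNorm p ≤ freqNorm (p - q) + freqNorm q := by
  simp only [freqNorm_eq_norm_toLp]
  simpa only [← WithLp.toLp_add, sub_add_cancel] using
    norm_add_le (WithLp.toLp 2 (p - q)) (WithLp.toLp 2 q)

theorem norm_fst_le_freqNorm (p : E × ℤ) : ‖p.1‖ ≤ freqNorm p :=
  Real.le_sqrt_of_sq_le (by nlinarith [sq_nonneg (p.2 : ℝ)])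

theorem abs_snd_le_freqNorm (p : E × ℤ) : |(p.2 : ℝ)| ≤ freqNorm p :=
  Real.abs_le_sqrt (by nlinarith [sq_nonneg ‖p.1‖])

@[fun_prop]
theorem measurable_freqNorm [MeasurableSpace E] [OpensMeasurableSpace E] :
    Measurable (freqNorm (E := E)) := by
  have : Measurable fun p : E × ℤ => (p.2 : ℝ) := (measurable_of_countable _).comp measurable_snd
  unfold freqNorm
  fun_prop

theorem lintegral_prod_count {α ι : Type*} [MeasurableSpace α] [MeasurableSpace ι] [Countable ι]
    [MeasurableSingletonClass ι] (ν : Measure α) {f : α × ι → ℝ≥0∞} (hf : Measurable f) :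
    ∫⁻ p, f p ∂(ν.prod Measure.count) = ∫⁻ x, ∑' i, f (x, i) ∂ν := by
  rw [lintegral_prod _ hf.aemeasurable]
  simp only [lintegral_count]

theorem japaneseBracket_freqNorm_rpow_neg_le {a b : ℝ} (ha : 0 ≤ a) (hb : 0 ≤ b) (p : E × ℤ) :
    japaneseBracket (freqNorm p) ^ (-(a + b)) ≤
      japaneseBracket ‖p.1‖ ^ (-a) * japaneseBracket |(p.2 : ℝ)| ^ (-b) := by
  have hpos := japaneseBracket_pos (freqNorm p)
  have hfst := japaneseBracket_le_japaneseBracket (norm_nonneg p.1) (norm_fst_le_freqNorm p)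
  have hsnd := japaneseBracket_le_japaneseBracket (abs_nonneg (p.2 : ℝ)) (abs_snd_le_freqNorm p)
  rw [neg_add, Real.rpow_add hpos]
  exact mul_le_mul
    (Real.rpow_le_rpow_of_nonpos (japaneseBracket_pos _) hfst (neg_nonpos.2 ha))
    (Real.rpow_le_rpow_of_nonpos (japaneseBracket_pos _) hsnd (neg_nonpos.2 hb))
    (Real.rpow_nonneg hpos.le _) (Real.rpow_nonneg (japaneseBracket_pos _).le _)

theorem summable_japaneseBracket_abs_intCast_rpow_neg {b : ℝ} (hb : 1 < b) :
    Summable fun l : ℤ => japaneseBracket |(l : ℝ)| ^ (-b) := by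
  refine (Real.summable_abs_int_rpow hb).of_norm_bounded_eventually ?_
  filter_upwards [(Set.finite_singleton (0 : ℤ)).compl_mem_cofinite] with l hl
  have hl_pos : 0 < |(l : ℝ)| := abs_pos.2 (Int.cast_ne_zero.2 hl)
  rw [Real.norm_of_nonneg (Real.rpow_nonneg (japaneseBracket_pos _).le _)]
  exact Real.rpow_le_rpow_of_nonpos hl_pos (le_japaneseBracket _) (by linarith)

variable [NormedSpace ℝ E] [FiniteDimensional ℝ E] [MeasurableSpace E] [BorelSpace E]
  (ν : Measure E) [ν.IsAddHaarMeasure]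

theorem lintegral_japaneseBracket_freqNorm_rpow_neg_lt_top {t : ℝ}
    (ht : (Module.finrank ℝ E : ℝ) + 1 < t) :
    ∫⁻ p : E × ℤ, ENNReal.ofReal (japaneseBracket (freqNorm p) ^ (-t)) ∂(ν.prod Measure.count)
      < ⊤ := by
  obtain ⟨b, hb_one, hb_lt⟩ := exists_between (lt_sub_iff_add_lt'.2 ht)
  have hfinrank : (Module.finrank ℝ E : ℝ) < t - b := by linarith
  have hbt : 0 ≤ t - b := (Nat.cast_nonneg _).trans hfinrank.le
  have hintegrable : Integrable (fun ξ : E => japaneseBracket ‖ξ‖ ^ (-(t - b))) ν := by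
    refine (integrable_rpow_neg_one_add_norm_sq hfinrank).congr (.of_forall fun ξ => ?_)
    exact Real.rpow_div_two_eq_sqrt _ (by positivity)
  have hsummable := summable_japaneseBracket_abs_intCast_rpow_neg hb_one
  calc ∫⁻ p : E × ℤ, ENNReal.ofReal (japaneseBracket (freqNorm p) ^ (-t)) ∂(ν.prod Measure.count)
      ≤ ∫⁻ p : E × ℤ, ENNReal.ofReal (japaneseBracket ‖p.1‖ ^ (-(t - b))) *
          ENNReal.ofReal (japaneseBracket |(p.2 : ℝ)| ^ (-b)) ∂(ν.prod Measure.count) := by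
        refine lintegral_mono fun p => ?_
        rw [← ENNReal.ofReal_mul (Real.rpow_nonneg (japaneseBracket_pos _).le _)]
        refine ENNReal.ofReal_le_ofReal ?_
        simpa only [sub_add_cancel] using
          japaneseBracket_freqNorm_rpow_neg_le hbt (zero_le_one.trans hb_one.le) p
    _ = (∫⁻ ξ : E, ENNReal.ofReal (japaneseBracket ‖ξ‖ ^ (-(t - b))) ∂ν) *
          ∑' l : ℤ, ENNReal.ofReal (japaneseBracket |(l : ℝ)| ^ (-b)) := by
        rw [← lintegral_count]
        have hmeas : Measurable fun ξ : E => ENNReal.ofReal (japaneseBracket ‖ξ‖ ^ (-(t - b))) := by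
          fun_prop
        exact lintegral_prod_mul hmeas.aemeasurable (measurable_of_countable fun l : ℤ =>
          ENNReal.ofReal (japaneseBracket |(l : ℝ)| ^ (-b))).aemeasurable
    _ < ⊤ := ENNReal.mul_lt_top hintegrable.lintegral_lt_top hsummable.tsum_ofReal_lt_top

end FrequencySpace

section BilinearOperator

variable {E : Type*} [NormedAddCommGroup E]

/-- The modulus of `F` multiplied by the weight of `Y_s`, so that `‖F‖_s` is its `L²` norm. -/
def weightedEnorm (D s : ℝ) (F : E × ℤ → ℂ) (p : E × ℤ) : ℝ≥0∞ :=
  ENNReal.ofReal (analyticWeight D s (freqNorm p)) * ‖F p‖ₑ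

/-- The factor `⟨p⟩^{-σ}` left over when the weight of `Y_s` is distributed over a product. -/
def bracketDecay (σ : ℝ) (p : E × ℤ) : ℝ≥0∞ :=
  ENNReal.ofReal (japaneseBracket (freqNorm p) ^ (-σ))

theorem bracketDecay_neg (σ : ℝ) (p : E × ℤ) : bracketDecay σ (-p) = bracketDecay σ p := by
  rw [bracketDecay, freqNorm_neg, bracketDecay]

theorem analyticWeight_freqNorm_mul_le {D s m K : ℝ} (hD : 0 ≤ D) (hs : 0 ≤ s) (hm : 0 ≤ m)
    (hK : 0 ≤ K) (p q : E × ℤ) {x : ℝ} (hx : x ≤ K * min |((p - q).2 : ℝ)| |(q.2 : ℝ)| ^ m) :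
    analyticWeight D s (freqNorm p) * x ≤
      K * 2 ^ D * (analyticWeight D s (freqNorm (p - q)) * analyticWeight D s (freqNorm q) *
        (japaneseBracket (freqNorm q) ^ (-(D - m)) +
          japaneseBracket (freqNorm (p - q)) ^ (-(D - m)))) := by
  have hweight := analyticWeight_mul_rpow_le hD hs hm
    (le_min (abs_nonneg ((p - q).2 : ℝ)) (abs_nonneg (q.2 : ℝ)))
    ((min_le_left _ _).trans (abs_snd_le_freqNorm (p - q)))
    ((min_le_right _ _).trans (abs_snd_le_freqNorm q))
    (freqNorm_nonneg p) (freqNorm_le_sub_add p q)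
  calc analyticWeight D s (freqNorm p) * x
      ≤ analyticWeight D s (freqNorm p) * (K * min |((p - q).2 : ℝ)| |(q.2 : ℝ)| ^ m) :=
        mul_le_mul_of_nonneg_left hx (analyticWeight_nonneg _ _ _)
    _ = K * (analyticWeight D s (freqNorm p) * min |((p - q).2 : ℝ)| |(q.2 : ℝ)| ^ m) := by ring
    _ ≤ _ := by
        rw [mul_assoc, neg_sub]
        exact mul_le_mul_of_nonneg_left hweight hK

theorem ofReal_analyticWeight_mul_enorm_le {D s m K : ℝ} (hD : 0 ≤ D) (hs : 0 ≤ s) (hm : 0 ≤ m)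
    (hK : 0 ≤ K) (u v : E × ℤ → ℂ) (p q : E × ℤ) {c : ℂ}
    (hc : ‖c‖ ≤ K * min |((p - q).2 : ℝ)| |(q.2 : ℝ)| ^ m) :
    ENNReal.ofReal (analyticWeight D s (freqNorm p)) * ‖c * u (p - q) * v q‖ₑ ≤
      ENNReal.ofReal (K * 2 ^ D) * (weightedEnorm D s u (p - q) * weightedEnorm D s v q *
        (bracketDecay (D - m) q + bracketDecay (D - m) (p - q))) := by
  have hw := analyticWeight_nonneg D s
  have hg : ∀ q : E × ℤ, 0 ≤ japaneseBracket (freqNorm q) ^ (-(D - m)) := fun q =>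
    Real.rpow_nonneg (japaneseBracket_pos _).le _
  have hkernel := ENNReal.ofReal_le_ofReal (analyticWeight_freqNorm_mul_le hD hs hm hK p q hc)
  rw [ENNReal.ofReal_mul (hw _), ofReal_norm, ENNReal.ofReal_mul (by positivity),
    ENNReal.ofReal_mul (mul_nonneg (hw _) (hw _)), ENNReal.ofReal_mul (hw _),
    ENNReal.ofReal_add (hg _) (hg _)] at hkernel
  calc ENNReal.ofReal (analyticWeight D s (freqNorm p)) * ‖c * u (p - q) * v q‖ₑ
      = ENNReal.ofReal (analyticWeight D s (freqNorm p)) * ‖c‖ₑ * (‖u (p - q)‖ₑ * ‖v q‖ₑ) := by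
        rw [enorm_mul, enorm_mul]
        ring
    _ ≤ _ := mul_le_mul_left hkernel _
    _ = _ := by
        unfold weightedEnorm bracketDecay
        ring

variable [MeasurableSpace E]

@[fun_prop]
theorem measurable_weightedEnorm [OpensMeasurableSpace E] (D s : ℝ) {F : E × ℤ → ℂ}
    (hF : Measurable F) : Measurable (weightedEnorm D s F) := by
  unfold weightedEnorm
  fun_prop

@[fun_prop]
theorem measurable_bracketDecay [OpensMeasurableSpace E] (σ : ℝ) :
    Measurable (bracketDecay (E := E) σ) := by
  unfold bracketDecay
  fun_prop

/-- The squared norm `‖F‖_s²` of the analytic space `Y_s` of order `D`, for `ξ` ranging over a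
normed space with measure `ν`. It is an iterated integral and not one over `E × ℤ`, as in
`YNormSq`; the two may differ when `F` is not measurable. -/
def analyticNormSq (ν : Measure E) (D s : ℝ) (F : E × ℤ → ℂ) : ℝ≥0∞ :=
  ∫⁻ ξ, ∑' l : ℤ, weightedEnorm D s F (ξ, l) ^ 2 ∂ν

/-- The bilinear Fourier multiplier with kernel `c (λ - μ) μ`: the convolution on `E × ℤ` of `u`
and `v`, in which the product of the modes `λ - μ` of `u` and `μ` of `v` is weighted by `c`. -/
def bilinearMultiplier (ν : Measure E) (c : ℤ → ℤ → ℂ) (u v : E × ℤ → ℂ) (p : E × ℤ) : ℂ :=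
  ∫ η, ∑' μ : ℤ, c (p.2 - μ) μ * u (p.1 - η, p.2 - μ) * v (η, μ) ∂ν

theorem analyticNormSq_eq_lintegral_prod [OpensMeasurableSpace E] (ν : Measure E) (D s : ℝ)
    {F : E × ℤ → ℂ} (hF : Measurable F) :
    analyticNormSq ν D s F = ∫⁻ p, weightedEnorm D s F p ^ 2 ∂(ν.prod Measure.count) :=
  (lintegral_prod_count ν ((measurable_weightedEnorm D s hF).pow_const 2)).symm

theorem YNormSq_eq_analyticNormSq (d D : ℕ) (s : ℝ)
    (F : EuclideanSpace ℝ (Fin (d - 1)) × ℤ → ℂ) :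
    YNormSq d D s F = analyticNormSq volume D s F := by
  refine lintegral_congr fun ξ => tsum_congr fun l => ?_
  have hfreq : freqNorm (ξ, l) ^ 2 = ‖ξ‖ ^ 2 + (l : ℝ) ^ 2 := Real.sq_sqrt (by positivity)
  rw [weightedEnorm, ← ofReal_norm, ← ENNReal.ofReal_mul (analyticWeight_nonneg _ _ _),
    ← ENNReal.ofReal_pow (mul_nonneg (analyticWeight_nonneg _ _ _) (norm_nonneg _)), mul_pow,
    analyticWeight_natCast_sq, hfreq, ← add_assoc]
  rfl

variable [BorelSpace E] (ν : Measure E)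
  {D s m K : ℝ} {c : ℤ → ℤ → ℂ} {u v : E × ℤ → ℂ}

theorem weightedEnorm_bilinearMultiplier_le (hD : 0 ≤ D) (hs : 0 ≤ s) (hm : 0 ≤ m) (hK : 0 ≤ K)
    (hc : ∀ k l, ‖c k l‖ ≤ K * min |(k : ℝ)| |(l : ℝ)| ^ m) (hu : Measurable u)
    (hv : Measurable v) (p : E × ℤ) :
    weightedEnorm D s (bilinearMultiplier ν c u v) p ≤
      ENNReal.ofReal (K * 2 ^ D) * ∫⁻ q, weightedEnorm D s u (p - q) * weightedEnorm D s v q *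
        (bracketDecay (D - m) q + bracketDecay (D - m) (p - q)) ∂(ν.prod Measure.count) := by
  rw [lintegral_prod_count ν (by fun_prop), ← lintegral_const_mul' _ _ ENNReal.ofReal_ne_top]
  calc weightedEnorm D s (bilinearMultiplier ν c u v) p
      ≤ ENNReal.ofReal (analyticWeight D s (freqNorm p)) *
          ∫⁻ η, ∑' μ : ℤ, ‖c (p.2 - μ) μ * u (p - (η, μ)) * v (η, μ)‖ₑ ∂ν :=
        mul_le_mul_right ((enorm_integral_le_lintegral_enorm _).trans
          (lintegral_mono fun η => enorm_tsum_le_tsum_enorm)) _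
    _ = ∫⁻ η, ∑' μ : ℤ, ENNReal.ofReal (analyticWeight D s (freqNorm p)) *
          ‖c (p.2 - μ) μ * u (p - (η, μ)) * v (η, μ)‖ₑ ∂ν := by
        simp only [← lintegral_const_mul' _ _ ENNReal.ofReal_ne_top, ENNReal.tsum_mul_left]
    _ ≤ _ := by
        refine lintegral_mono fun η => ?_
        rw [← ENNReal.tsum_mul_left]
        exact ENNReal.tsum_le_tsum fun μ =>
          ofReal_analyticWeight_mul_enorm_le hD hs hm hK u v p (η, μ) (hc (p.2 - μ) μ)

theorem analyticNormSq_bilinearMultiplier_le [SecondCountableTopology E] [SFinite ν]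
    [ν.IsAddRightInvariant] (hD : 0 ≤ D) (hs : 0 ≤ s) (hm : 0 ≤ m) (hK : 0 ≤ K)
    (hc : ∀ k l, ‖c k l‖ ≤ K * min |(k : ℝ)| |(l : ℝ)| ^ m) (hu : Measurable u)
    (hv : Measurable v) :
    analyticNormSq ν D s (bilinearMultiplier ν c u v) ≤
      ENNReal.ofReal (K * 2 ^ D) ^ 2 *
        (4 * ∫⁻ q : E × ℤ, bracketDecay (D - m) q ^ 2 ∂(ν.prod Measure.count)) *
        (analyticNormSq ν D s u * analyticNormSq ν D s v) := by
  set A := ENNReal.ofReal (K * 2 ^ D)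
  set I : E × ℤ → ℝ≥0∞ := fun p =>
    ∫⁻ q, weightedEnorm D s u (p - q) * weightedEnorm D s v q *
      (bracketDecay (D - m) q + bracketDecay (D - m) (p - q)) ∂(ν.prod Measure.count)
  have hI : Measurable I := Measurable.lintegral_prod_right' (f := fun z : (E × ℤ) × (E × ℤ) =>
    weightedEnorm D s u (z.1 - z.2) * weightedEnorm D s v z.2 *
      (bracketDecay (D - m) z.2 + bracketDecay (D - m) (z.1 - z.2))) (by fun_prop)
  calc analyticNormSq ν D s (bilinearMultiplier ν c u v)
      ≤ ∫⁻ ξ, ∑' l : ℤ, (A * I (ξ, l)) ^ 2 ∂ν :=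
        lintegral_mono fun ξ => ENNReal.tsum_le_tsum fun l => pow_le_pow_left'
          (weightedEnorm_bilinearMultiplier_le ν hD hs hm hK hc hu hv (ξ, l)) 2
    _ = A ^ 2 * ∫⁻ p, I p ^ 2 ∂(ν.prod Measure.count) := by
        rw [← lintegral_prod_count ν ((hI.const_mul A).pow_const 2),
          ← lintegral_const_mul _ (hI.pow_const 2)]
        simp only [mul_pow]
    _ ≤ _ := by
        rw [analyticNormSq_eq_lintegral_prod ν D s hu, analyticNormSq_eq_lintegral_prod ν D s hv,
          mul_assoc]
        gcongr
        exact lintegral_weighted_convolution_sq_le _ (by fun_prop) (by fun_prop) (by fun_prop)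
          (bracketDecay_neg _)

theorem lintegral_bracketDecay_sq_lt_top [NormedSpace ℝ E] [FiniteDimensional ℝ E]
    [ν.IsAddHaarMeasure] {σ : ℝ} (hσ : (Module.finrank ℝ E : ℝ) + 1 < 2 * σ) :
    ∫⁻ q : E × ℤ, bracketDecay σ q ^ 2 ∂(ν.prod Measure.count) < ⊤ := by
  have hsq : ∀ q : E × ℤ, bracketDecay σ q ^ 2 =
      ENNReal.ofReal (japaneseBracket (freqNorm q) ^ (-(2 * σ))) := fun q => by
    have hpos := japaneseBracket_pos (freqNorm q)
    rw [bracketDecay, ← ENNReal.ofReal_pow (Real.rpow_nonneg hpos.le _),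
      ← Real.rpow_mul_natCast hpos.le, Nat.cast_two, neg_mul, mul_comm σ]
  simpa only [hsq] using lintegral_japaneseBracket_freqNorm_rpow_neg_lt_top ν hσ

end BilinearOperator

section SmallDivisor

/-- The kernel `kl / (kδ¹ + lδ³)` of the operator `B`, with `k = λ - μ` and `l = μ`. It vanishes for
`k = 0` or `l = 0` (also for `k = l = 0`, as `0 / 0 = 0`), so the terms that the paper excludes from
the sum over `μ` contribute nothing. -/
def smallDivisorKernel (δ1 δ3 : ℝ) (k l : ℤ) : ℂ :=
  ((l * k : ℤ) : ℂ) / (((k : ℝ) * δ1 + (l : ℝ) * δ3 : ℝ) : ℂ)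

theorem norm_smallDivisorKernel (δ1 δ3 : ℝ) (k l : ℤ) :
    ‖smallDivisorKernel δ1 δ3 k l‖ = |(k : ℝ) * l| / |k * δ1 + l * δ3| := by
  rw [smallDivisorKernel, norm_div, Complex.norm_real, Complex.norm_intCast, Real.norm_eq_abs,
    Int.cast_mul, mul_comm (l : ℝ)]

theorem smallDivisorKernel_zero_left (δ1 δ3 : ℝ) (l : ℤ) : smallDivisorKernel δ1 δ3 0 l = 0 := by
  simp [smallDivisorKernel]

theorem smallDivisorKernel_zero_right (δ1 δ3 : ℝ) (k : ℤ) : smallDivisorKernel δ1 δ3 k 0 = 0 := by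
  simp [smallDivisorKernel]

theorem bilinearMultiplier_smallDivisorKernel {E : Type*} [NormedAddCommGroup E]
    [MeasurableSpace E] (ν : Measure E) (δ1 δ3 : ℝ) (u v : E × ℤ → ℂ) :
    bilinearMultiplier ν (smallDivisorKernel δ1 δ3) u v = fun p => ∫ η, ∑' μ : ℤ,
      if μ = 0 ∨ μ = p.2 then 0 else
        (((μ * (p.2 - μ) : ℤ) : ℂ) / ((((p.2 - μ : ℤ) : ℝ) * δ1 + (μ : ℝ) * δ3 : ℝ) : ℂ)) *
          u (p.1 - η, p.2 - μ) * v (η, μ) ∂ν := by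
  funext p
  refine integral_congr_ae (.of_forall fun η => tsum_congr fun μ => ?_)
  split_ifs with hμ
  · rcases hμ with rfl | rfl
    · rw [smallDivisorKernel_zero_right, zero_mul, zero_mul]
    · rw [sub_self, smallDivisorKernel_zero_left, zero_mul, zero_mul]
  · rfl

theorem abs_mul_div_abs_add_le {m₀ A B C₀ x y : ℝ} (hm₀ : 0 ≤ m₀) (hB : B ≠ 0)
    (hx : 1 ≤ |x|) (hdiv : 1 ≤ C₀ * |x| ^ m₀ * |x * A + y * B|) :
    |x * y| / |x * A + y * B| ≤ (1 + |A| * C₀) / |B| * |x| ^ (m₀ + 2) := by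
  have hB_pos : 0 < |B| := abs_pos.2 hB
  have hx_pos : 0 < |x| := one_pos.trans_le hx
  have hΔ_pos : 0 < |x * A + y * B| := by
    refine (abs_nonneg _).lt_of_ne fun hΔ => ?_
    rw [← hΔ, mul_zero] at hdiv
    exact absurd hdiv (not_le.2 one_pos)
  have hone : 1 ≤ |x| ^ (m₀ + 1) := Real.one_le_rpow hx (by linarith)
  have hpow : |x| ^ (m₀ + 1) = |x| ^ m₀ * |x| := by rw [Real.rpow_add hx_pos, Real.rpow_one]
  have hpow' : |x| ^ (m₀ + 2) = |x| * |x| ^ (m₀ + 1) := by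
    rw [← Real.rpow_one_add' hx_pos.le (by linarith)]
    ring_nf
  have hy : |y| * |B| ≤ (1 + |A| * C₀) * |x| ^ (m₀ + 1) * |x * A + y * B| :=
    calc |y| * |B| = |x * A + y * B - x * A| := by rw [add_sub_cancel_left, abs_mul]
      _ ≤ |x * A + y * B| + |x| * |A| := by
          rw [← abs_mul]
          exact abs_sub _ _
      _ = 1 * |x * A + y * B| + |x| * |A| * 1 := by rw [one_mul, mul_one]
      _ ≤ |x| ^ (m₀ + 1) * |x * A + y * B| + |x| * |A| * (C₀ * |x| ^ m₀ * |x * A + y * B|) := by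
          gcongr
      _ = (1 + |A| * C₀) * |x| ^ (m₀ + 1) * |x * A + y * B| := by
          rw [hpow]
          ring
  rw [div_le_iff₀ hΔ_pos]
  calc |x * y| = |x| / |B| * (|y| * |B|) := by
        rw [abs_mul]
        field_simp
    _ ≤ |x| / |B| * ((1 + |A| * C₀) * |x| ^ (m₀ + 1) * |x * A + y * B|) := by gcongr
    _ = (1 + |A| * C₀) / |B| * |x| ^ (m₀ + 2) * |x * A + y * B| := by
        rw [hpow']
        ring

theorem exists_norm_smallDivisorKernel_le {m₀ δ1 δ3 C₀ : ℝ} (hm₀ : 0 ≤ m₀) (hδ1 : δ1 ≠ 0)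
    (hδ3 : δ3 ≠ 0) (hC₀ : 0 ≤ C₀)
    (hdiv : ∀ k l : ℤ, k ≠ 0 → l ≠ 0 →
      1 ≤ C₀ * min (|(k : ℝ)| ^ m₀) (|(l : ℝ)| ^ m₀) * |(k : ℝ) * δ1 + (l : ℝ) * δ3|) :
    ∃ K ≥ 0, ∀ k l : ℤ,
      ‖smallDivisorKernel δ1 δ3 k l‖ ≤ K * min |(k : ℝ)| |(l : ℝ)| ^ (m₀ + 2) := by
  set K₁ := (1 + |δ1| * C₀) / |δ3|
  set K₃ := (1 + |δ3| * C₀) / |δ1|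
  have hK₁ : 0 ≤ K₁ := by positivity
  refine ⟨max K₁ K₃, hK₁.trans (le_max_left _ _), fun k l => ?_⟩
  have hone : ∀ j : ℤ, j ≠ 0 → 1 ≤ |(j : ℝ)| := fun j hj => by exact_mod_cast Int.one_le_abs hj
  rcases eq_or_ne k 0 with rfl | hk
  · rw [smallDivisorKernel_zero_left, norm_zero]
    positivity
  rcases eq_or_ne l 0 with rfl | hl
  · rw [smallDivisorKernel_zero_right, norm_zero]
    positivity
  rw [norm_smallDivisorKernel]
  rcases min_choice |(k : ℝ)| |(l : ℝ)| with hmin | hmin <;> rw [hmin]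
  · have hk_div : 1 ≤ C₀ * |(k : ℝ)| ^ m₀ * |(k : ℝ) * δ1 + l * δ3| :=
      (hdiv k l hk hl).trans (by gcongr; exact min_le_left _ _)
    refine (abs_mul_div_abs_add_le hm₀ hδ3 (hone k hk) hk_div).trans ?_
    gcongr
    exact le_max_left _ _
  · have hl_div : 1 ≤ C₀ * |(l : ℝ)| ^ m₀ * |(l : ℝ) * δ3 + k * δ1| := by
      rw [add_comm]
      exact (hdiv k l hk hl).trans (by gcongr; exact min_le_right _ _)
    rw [mul_comm (k : ℝ) l, add_comm]
    refine (abs_mul_div_abs_add_le hm₀ hδ1 (hone l hl) hl_div).trans ?_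
    gcongr
    exact le_max_right _ _

end SmallDivisor

theorem stmt1_general {E : Type*} [NormedAddCommGroup E] [NormedSpace ℝ E] [FiniteDimensional ℝ E]
    [MeasurableSpace E] [BorelSpace E] (ν : Measure E) [ν.IsAddHaarMeasure] {m₀ D δ1 δ3 C₀ : ℝ}
    (hm₀ : 0 ≤ m₀) (hD : m₀ + 2 + ((Module.finrank ℝ E : ℝ) + 1) / 2 < D)
    (hδ1 : δ1 ≠ 0) (hδ3 : δ3 ≠ 0) (hC₀ : 0 ≤ C₀)
    (hdiv : ∀ l₁ l₃ : ℤ, l₁ ≠ 0 → l₃ ≠ 0 →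
      1 ≤ C₀ * min (|(l₁ : ℝ)| ^ m₀) (|(l₃ : ℝ)| ^ m₀) * |(l₁ : ℝ) * δ1 + (l₃ : ℝ) * δ3|) :
    ∃ C > 0, ∀ s ≥ 0, ∀ u v : E × ℤ → ℂ, Measurable u → Measurable v →
      analyticNormSq ν D s (bilinearMultiplier ν (smallDivisorKernel δ1 δ3) u v) ≤
        ENNReal.ofReal (C ^ 2) * analyticNormSq ν D s u * analyticNormSq ν D s v := by
  obtain ⟨K, hK, hkernel⟩ := exists_norm_smallDivisorKernel_le hm₀ hδ1 hδ3 hC₀ hdiv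
  have hD₀ : 0 ≤ D := by linarith [Nat.cast_nonneg (α := ℝ) (Module.finrank ℝ E)]
  have hdecay := lintegral_bracketDecay_sq_lt_top ν (σ := D - (m₀ + 2)) (by linarith)
  set X := ENNReal.ofReal (K * 2 ^ D) ^ 2 *
    (4 * ∫⁻ q : E × ℤ, bracketDecay (D - (m₀ + 2)) q ^ 2 ∂(ν.prod Measure.count))
  have hX : X ≠ ⊤ := by finiteness
  refine ⟨X.toReal + 1, by positivity, fun s hs u v hu hv => ?_⟩
  have hXC : X ≤ ENNReal.ofReal ((X.toReal + 1) ^ 2) := by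
    refine (ENNReal.le_ofReal_iff_toReal_le hX (by positivity)).2 ?_
    nlinarith [ENNReal.toReal_nonneg (a := X)]
  rw [mul_assoc]
  exact (analyticNormSq_bilinearMultiplier_le ν hD₀ hs (by linarith) hK hkernel hu hv).trans
    (mul_le_mul_left hXC _)

/-- **Proposition 3.6** (Fourier side): the bilinear operator with the small-divisor
kernel `μ(λ−μ)/((λ−μ)δ¹ + μδ³)` is bounded on `Y_s`, uniformly in `s ∈ [0,1]`:
`‖B[u,v]‖_s ≤ C ‖u‖_s ‖v‖_s`, stated here with squared norms. -/
theorem stmt1 (d dstar : ℕ) (hd : 2 ≤ d) (m₀ : ℝ) (hm₀ : 0 ≤ m₀)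
    (hdstar : m₀ + 2 + ((d : ℝ) + 1) / 2 < (dstar : ℝ))
    (δ1 δ3 : ℝ) (hδ1 : δ1 ≠ 0) (hδ3 : δ3 ≠ 0)
    (hne : ∀ l₁ l₃ : ℤ, l₁ ≠ 0 → l₃ ≠ 0 → (l₁ : ℝ) * δ1 + (l₃ : ℝ) * δ3 ≠ 0)
    (C₀ : ℝ) (hC₀ : 0 < C₀)
    (hsmall : ∀ l₁ l₃ : ℤ, l₁ ≠ 0 → l₃ ≠ 0 →
      1 / |(l₁ : ℝ) * δ1 + (l₃ : ℝ) * δ3| ≤ C₀ * min (|(l₁ : ℝ)| ^ m₀) (|(l₃ : ℝ)| ^ m₀)) :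
    ∃ C > 0, ∀ s ∈ Set.Icc (0 : ℝ) 1,
      ∀ u v : EuclideanSpace ℝ (Fin (d - 1)) × ℤ → ℂ,
        Measurable u → Measurable v →
        YNormSq d dstar s u ≠ ⊤ → YNormSq d dstar s v ≠ ⊤ →
        YNormSq d dstar s (fun p => ∫ η, ∑' μ : ℤ,
            if μ = 0 ∨ μ = p.2 then 0 else
              (((μ * (p.2 - μ) : ℤ) : ℂ) /
                  ((((p.2 - μ : ℤ) : ℝ) * δ1 + (μ : ℝ) * δ3 : ℝ) : ℂ)) *
                u (p.1 - η, p.2 - μ) * v (η, μ))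
          ≤ ENNReal.ofReal (C ^ 2) * YNormSq d dstar s u * YNormSq d dstar s v := by
  have hdim :
      m₀ + 2 + ((Module.finrank ℝ (EuclideanSpace ℝ (Fin (d - 1))) : ℝ) + 1) / 2 < dstar := by
    rw [finrank_euclideanSpace_fin, Nat.cast_pred (by omega)]
    linarith
  obtain ⟨C, hC, hbound⟩ := stmt1_general volume hm₀ hdim hδ1 hδ3 hC₀.le fun l₁ l₃ h₁ h₃ =>
    (div_le_iff₀ (abs_pos.2 (hne l₁ l₃ h₁ h₃))).1 (hsmall l₁ l₃ h₁ h₃)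
  refine ⟨C, hC, fun s hs u v hu hv _ _ => ?_⟩
  simpa only [YNormSq_eq_analyticNormSq, bilinearMultiplier_smallDivisorKernel] using
    hbound s hs.1 u v hu hv

end
end

section
/- Let δ₁, δ₃ be nonzero real numbers, m̃₀ ≥ 0 a real number and C₀ > 0, and assume that λ₁δ₁ + λ₃δ₃ ≠ 0 for all nonzero integers λ₁, λ₃ and that 1/|λ₁δ₁ + λ₃δ₃| ≤ C₀ (λ₁² + λ₃²)^{m̃₀/2} for all nonzero integers λ₁, λ₃. Then there exists a constant C > 0 such that for all nonzero integers λ₁, λ₃: 1/|λ₁δ₁ + λ₃δ₃| ≤ C min(|λ₁|^{m̃₀}, |λ₃|^{m̃₀}). -/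
/-!
Let `‖a‖` and `‖b‖` be at least `1`. If `a • x + b • y` has norm at least `1`, the reciprocal of
this norm is at most `1`, hence at most `min ‖a‖ ‖b‖ ^ m`. Otherwise `a • x` and `b • y` nearly
cancel, which forces `‖a‖` and `‖b‖` to be comparable, and then `‖a‖ ^ 2 + ‖b‖ ^ 2` is bounded by a
multiple of `min ‖a‖ ‖b‖ ^ 2`.
-/

section Comparability

variable {𝕜 E : Type*} [SeminormedRing 𝕜] [NormedAddCommGroup E] [Module 𝕜 E] [NormSMulClass 𝕜 E]

theorem norm_le_mul_norm_of_norm_smul_add_smul_le_one {a b : 𝕜} {x y : E} (ha : 1 ≤ ‖a‖)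
    (hy : y ≠ 0) (h : ‖a • x + b • y‖ ≤ 1) : ‖b‖ ≤ (1 + ‖x‖) / ‖y‖ * ‖a‖ := by
  rw [div_mul_eq_mul_div, le_div_iff₀ (norm_pos_iff.mpr hy)]
  calc ‖b‖ * ‖y‖ = ‖(a • x + b • y) - a • x‖ := by rw [add_sub_cancel_left, norm_smul]
    _ ≤ ‖a • x + b • y‖ + ‖a • x‖ := norm_sub_le _ _
    _ ≤ ‖a‖ + ‖a‖ * ‖x‖ := add_le_add (h.trans ha) (norm_smul a x).le
    _ = (1 + ‖x‖) * ‖a‖ := by ring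

theorem exists_norm_add_norm_le_mul_min {x y : E} (hx : x ≠ 0) (hy : y ≠ 0) :
    ∃ K > 0, ∀ a b : 𝕜, 1 ≤ ‖a‖ → 1 ≤ ‖b‖ → ‖a • x + b • y‖ ≤ 1 →
      ‖a‖ + ‖b‖ ≤ K * min ‖a‖ ‖b‖ := by
  set K₁ := (1 + ‖x‖) / ‖y‖
  set K₂ := (1 + ‖y‖) / ‖x‖
  refine ⟨1 + max K₁ K₂, by positivity, fun a b ha hb h ↦ ?_⟩
  have hba : ‖b‖ ≤ max K₁ K₂ * ‖a‖ :=
    (norm_le_mul_norm_of_norm_smul_add_smul_le_one ha hy h).trans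
      (by gcongr; exact le_max_left K₁ K₂)
  have hab : ‖a‖ ≤ max K₁ K₂ * ‖b‖ :=
    (norm_le_mul_norm_of_norm_smul_add_smul_le_one hb hx (by rwa [add_comm])).trans
      (by gcongr; exact le_max_right K₁ K₂)
  rcases min_cases ‖a‖ ‖b‖ with ⟨hmin, -⟩ | ⟨hmin, -⟩ <;> rw [hmin] <;> linarith

end Comparability

theorem rpow_half_sq_add_sq_le_rpow_add {u v m : ℝ} (hu : 0 ≤ u) (hv : 0 ≤ v) (hm : 0 ≤ m) :
    (u ^ 2 + v ^ 2) ^ (m / 2) ≤ (u + v) ^ m := by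
  calc (u ^ 2 + v ^ 2) ^ (m / 2) ≤ ((u + v) ^ 2) ^ (m / 2) := by
        gcongr
        exact pow_add_pow_le hu hv two_ne_zero
    _ = (u + v) ^ m := by
        rw [← Real.rpow_natCast_mul (add_nonneg hu hv), Nat.cast_ofNat,
          mul_div_cancel₀ m two_ne_zero]

theorem stmt2_general {𝕜 E : Type*} [SeminormedRing 𝕜] [NormedAddCommGroup E] [Module 𝕜 E]
    [NormSMulClass 𝕜 E] {x y : E} (hx : x ≠ 0) (hy : y ≠ 0) {m C₀ : ℝ} (hm : 0 ≤ m)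
    (hC₀ : 0 ≤ C₀) :
    ∃ C > 0, ∀ a b : 𝕜, 1 ≤ ‖a‖ → 1 ≤ ‖b‖ → a • x + b • y ≠ 0 →
      1 / ‖a • x + b • y‖ ≤ C₀ * (‖a‖ ^ 2 + ‖b‖ ^ 2) ^ (m / 2) →
      1 / ‖a • x + b • y‖ ≤ C * min ‖a‖ ‖b‖ ^ m := by
  obtain ⟨K, hK, hcomparable⟩ := exists_norm_add_norm_le_mul_min (𝕜 := 𝕜) hx hy
  refine ⟨max 1 (C₀ * K ^ m), by positivity, fun a b ha hb hne hub ↦ ?_⟩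
  have hmin : 1 ≤ min ‖a‖ ‖b‖ := le_min ha hb
  rcases le_total 1 ‖a • x + b • y‖ with hlarge | hsmall
  · calc 1 / ‖a • x + b • y‖ ≤ 1 := (div_le_one (norm_pos_iff.mpr hne)).mpr hlarge
      _ ≤ max 1 (C₀ * K ^ m) * min ‖a‖ ‖b‖ ^ m :=
        one_le_mul_of_one_le_of_one_le (le_max_left _ _) (Real.one_le_rpow hmin hm)
  · calc 1 / ‖a • x + b • y‖ ≤ C₀ * (‖a‖ ^ 2 + ‖b‖ ^ 2) ^ (m / 2) := hub
      _ ≤ C₀ * (‖a‖ + ‖b‖) ^ m := by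
        gcongr
        exact rpow_half_sq_add_sq_le_rpow_add (norm_nonneg a) (norm_nonneg b) hm
      _ ≤ C₀ * (K * min ‖a‖ ‖b‖) ^ m := by
        gcongr
        exact hcomparable a b ha hb hsmall
      _ = C₀ * K ^ m * min ‖a‖ ‖b‖ ^ m := by
        rw [Real.mul_rpow hK.le (zero_le_one.trans hmin), mul_assoc]
      _ ≤ max 1 (C₀ * K ^ m) * min ‖a‖ ‖b‖ ^ m := by
        gcongr
        exact le_max_right _ _

/-- **Lemma 3.7** (reformulation of the small-divisors assumption): a polynomial upper
bound `1/|λ₁δ₁ + λ₃δ₃| ≤ C₀ (λ₁² + λ₃²)^{m̃₀/2}` can be upgraded to a bound by the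
minimum, `C min(|λ₁|, |λ₃|)^{m̃₀}`. -/
theorem stmt2 (δ₁ δ₃ : ℝ) (hδ₁ : δ₁ ≠ 0) (hδ₃ : δ₃ ≠ 0)
    (m₀ : ℝ) (hm₀ : 0 ≤ m₀) (C₀ : ℝ) (hC₀ : 0 < C₀)
    (hne : ∀ l₁ l₃ : ℤ, l₁ ≠ 0 → l₃ ≠ 0 → (l₁ : ℝ) * δ₁ + (l₃ : ℝ) * δ₃ ≠ 0)
    (hub : ∀ l₁ l₃ : ℤ, l₁ ≠ 0 → l₃ ≠ 0 →
      1 / |(l₁ : ℝ) * δ₁ + (l₃ : ℝ) * δ₃| ≤ C₀ * (((l₁ : ℝ) ^ 2 + (l₃ : ℝ) ^ 2) ^ (m₀ / 2))) :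
    ∃ C > 0, ∀ l₁ l₃ : ℤ, l₁ ≠ 0 → l₃ ≠ 0 →
      1 / |(l₁ : ℝ) * δ₁ + (l₃ : ℝ) * δ₃| ≤ C * (min |(l₁ : ℝ)| |(l₃ : ℝ)|) ^ m₀ := by
  obtain ⟨C, hC, hbound⟩ := stmt2_general (𝕜 := ℝ) hδ₁ hδ₃ hm₀ hC₀.le
  have one_le_norm {l : ℤ} (hl : l ≠ 0) : 1 ≤ ‖(l : ℝ)‖ := by
    rw [Real.norm_eq_abs]
    exact_mod_cast Int.one_le_abs hl
  exact ⟨C, hC, fun l₁ l₃ h₁ h₃ ↦ hbound l₁ l₃ (one_le_norm h₁) (one_le_norm h₃)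
    (hne l₁ l₃ h₁ h₃) (by simpa using hub l₁ l₃ h₁ h₃)⟩
end

section
/- Let δ₁, δ₃ be nonzero real numbers, m̃₀ ≥ 0 a real number and C₀ > 0, and assume that λ₁δ₁ + λ₃δ₃ ≠ 0 for all nonzero integers λ₁, λ₃ and that 1/|λ₁δ₁ + λ₃δ₃| ≤ C₀ min(|λ₁|^{m̃₀}, |λ₃|^{m̃₀}) for all nonzero integers λ₁, λ₃. Then there exists a constant C > 0 such that for all integers λ, μ with μ ≠ 0 and μ ≠ λ: |μ(λ−μ)/((λ−μ)δ₁ + μδ₃)| ≤ C min(|μ|, |λ−μ|)^{m̃₀+2}. -/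
/-!
Write `D = ν a + μ b`. Eliminating `ν` from the numerator gives `μ ν / D = (μ - b μ² / D) / a`, in
which only `μ` and the small divisor `D` occur, so a bound for `1 / ‖D‖` by a power of `‖μ‖` bounds
the kernel by a power of `‖μ‖` alone. Exchanging the roles of `μ` and `ν` gives the same bound in
terms of `‖ν‖`, and the smaller of the two frequencies is then the one to keep.
-/

section SmallDivisorKernel

variable {K : Type*} [NormedField K] {a b μ ν : K} {m C₀ : ℝ}

theorem norm_mul_div_add_le (ha : a ≠ 0) (hD : ν * a + μ * b ≠ 0) :
    ‖μ * ν / (ν * a + μ * b)‖ ≤ (‖μ‖ + ‖b‖ * ‖μ‖ ^ 2 * (1 / ‖ν * a + μ * b‖)) / ‖a‖ := by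
  have eliminate_ν : μ * ν / (ν * a + μ * b) = (μ - b * μ ^ 2 * (1 / (ν * a + μ * b))) / a := by
    field_simp
    ring
  rw [eliminate_ν, norm_div]
  gcongr
  exact (norm_sub_le _ _).trans_eq (by simp only [norm_mul, norm_pow, norm_div, norm_one])

theorem norm_mul_div_add_le_rpow (ha : a ≠ 0) (hm : -1 ≤ m) (hμ : 1 ≤ ‖μ‖)
    (hD : ν * a + μ * b ≠ 0) (hub : 1 / ‖ν * a + μ * b‖ ≤ C₀ * ‖μ‖ ^ m) :
    ‖μ * ν / (ν * a + μ * b)‖ ≤ (1 + C₀ * ‖b‖) / ‖a‖ * ‖μ‖ ^ (m + 2) := by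
  have le_rpow : ‖μ‖ ≤ ‖μ‖ ^ (m + 2) := Real.self_le_rpow_of_one_le hμ (by linarith)
  have rpow_split : ‖μ‖ ^ (m + 2) = ‖μ‖ ^ m * ‖μ‖ ^ 2 := by
    exact_mod_cast Real.rpow_add_natCast (by positivity : ‖μ‖ ≠ 0) m 2
  calc ‖μ * ν / (ν * a + μ * b)‖
      ≤ (‖μ‖ + ‖b‖ * ‖μ‖ ^ 2 * (1 / ‖ν * a + μ * b‖)) / ‖a‖ :=
        norm_mul_div_add_le ha hD
    _ ≤ (‖μ‖ ^ (m + 2) + ‖b‖ * ‖μ‖ ^ 2 * (C₀ * ‖μ‖ ^ m)) / ‖a‖ := by gcongr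
    _ = (1 + C₀ * ‖b‖) / ‖a‖ * ‖μ‖ ^ (m + 2) := by rw [rpow_split]; ring

theorem stmt3_general (ha : a ≠ 0) (hb : b ≠ 0) (hm : -1 ≤ m) (hC₀ : 0 ≤ C₀)
    (hμ : 1 ≤ ‖μ‖) (hν : 1 ≤ ‖ν‖) (hD : ν * a + μ * b ≠ 0)
    (hub : 1 / ‖ν * a + μ * b‖ ≤ C₀ * min (‖ν‖ ^ m) (‖μ‖ ^ m)) :
    ‖μ * ν / (ν * a + μ * b)‖ ≤
      max ((1 + C₀ * ‖b‖) / ‖a‖) ((1 + C₀ * ‖a‖) / ‖b‖) * min ‖μ‖ ‖ν‖ ^ (m + 2) := by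
  have bound_μ : ‖μ * ν / (ν * a + μ * b)‖ ≤ (1 + C₀ * ‖b‖) / ‖a‖ * ‖μ‖ ^ (m + 2) :=
    norm_mul_div_add_le_rpow ha hm hμ hD
      (hub.trans (mul_le_mul_of_nonneg_left (min_le_right _ _) hC₀))
  have bound_ν : ‖μ * ν / (ν * a + μ * b)‖ ≤ (1 + C₀ * ‖a‖) / ‖b‖ * ‖ν‖ ^ (m + 2) := by
    rw [add_comm] at hD hub
    rw [mul_comm μ, add_comm]
    exact norm_mul_div_add_le_rpow hb hm hν hD
      (hub.trans (mul_le_mul_of_nonneg_left (min_le_left _ _) hC₀))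
  rcases min_choice ‖μ‖ ‖ν‖ with hmin | hmin <;> rw [hmin]
  · exact bound_μ.trans (by gcongr; exact le_max_left _ _)
  · exact bound_ν.trans (by gcongr; exact le_max_right _ _)

end SmallDivisorKernel

theorem one_le_norm_intCast {n : ℤ} (hn : n ≠ 0) : 1 ≤ ‖(n : ℝ)‖ := by
  rw [Real.norm_eq_abs]
  exact_mod_cast Int.one_le_abs hn

/-- Key kernel estimate from the proof of **Proposition 3.6**: the kernel
`F(λ,μ) = μ(λ−μ)/((λ−μ)δ₁ + μδ₃)` is bounded by `C min(|μ|, |λ−μ|)^{m̃₀+2}`. -/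
theorem stmt3 (δ₁ δ₃ : ℝ) (hδ₁ : δ₁ ≠ 0) (hδ₃ : δ₃ ≠ 0)
    (m₀ : ℝ) (hm₀ : 0 ≤ m₀) (C₀ : ℝ) (hC₀ : 0 < C₀)
    (hne : ∀ l₁ l₃ : ℤ, l₁ ≠ 0 → l₃ ≠ 0 → (l₁ : ℝ) * δ₁ + (l₃ : ℝ) * δ₃ ≠ 0)
    (hub : ∀ l₁ l₃ : ℤ, l₁ ≠ 0 → l₃ ≠ 0 →
      1 / |(l₁ : ℝ) * δ₁ + (l₃ : ℝ) * δ₃| ≤ C₀ * min (|(l₁ : ℝ)| ^ m₀) (|(l₃ : ℝ)| ^ m₀)) :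
    ∃ C > 0, ∀ l μ : ℤ, μ ≠ 0 → μ ≠ l →
      |(μ : ℝ) * ((l : ℝ) - (μ : ℝ)) / (((l : ℝ) - (μ : ℝ)) * δ₁ + (μ : ℝ) * δ₃)|
        ≤ C * (min |(μ : ℝ)| |(l : ℝ) - (μ : ℝ)|) ^ (m₀ + 2) := by
  refine ⟨max ((1 + C₀ * |δ₃|) / |δ₁|) ((1 + C₀ * |δ₁|) / |δ₃|), by positivity, fun l μ hμ hμl ↦ ?_⟩
  have hν : l - μ ≠ 0 := sub_ne_zero.mpr hμl.symm
  rw [← Int.cast_sub]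
  exact stmt3_general hδ₁ hδ₃ (by linarith) hC₀.le (one_le_norm_intCast hμ)
    (one_le_norm_intCast hν) (hne _ _ hν hμ) (hub _ _ hν hμ)
end

section
/- Let d be a positive integer. There exists a constant C > 0, depending only on d, such that for all reals 0 < r' < r ≤ 1, every M ≥ 0, every function a : ℕ^{d+1} → ℝ satisfying 0 ≤ a(α) ≤ M α! / (r^{|α|} (|α|^{2d+1} + 1)) for all multi-indices α ∈ ℕ^{d+1}, and every unit multi-index e ∈ ℕ^{d+1} (|e| = 1): a(α + e) ≤ (C M / (r − r')) · α! / ((r')^{|α|} (|α|^{2d+1} + 1)) for all α ∈ ℕ^{d+1}. -/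
open Finset

/-!
Raising a multi-index by a unit vector multiplies its factorial by at most `n + 1`, where `n` is its
order, and shrinking the radius from `r` to `r'` absorbs this loss: Bernoulli's inequality applied
to `r = r' + (r - r')` gives `(n + 1) r' ^ n (r - r') ≤ r ^ (n + 1)`. The weight `n ^ (2 d + 1) + 1`
enters only through its monotonicity, so `C = 1` works in every dimension.
-/

section

open scoped Nat

lemma succ_mul_pow_mul_sub_le_pow_succ {R : Type*} [CommRing R] [LinearOrder R]
    [IsStrictOrderedRing R] {x y : R} (hx : 0 ≤ x) (hxy : -x ≤ y) (n : ℕ) :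
    (n + 1) * x ^ n * (y - x) ≤ y ^ (n + 1) := by
  have bernoulli : x ^ (n + 1) + (n + 1) * x ^ n * (y - x) ≤ y ^ (n + 1) := by
    simpa using pow_add_mul_le_add_pow hx (b := y - x) (by linarith) (n + 1)
  linarith [pow_nonneg hx (n + 1)]

variable {ι : Type*} [Fintype ι]

lemma exists_eq_single_of_sum_eq_one [DecidableEq ι] {e : ι → ℕ} (he : ∑ i, e i = 1) :
    ∃ i, e = Pi.single i 1 := by
  obtain ⟨i, hi⟩ := (Finsupp.sum_eq_one_iff (Finsupp.equivFunOnFinite.symm e)).1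
    (by simpa [Finsupp.sum_fintype] using he)
  exact ⟨i, by simpa using congrArg Finsupp.equivFunOnFinite hi⟩

lemma prod_factorial_add_single [DecidableEq ι] (α : ι → ℕ) (i : ι) :
    ∏ j, ((α + Pi.single i 1 : ι → ℕ) j)! = (α i + 1) * ∏ j, (α j)! := by
  have off_i :
      ∏ j ∈ univ.erase i, ((α + Pi.single i 1 : ι → ℕ) j)! = ∏ j ∈ univ.erase i, (α j)! :=
    prod_congr rfl fun j hj => by simp [ne_of_mem_erase hj]
  rw [← mul_prod_erase univ _ (mem_univ i), off_i, ← mul_prod_erase univ _ (mem_univ i),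
    Pi.add_apply, Pi.single_eq_same, Nat.factorial_succ, mul_assoc]

lemma prod_factorial_add_le {e : ι → ℕ} (he : ∑ i, e i = 1) (α : ι → ℕ) :
    ∏ i, ((α + e) i)! ≤ (∑ i, α i + 1) * ∏ i, (α i)! := by
  classical
  obtain ⟨i, rfl⟩ := exists_eq_single_of_sum_eq_one he
  rw [prod_factorial_add_single]
  gcongr
  exact single_le_sum (fun _ _ => Nat.zero_le _) (mem_univ i)

variable {𝕜 : Type*} [Field 𝕜] [LinearOrder 𝕜] [IsStrictOrderedRing 𝕜]

lemma prod_factorial_add_div_le {w : ℕ → 𝕜} (hw_pos : ∀ n, 0 < w n) (hw : Monotone w)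
    {r' r : 𝕜} (hr' : 0 < r') (hr : r' < r) {e : ι → ℕ} (he : ∑ i, e i = 1) (α : ι → ℕ) :
    (∏ i, (((α + e) i)! : 𝕜)) / (r ^ (∑ i, (α + e) i) * w (∑ i, (α + e) i)) ≤
      (∏ i, ((α i)! : 𝕜)) / ((r - r') * (r' ^ (∑ i, α i) * w (∑ i, α i))) := by
  have order_add : ∑ i, (α + e) i = ∑ i, α i + 1 := by simp [sum_add_distrib, he]
  have factorial_le : ∏ i, (((α + e) i)! : 𝕜) ≤ ((∑ i, α i : ℕ) + 1) * ∏ i, ((α i)! : 𝕜) :=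
    mod_cast prod_factorial_add_le he α
  rw [order_add]
  set n := ∑ i, α i
  have radius_le : (n + 1) * r' ^ n * (r - r') ≤ r ^ (n + 1) :=
    succ_mul_pow_mul_sub_le_pow_succ hr'.le (by linarith) n
  have hr_pos : 0 < r := hr'.trans hr
  have hw_n : 0 < w n := hw_pos n
  calc (∏ i, (((α + e) i)! : 𝕜)) / (r ^ (n + 1) * w (n + 1))
      ≤ ((n + 1) * ∏ i, ((α i)! : 𝕜)) / ((n + 1) * r' ^ n * (r - r') * w n) := by
        gcongr
        exact hw n.le_succ
    _ = (∏ i, ((α i)! : 𝕜)) / ((r - r') * (r' ^ n * w n)) := by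
        field_simp

theorem stmt8_general {w : ℕ → 𝕜} (hw_pos : ∀ n, 0 < w n) (hw : Monotone w)
    {r' r : 𝕜} (hr' : 0 < r') (hr : r' < r) {M : 𝕜} (hM : 0 ≤ M) {a : (ι → ℕ) → 𝕜}
    (ha : ∀ α, a α ≤ M * (∏ i, ((α i)! : 𝕜)) / (r ^ (∑ i, α i) * w (∑ i, α i)))
    {e : ι → ℕ} (he : ∑ i, e i = 1) (α : ι → ℕ) :
    a (α + e) ≤
      M / (r - r') * (∏ i, ((α i)! : 𝕜)) / (r' ^ (∑ i, α i) * w (∑ i, α i)) :=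
  calc a (α + e)
      ≤ M * ((∏ i, (((α + e) i)! : 𝕜)) / (r ^ (∑ i, (α + e) i) * w (∑ i, (α + e) i))) := by
        rw [← mul_div_assoc]
        exact ha (α + e)
    _ ≤ M * ((∏ i, ((α i)! : 𝕜)) / ((r - r') * (r' ^ (∑ i, α i) * w (∑ i, α i)))) :=
        mul_le_mul_of_nonneg_left (prod_factorial_add_div_le hw_pos hw hr' hr he α) hM
    _ = M / (r - r') * (∏ i, ((α i)! : 𝕜)) / (r' ^ (∑ i, α i) * w (∑ i, α i)) := by
        rw [div_mul_eq_mul_div, div_div, mul_div_assoc]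

end

/-- **Lemma 3.17** (coefficient level): if the derivative coefficients of an analytic
function satisfy `0 ≤ a(α) ≤ M α!/(r^{|α|}(|α|^{2d+1}+1))`, then for any unit multi-index
`e`, `a(α+e) ≤ (CM/(r−r')) α!/((r')^{|α|}(|α|^{2d+1}+1))`: first-order derivatives map
`X_r` into `X_{r'}` with norm at most `C/(r−r')`. -/
theorem stmt8 (d : ℕ) (hd : 0 < d) :
    ∃ C > 0, ∀ r' r : ℝ, 0 < r' → r' < r → r ≤ 1 →
      ∀ M : ℝ, 0 ≤ M → ∀ a : (Fin (d + 1) → ℕ) → ℝ,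
        (∀ α : Fin (d + 1) → ℕ, 0 ≤ a α ∧
          a α ≤ M * (∏ i, (Nat.factorial (α i) : ℝ)) /
            (r ^ (∑ i, α i) * (((∑ i, α i : ℕ) : ℝ) ^ (2 * d + 1) + 1))) →
        ∀ e : Fin (d + 1) → ℕ, (∑ i, e i) = 1 →
        ∀ α : Fin (d + 1) → ℕ,
          a (α + e) ≤ (C * M / (r - r')) * (∏ i, (Nat.factorial (α i) : ℝ)) /
            (r' ^ (∑ i, α i) * (((∑ i, α i : ℕ) : ℝ) ^ (2 * d + 1) + 1)) := by
  refine ⟨1, one_pos, fun r' r hr' hr _ M hM a ha e he α => ?_⟩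
  simpa only [one_mul] using stmt8_general (w := fun n : ℕ => (n : ℝ) ^ (2 * d + 1) + 1)
    (fun n => by positivity) (fun m n h => by beta_reduce; gcongr) hr' hr hM
    (fun β => (ha β).2) he α
end

section
/- Let d be a positive integer. There exists a constant C > 0, depending only on d, such that for every real 0 < r ≤ 1, all M_a, M_b ≥ 0, and all functions a, b : ℕ^{d+1} → ℝ satisfying 0 ≤ a(α) ≤ M_a α! / (r^{|α|} (|α|^{2d+1} + 1)) and 0 ≤ b(α) ≤ M_b α! / (r^{|α|} (|α|^{2d+1} + 1)) for all multi-indices α ∈ ℕ^{d+1}, one has for every α ∈ ℕ^{d+1}: Σ_{β ≤ α} binom(α, β) a(β) b(α − β) ≤ C M_a M_b α! / (r^{|α|} (|α|^{2d+1} + 1)), where binom(α,β) := ∏_i binom(α_i, β_i) and β ≤ α means β_i ≤ α_i for every i. In particular, the sum Σ_{β ≤ α} (|α|^{2d+1} + 1) / ((|β|^{2d+1} + 1)(|α − β|^{2d+1} + 1)) is bounded uniformly with respect to α ∈ ℕ^{d+1}. -/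
open Finset

/-!
The weight `w α = |α|^p + 1` satisfies `w (β + γ) ≤ K (w β + w γ)`, so that
`w α / (w β w (α - β)) ≤ K (1 / w β + 1 / w (α - β))` for `β ≤ α`. The reflection `β ↦ α - β`
preserves `{β ≤ α}`, hence the sum over `β ≤ α` is at most `2 K ∑' β, 1 / w β`. This series
converges for `p > card ι`: since `|α| + 1` dominates each `α i + 1`, the term `1 / w β` is at most
a constant times the product of the summable one-variable sequences
`(k + 1) ^ (-p / card ι)`. The factorials and powers of `r` in the Leibniz sum factor out exactly.
-/

section Convolution

variable {M : Type*} [AddCommMonoid M] [PartialOrder M] [CanonicallyOrderedAdd M] [Sub M]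
  [OrderedSub M] [AddLeftReflectLE M] [LocallyFiniteOrderBot M]

theorem sum_Iic_reflect {R : Type*} [AddCommMonoid R] (f : M → R) (a : M) :
    ∑ x ∈ Iic a, f (a - x) = ∑ x ∈ Iic a, f x :=
  sum_nbij' (a - ·) (a - ·) (fun _ _ ↦ mem_Iic.2 tsub_le_self) (fun _ _ ↦ mem_Iic.2 tsub_le_self)
    (fun _ hx ↦ tsub_tsub_cancel_of_le (mem_Iic.1 hx))
    (fun _ hx ↦ tsub_tsub_cancel_of_le (mem_Iic.1 hx)) (fun _ _ ↦ rfl)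

theorem sum_Iic_div_mul_le_tsum_inv {w : M → ℝ} {K : ℝ} (hw : ∀ x, 0 < w x)
    (hadd : ∀ x y, w (x + y) ≤ K * (w x + w y)) (hsum : Summable fun x ↦ (w x)⁻¹) (a : M) :
    ∑ x ∈ Iic a, w a / (w x * w (a - x)) ≤ 2 * K * ∑' x, (w x)⁻¹ := by
  have hK : 0 < K :=
    pos_of_mul_pos_left ((hw _).trans_le (hadd 0 0)) (add_pos (hw 0) (hw 0)).le
  have hterm : ∀ x ∈ Iic a, w a / (w x * w (a - x)) ≤ K * ((w x)⁻¹ + (w (a - x))⁻¹) := by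
    intro x hx
    have hx₀ := hw x
    have hax₀ := hw (a - x)
    calc w a / (w x * w (a - x))
        = w (x + (a - x)) / (w x * w (a - x)) := by rw [add_tsub_cancel_of_le (mem_Iic.1 hx)]
      _ ≤ K * (w x + w (a - x)) / (w x * w (a - x)) := by gcongr; exact hadd _ _
      _ = K * ((w x)⁻¹ + (w (a - x))⁻¹) := by field_simp; ring
  calc ∑ x ∈ Iic a, w a / (w x * w (a - x))
      ≤ ∑ x ∈ Iic a, K * ((w x)⁻¹ + (w (a - x))⁻¹) := sum_le_sum hterm
    _ = 2 * K * ∑ x ∈ Iic a, (w x)⁻¹ := by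
        rw [← mul_sum, sum_add_distrib, sum_Iic_reflect fun x ↦ (w x)⁻¹]
        ring
    _ ≤ 2 * K * ∑' x, (w x)⁻¹ := by
        gcongr
        exact hsum.sum_le_tsum _ fun x _ ↦ (inv_pos.2 (hw x)).le

end Convolution

theorem summable_prod_apply {ι : Type*} [Fintype ι] {κ : ι → Type*} {f : ∀ i, κ i → ℝ}
    (hf₀ : ∀ i k, 0 ≤ f i k) (hf : ∀ i, Summable (f i)) :
    Summable fun x : ∀ i, κ i ↦ ∏ i, f i (x i) := by
  classical
  refine summable_of_sum_le (c := ∏ i, ∑' k, f i k)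
    (fun x ↦ prod_nonneg fun i _ ↦ hf₀ i (x i)) fun s ↦ ?_
  have hs : s ⊆ Fintype.piFinset fun i ↦ s.image (· i) := fun x hx ↦
    Fintype.mem_piFinset.2 fun i ↦ mem_image_of_mem (· i) hx
  calc ∑ x ∈ s, ∏ i, f i (x i)
      ≤ ∑ x ∈ Fintype.piFinset fun i ↦ s.image (· i), ∏ i, f i (x i) :=
        sum_le_sum_of_subset_of_nonneg hs fun x _ _ ↦ prod_nonneg fun i _ ↦ hf₀ i (x i)
    _ = ∏ i, ∑ k ∈ s.image (· i), f i k := (prod_univ_sum _ _).symm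
    _ ≤ ∏ i, ∑' k, f i k :=
        prod_le_prod (fun i _ ↦ sum_nonneg fun k _ ↦ hf₀ i k)
          fun i _ ↦ (hf i).sum_le_tsum _ fun k _ ↦ hf₀ i k

section MultiIndex

variable {ι : Type*} [Fintype ι]

/-- The weight `|α|^p + 1` of a multi-index `α`, whose inverse is the polynomial decay imposed on
derivatives in the analytic spaces `X_r`. -/
def orderWeight (p : ℕ) (α : ι → ℕ) : ℝ :=
  ((∑ i, α i : ℕ) : ℝ) ^ p + 1

theorem orderWeight_pos (p : ℕ) (α : ι → ℕ) : 0 < orderWeight p α := by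
  unfold orderWeight
  positivity

theorem orderWeight_add_le (p : ℕ) (α β : ι → ℕ) :
    orderWeight p (α + β) ≤ 2 ^ (p - 1) * (orderWeight p α + orderWeight p β) := by
  have hpow : ((∑ i, α i : ℕ) + (∑ i, β i : ℕ) : ℝ) ^ p ≤
      2 ^ (p - 1) * (((∑ i, α i : ℕ) : ℝ) ^ p + ((∑ i, β i : ℕ) : ℝ) ^ p) :=
    add_pow_le (Nat.cast_nonneg _) (Nat.cast_nonneg _) p
  have htwo : (1 : ℝ) ≤ 2 ^ (p - 1) := one_le_pow₀ one_le_two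
  simp only [orderWeight, Pi.add_apply, sum_add_distrib, Nat.cast_add]
  linarith

theorem order_add_one_pow_le_orderWeight (p : ℕ) (α : ι → ℕ) :
    (((∑ i, α i : ℕ) : ℝ) + 1) ^ p ≤ 2 ^ (p - 1) * orderWeight p α := by
  simpa only [orderWeight, one_pow] using
    add_pow_le (Nat.cast_nonneg (∑ i, α i)) (zero_le_one' ℝ) p

theorem prod_add_one_rpow_le_order_add_one_pow [Nonempty ι] (p : ℕ) (α : ι → ℕ) :
    ∏ i, ((α i : ℝ) + 1) ^ (p / Fintype.card ι : ℝ) ≤ (((∑ i, α i : ℕ) : ℝ) + 1) ^ p := by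
  have hα (i : ι) : α i ≤ ∑ j, α j := single_le_sum_of_canonicallyOrdered (mem_univ i)
  calc ∏ i, ((α i : ℝ) + 1) ^ (p / Fintype.card ι : ℝ)
      ≤ ∏ _i : ι, (((∑ j, α j : ℕ) : ℝ) + 1) ^ (p / Fintype.card ι : ℝ) := by
        gcongr with i
        exact hα i
    _ = (((∑ i, α i : ℕ) : ℝ) + 1) ^ p := by
        rw [prod_const, card_univ, ← Real.rpow_mul_natCast (by positivity),
          div_mul_cancel₀ _ (Nat.cast_ne_zero.2 Fintype.card_ne_zero), Real.rpow_natCast]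

theorem inv_orderWeight_le_prod [Nonempty ι] (p : ℕ) (α : ι → ℕ) :
    (orderWeight p α)⁻¹ ≤
      2 ^ (p - 1) * ∏ i, (((α i : ℝ) + 1) ^ (p / Fintype.card ι : ℝ))⁻¹ := by
  rw [prod_inv_distrib, ← div_eq_mul_inv, inv_le_comm₀ (orderWeight_pos p α) (by positivity),
    inv_div, div_le_iff₀' (by positivity)]
  exact (prod_add_one_rpow_le_order_add_one_pow p α).trans (order_add_one_pow_le_orderWeight p α)

theorem summable_inv_orderWeight {p : ℕ} (hp : Fintype.card ι < p) :
    Summable fun α : ι → ℕ ↦ (orderWeight p α)⁻¹ := by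
  cases isEmpty_or_nonempty ι
  · exact .of_finite
  have hexp : 1 < (p / Fintype.card ι : ℝ) :=
    (one_lt_div (Nat.cast_pos.2 Fintype.card_pos)).2 (Nat.cast_lt.2 hp)
  have hone : Summable fun k : ℕ ↦ (((k : ℝ) + 1) ^ (p / Fintype.card ι : ℝ))⁻¹ := by
    simpa only [Nat.cast_add, Nat.cast_one] using
      (summable_nat_add_iff 1).2 (Real.summable_nat_rpow_inv.2 hexp)
  exact .of_nonneg_of_le (fun α ↦ (inv_pos.2 (orderWeight_pos p α)).le) (inv_orderWeight_le_prod p)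
    ((summable_prod_apply (fun _ _ ↦ by positivity) fun _ ↦ hone).mul_left _)

theorem prod_choose_mul_prod_factorial_mul_prod_factorial {α β : ι → ℕ} (h : β ≤ α) :
    (∏ i, (α i).choose (β i)) * (∏ i, (β i).factorial) * ∏ i, ((α - β) i).factorial =
      ∏ i, (α i).factorial := by
  simp only [← prod_mul_distrib, Pi.sub_apply, Nat.choose_mul_factorial_mul_factorial (h _)]

/-- The bound `M α! / (r^|α| w(α))` in a weighted Cauchy estimate with radius `r`, for the
derivatives at a point of an analytic function; the paper takes `w(α) = |α|^(2d+1) + 1`. -/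
noncomputable def cauchyBound (w : (ι → ℕ) → ℝ) (r M : ℝ) (α : ι → ℕ) : ℝ :=
  M * (∏ i, ((α i).factorial : ℝ)) / (r ^ (∑ i, α i) * w α)

variable {w : (ι → ℕ) → ℝ} {r Ma Mb : ℝ}

theorem cauchyBound_const_mul (c M : ℝ) (α : ι → ℕ) :
    cauchyBound w r (c * M) α = c * cauchyBound w r M α := by
  simp only [cauchyBound, mul_assoc, mul_div_assoc]

theorem cauchyBound_nonneg (hw : ∀ α, 0 < w α) (hr : 0 < r) (hMa : 0 ≤ Ma) (α : ι → ℕ) :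
    0 ≤ cauchyBound w r Ma α := by
  have := hw α
  unfold cauchyBound
  positivity

theorem prod_choose_mul_cauchyBound_mul_cauchyBound {α β : ι → ℕ} (hw : w α ≠ 0)
    (h : β ≤ α) :
    ((∏ i, (α i).choose (β i) : ℕ) : ℝ) * cauchyBound w r Ma β * cauchyBound w r Mb (α - β) =
      cauchyBound w r (Ma * Mb) α * (w α / (w β * w (α - β))) := by
  have hfact : ∏ i, ((α i).factorial : ℝ) = ((∏ i, (α i).choose (β i) : ℕ) : ℝ) *
      (∏ i, ((β i).factorial : ℝ)) * ∏ i, (((α - β) i).factorial : ℝ) := by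
    exact_mod_cast (prod_choose_mul_prod_factorial_mul_prod_factorial h).symm
  have hpow : r ^ ∑ i, α i = r ^ (∑ i, β i) * r ^ ∑ i, (α - β) i := by
    rw [← pow_add, ← sum_add_distrib]
    exact congrArg (r ^ ·) (sum_congr rfl fun i _ ↦ (add_tsub_cancel_of_le (h i)).symm)
  simp only [cauchyBound, hfact, hpow]
  field_simp

theorem sum_prod_choose_mul_le_cauchyBound [DecidableEq ι] {C : ℝ} {a b : (ι → ℕ) → ℝ}
    (hw : ∀ α, 0 < w α) (hr : 0 < r) (hMa : 0 ≤ Ma) (ha : ∀ α, a α ≤ cauchyBound w r Ma α)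
    (hb₀ : ∀ α, 0 ≤ b α) (hb : ∀ α, b α ≤ cauchyBound w r Mb α) {α : ι → ℕ}
    (hC : ∑ β ∈ Iic α, w α / (w β * w (α - β)) ≤ C) :
    ∑ β ∈ Iic α, ((∏ i, (α i).choose (β i) : ℕ) : ℝ) * a β * b (α - β) ≤
      cauchyBound w r (C * Ma * Mb) α := by
  have hterm : ∀ β ∈ Iic α, ((∏ i, (α i).choose (β i) : ℕ) : ℝ) * a β * b (α - β) ≤
      cauchyBound w r (Ma * Mb) α * (w α / (w β * w (α - β))) := by
    intro β hβ
    rw [← prod_choose_mul_cauchyBound_mul_cauchyBound (hw α).ne' (mem_Iic.1 hβ)]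
    have hA := cauchyBound_nonneg hw hr hMa β
    exact mul_le_mul (mul_le_mul_of_nonneg_left (ha β) (Nat.cast_nonneg _)) (hb _) (hb₀ _)
      (by positivity)
  have hprod : 0 ≤ cauchyBound w r (Ma * Mb) α := by
    rw [cauchyBound_const_mul]
    exact mul_nonneg hMa ((hb₀ α).trans (hb α))
  calc ∑ β ∈ Iic α, ((∏ i, (α i).choose (β i) : ℕ) : ℝ) * a β * b (α - β)
      ≤ cauchyBound w r (Ma * Mb) α * ∑ β ∈ Iic α, w α / (w β * w (α - β)) := by
        rw [mul_sum]
        exact sum_le_sum hterm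
    _ ≤ cauchyBound w r (Ma * Mb) α * C := mul_le_mul_of_nonneg_left hC hprod
    _ = cauchyBound w r (C * Ma * Mb) α := by
        rw [mul_assoc C, cauchyBound_const_mul C, mul_comm]

theorem stmt9_general [DecidableEq ι] {p : ℕ} (hp : Fintype.card ι < p) :
    ∃ C > 0,
      (∀ r : ℝ, 0 < r → ∀ Ma Mb : ℝ, 0 ≤ Ma → ∀ a b : (ι → ℕ) → ℝ,
        (∀ α, a α ≤ cauchyBound (orderWeight p) r Ma α) →
        (∀ α, 0 ≤ b α ∧ b α ≤ cauchyBound (orderWeight p) r Mb α) →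
        ∀ α, ∑ β ∈ Iic α, ((∏ i, (α i).choose (β i) : ℕ) : ℝ) * a β * b (α - β) ≤
          cauchyBound (orderWeight p) r (C * Ma * Mb) α) ∧
      ∀ α : ι → ℕ, ∑ β ∈ Iic α,
        orderWeight p α / (orderWeight p β * orderWeight p (α - β)) ≤ C := by
  have hw : ∀ α : ι → ℕ, 0 < orderWeight p α := orderWeight_pos p
  have hsum := summable_inv_orderWeight hp
  have htsum : 0 < ∑' α : ι → ℕ, (orderWeight p α)⁻¹ :=
    hsum.tsum_pos (fun α ↦ (inv_pos.2 (hw α)).le) 0 (inv_pos.2 (hw 0))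
  have hC := sum_Iic_div_mul_le_tsum_inv hw (orderWeight_add_le p) hsum
  exact ⟨_, by positivity, fun r hr Ma Mb hMa a b ha hb α ↦
    sum_prod_choose_mul_le_cauchyBound hw hr hMa ha (fun β ↦ (hb β).1) (fun β ↦ (hb β).2)
      (hC α), hC⟩

end MultiIndex

/-- **Lemma 3.18** (coefficient / Leibniz level): if the derivative coefficients of two
analytic functions satisfy `0 ≤ a(α) ≤ M_a α!/(r^{|α|}(|α|^{2d+1}+1))` and likewise for
`b`, then the Leibniz sums `Σ_{β≤α} binom(α,β) a(β) b(α−β)` satisfy the same kind of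
bound with constant `C M_a M_b`; in particular the sum
`Σ_{β≤α} (|α|^{2d+1}+1)/((|β|^{2d+1}+1)(|α−β|^{2d+1}+1))` is bounded uniformly in `α`. -/
theorem stmt9 (d : ℕ) (hd : 0 < d) :
    ∃ C > 0,
      (∀ r : ℝ, 0 < r → r ≤ 1 → ∀ Ma Mb : ℝ, 0 ≤ Ma → 0 ≤ Mb →
        ∀ a b : (Fin (d + 1) → ℕ) → ℝ,
          (∀ α : Fin (d + 1) → ℕ, 0 ≤ a α ∧
            a α ≤ Ma * (∏ i, (Nat.factorial (α i) : ℝ)) /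
              (r ^ (∑ i, α i) * (((∑ i, α i : ℕ) : ℝ) ^ (2 * d + 1) + 1))) →
          (∀ α : Fin (d + 1) → ℕ, 0 ≤ b α ∧
            b α ≤ Mb * (∏ i, (Nat.factorial (α i) : ℝ)) /
              (r ^ (∑ i, α i) * (((∑ i, α i : ℕ) : ℝ) ^ (2 * d + 1) + 1))) →
          ∀ α : Fin (d + 1) → ℕ,
            (∑ β ∈ Finset.Iic α,
              ((∏ i, Nat.choose (α i) (β i) : ℕ) : ℝ) * a β * b (α - β))
              ≤ C * Ma * Mb * (∏ i, (Nat.factorial (α i) : ℝ)) /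
                (r ^ (∑ i, α i) * (((∑ i, α i : ℕ) : ℝ) ^ (2 * d + 1) + 1)))
      ∧ (∀ α : Fin (d + 1) → ℕ,
          (∑ β ∈ Finset.Iic α,
            ((((∑ i, α i : ℕ) : ℝ) ^ (2 * d + 1) + 1) /
              (((((∑ i, β i : ℕ) : ℝ) ^ (2 * d + 1) + 1)) *
                ((((∑ i, (α - β) i : ℕ) : ℝ) ^ (2 * d + 1) + 1))))) ≤ C) := by
  obtain ⟨C, hC, hleibniz, hsum⟩ :=
    stmt9_general (ι := Fin (d + 1)) (p := 2 * d + 1) (by rw [Fintype.card_fin]; omega)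
  exact ⟨C, hC, fun r hr _ Ma Mb hMa _ a b ha hb ↦
    hleibniz r hr Ma Mb hMa a b (fun α ↦ (ha α).2) hb, hsum⟩
end

section
/- Let d ≥ 2 be an integer and d* a positive integer with 2d* > d − 1. Then there exists a constant C > 0 such that for all measurable u, v : ℝ^{d−1} × ℤ → ℂ with ∫_{ℝ^{d−1}} Σ_{λ∈ℤ} ⟨(ξ,λ)⟩^{2d*} |u(ξ,λ)|² dξ < ∞ and the same for v, the function w(ξ,λ) := ∫_{ℝ^{d−1}} u(η,λ) v(ξ−η,λ) dη (convolution in the continuous variable only, with the same discrete index λ) satisfies ∫_{ℝ^{d−1}} Σ_{λ∈ℤ} ⟨(ξ,λ)⟩^{2d*} |w(ξ,λ)|² dξ ≤ C² (∫Σ ⟨(ξ,λ)⟩^{2d*}|u|² dξ)(∫Σ ⟨(ξ,λ)⟩^{2d*}|v|² dξ). -/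
open MeasureTheory
open scoped ENNReal

noncomputable section

/-- Squared `H^{d*}`-type norm of a Fourier datum on `ℝ^{d−1} × ℤ`:
`∫ Σ ⟨(ξ,λ)⟩^{2d*} |F(ξ,λ)|² dξ`. -/
def SobNormSq (d dstar : ℕ) (F : EuclideanSpace ℝ (Fin (d - 1)) × ℤ → ℂ) : ℝ≥0∞ :=
  ∫⁻ ξ : EuclideanSpace ℝ (Fin (d - 1)), ∑' l : ℤ,
    ENNReal.ofReal ((1 + ‖ξ‖ ^ 2 + (l : ℝ) ^ 2) ^ dstar * ‖F (ξ, l)‖ ^ 2)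

/-!
A diagonal sum `∑ λ, aλ * bλ` of nonnegative terms is at most `(∑ λ, aλ) * (∑ λ, bλ)`, so it
suffices to bound each mode `λ`, uniformly in `λ`. Write `w = ⟨(·, λ)⟩ ^ (2s)`. Cauchy–Schwarz gives
`(f ⋆ g)² ≤ (w⁻¹ ⋆ w⁻¹) * (w f² ⋆ w g²)` pointwise. The quasi-subadditivity
`w (y + z) ≤ 4 ^ s * (w y + w z)` bounds `w * (w⁻¹ ⋆ w⁻¹)` by `2 * 4 ^ s * ∫ w⁻¹`, which is
finite, uniformly in `λ`, since `2s` exceeds the dimension. Multiplying by `w` and integrating then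
bounds `∫ w (f ⋆ g)²` by a multiple of `(∫ w f²) * ∫ w g²`.
-/

open scoped Convolution

section LConvolution

lemma sq_lintegral_le_lintegral_mul_lintegral {α : Type*} [MeasurableSpace α] {μ : Measure α}
    {h φ ψ : α → ℝ≥0∞} (hφ : AEMeasurable φ μ) (hψ : AEMeasurable ψ μ)
    (hle : ∀ a, h a ^ 2 ≤ φ a * ψ a) :
    (∫⁻ a, h a ∂μ) ^ 2 ≤ (∫⁻ a, φ a ∂μ) * ∫⁻ a, ψ a ∂μ := by
  have sq_rpow_half (t : ℝ≥0∞) : (t ^ (1 / 2 : ℝ)) ^ 2 = t := by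
    rw [← ENNReal.rpow_mul_natCast]
    norm_num
  have h_le_sqrt (a : α) : h a ≤ φ a ^ (1 / 2 : ℝ) * ψ a ^ (1 / 2 : ℝ) := by
    rw [← ENNReal.pow_le_pow_left_iff two_ne_zero, mul_pow, sq_rpow_half, sq_rpow_half]
    exact hle a
  calc (∫⁻ a, h a ∂μ) ^ 2
      ≤ (∫⁻ a, φ a ^ (1 / 2 : ℝ) * ψ a ^ (1 / 2 : ℝ) ∂μ) ^ 2 := by
        gcongr with a
        exact h_le_sqrt a
    _ ≤ ((∫⁻ a, φ a ∂μ) ^ (1 / 2 : ℝ) * (∫⁻ a, ψ a ∂μ) ^ (1 / 2 : ℝ)) ^ 2 := by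
        gcongr
        exact ENNReal.lintegral_mul_norm_pow_le hφ hψ (by norm_num) (by norm_num) (by norm_num)
    _ = (∫⁻ a, φ a ∂μ) * ∫⁻ a, ψ a ∂μ := by rw [mul_pow, sq_rpow_half, sq_rpow_half]

lemma lintegral_lconvolution {G : Type*} [AddGroup G] [MeasurableSpace G] [MeasurableAdd₂ G]
    [MeasurableNeg G] {μ : Measure G} [μ.IsAddLeftInvariant] [SFinite μ] {f g : G → ℝ≥0∞}
    (hf : AEMeasurable f μ) (hg : AEMeasurable g μ) :
    ∫⁻ x, (f ⋆ₗ[μ] g) x ∂μ = (∫⁻ x, f x ∂μ) * ∫⁻ x, g x ∂μ := by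
  have inner_integral (y : G) : ∫⁻ x, f y * g (-y + x) ∂μ = f y * ∫⁻ x, g x ∂μ := by
    have hg_translate : AEMeasurable (fun x => g (-y + x)) μ :=
      hg.comp_quasiMeasurePreserving (measurePreserving_add_left μ (-y)).quasiMeasurePreserving
    rw [lintegral_const_mul'' _ hg_translate, lintegral_add_left_eq_self g (-y)]
  simp only [lconvolution_def]
  rw [lintegral_lintegral_swap (by fun_prop)]
  simp only [inner_integral]
  rw [lintegral_mul_const'' _ hf]

variable {G : Type*} [AddCommGroup G] [MeasurableSpace G] [MeasurableAdd₂ G] [MeasurableNeg G]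
  {μ : Measure G} [μ.IsAddLeftInvariant] [μ.IsNegInvariant]

lemma aemeasurable_comp_neg_add {f : G → ℝ≥0∞} (hf : AEMeasurable f μ) (x : G) :
    AEMeasurable (fun y => f (-y + x)) μ := by
  simp only [neg_add_eq_sub]
  exact hf.comp_quasiMeasurePreserving
    (Measure.measurePreserving_sub_left μ x).quasiMeasurePreserving

lemma lconvolution_sq_le_lconvolution_inv_mul {f g w₁ w₂ : G → ℝ≥0∞}
    (hf : AEMeasurable f μ) (hg : AEMeasurable g μ)
    (hw₁ : AEMeasurable w₁ μ) (hw₂ : AEMeasurable w₂ μ) (hw₁_zero : ∀ x, w₁ x ≠ 0)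
    (hw₁_top : ∀ x, w₁ x ≠ ∞) (hw₂_zero : ∀ x, w₂ x ≠ 0) (hw₂_top : ∀ x, w₂ x ≠ ∞) (x : G) :
    (f ⋆ₗ[μ] g) x ^ 2 ≤ (w₁⁻¹ ⋆ₗ[μ] w₂⁻¹) x * ((w₁ * f ^ 2) ⋆ₗ[μ] (w₂ * g ^ 2)) x := by
  refine sq_lintegral_le_lintegral_mul_lintegral (hw₁.inv.mul (aemeasurable_comp_neg_add hw₂.inv x))
    ((hw₁.mul (hf.pow_const 2)).mul (aemeasurable_comp_neg_add (hw₂.mul (hg.pow_const 2)) x))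
    fun y => le_of_eq ?_
  simp only [Pi.inv_apply, Pi.mul_apply, Pi.pow_apply]
  calc (f y * g (-y + x)) ^ 2
      = (w₁ y * (w₁ y)⁻¹) * (w₂ (-y + x) * (w₂ (-y + x))⁻¹) * (f y * g (-y + x)) ^ 2 := by
        rw [ENNReal.mul_inv_cancel (hw₁_zero _) (hw₁_top _),
          ENNReal.mul_inv_cancel (hw₂_zero _) (hw₂_top _), one_mul, one_mul]
    _ = _ := by ring

lemma lintegral_mul_lconvolution_sq_le [SFinite μ] {f g w w₁ w₂ : G → ℝ≥0∞} {M : ℝ≥0∞}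
    (hf : AEMeasurable f μ) (hg : AEMeasurable g μ)
    (hw₁ : AEMeasurable w₁ μ) (hw₂ : AEMeasurable w₂ μ) (hw₁_zero : ∀ x, w₁ x ≠ 0)
    (hw₁_top : ∀ x, w₁ x ≠ ∞) (hw₂_zero : ∀ x, w₂ x ≠ 0) (hw₂_top : ∀ x, w₂ x ≠ ∞)
    (hM : ∀ x, w x * (w₁⁻¹ ⋆ₗ[μ] w₂⁻¹) x ≤ M) :
    ∫⁻ x, w x * (f ⋆ₗ[μ] g) x ^ 2 ∂μ ≤
      M * ((∫⁻ x, w₁ x * f x ^ 2 ∂μ) * ∫⁻ x, w₂ x * g x ^ 2 ∂μ) := by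
  calc ∫⁻ x, w x * (f ⋆ₗ[μ] g) x ^ 2 ∂μ
      ≤ ∫⁻ x, M * ((w₁ * f ^ 2) ⋆ₗ[μ] (w₂ * g ^ 2)) x ∂μ := by
        refine lintegral_mono fun x => ?_
        calc w x * (f ⋆ₗ[μ] g) x ^ 2
            ≤ w x * ((w₁⁻¹ ⋆ₗ[μ] w₂⁻¹) x * ((w₁ * f ^ 2) ⋆ₗ[μ] (w₂ * g ^ 2)) x) := by
              gcongr
              exact lconvolution_sq_le_lconvolution_inv_mul hf hg hw₁ hw₂ hw₁_zero hw₁_top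
                hw₂_zero hw₂_top x
          _ = w x * (w₁⁻¹ ⋆ₗ[μ] w₂⁻¹) x * ((w₁ * f ^ 2) ⋆ₗ[μ] (w₂ * g ^ 2)) x := by
              rw [mul_assoc]
          _ ≤ M * ((w₁ * f ^ 2) ⋆ₗ[μ] (w₂ * g ^ 2)) x := by
              gcongr
              exact hM x
    _ = M * ((∫⁻ x, w₁ x * f x ^ 2 ∂μ) * ∫⁻ x, w₂ x * g x ^ 2 ∂μ) := by
        have hwf : AEMeasurable (w₁ * f ^ 2) μ := hw₁.mul (hf.pow_const 2)
        have hwg : AEMeasurable (w₂ * g ^ 2) μ := hw₂.mul (hg.pow_const 2)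
        rw [lintegral_const_mul'' _ (aemeasurable_lconvolution hwf hwg),
          lintegral_lconvolution hwf hwg]
        rfl

lemma mul_inv_lconvolution_inv_le {w : G → ℝ≥0∞} {K : ℝ≥0∞} (hw : AEMeasurable w μ)
    (hw_zero : ∀ x, w x ≠ 0) (hw_top : ∀ x, w x ≠ ∞)
    (hw_add : ∀ y z, w (y + z) ≤ K * (w y + w z)) (x : G) :
    w x * (w⁻¹ ⋆ₗ[μ] w⁻¹) x ≤ 2 * K * ∫⁻ y, (w y)⁻¹ ∂μ := by
  have pointwise (y : G) :
      w x * ((w y)⁻¹ * (w (-y + x))⁻¹) ≤ K * ((w y)⁻¹ + (w (-y + x))⁻¹) := by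
    have hy := ENNReal.mul_inv_cancel (hw_zero y) (hw_top y)
    have hz := ENNReal.mul_inv_cancel (hw_zero (-y + x)) (hw_top (-y + x))
    calc w x * ((w y)⁻¹ * (w (-y + x))⁻¹)
        ≤ K * (w y + w (-y + x)) * ((w y)⁻¹ * (w (-y + x))⁻¹) := by
          gcongr
          simpa only [add_neg_cancel_left] using hw_add y (-y + x)
      _ = K * (w y * (w y)⁻¹ * (w (-y + x))⁻¹ + w (-y + x) * (w (-y + x))⁻¹ * (w y)⁻¹) := by ring
      _ = K * ((w y)⁻¹ + (w (-y + x))⁻¹) := by rw [hy, hz, one_mul, one_mul, add_comm]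
  have hw_inv : AEMeasurable (fun y => (w y)⁻¹) μ := hw.inv
  have hw_inv_add : AEMeasurable (fun y => (w y)⁻¹ + (w (-y + x))⁻¹) μ :=
    hw_inv.add (aemeasurable_comp_neg_add hw_inv x)
  have reflected : ∫⁻ y, (w (-y + x))⁻¹ ∂μ = ∫⁻ y, (w y)⁻¹ ∂μ := by
    simp only [neg_add_eq_sub]
    exact lintegral_sub_left_eq_self (fun y => (w y)⁻¹) x
  calc w x * (w⁻¹ ⋆ₗ[μ] w⁻¹) x
      ≤ ∫⁻ y, w x * ((w y)⁻¹ * (w (-y + x))⁻¹) ∂μ := lintegral_const_mul_le _ _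
    _ ≤ ∫⁻ y, K * ((w y)⁻¹ + (w (-y + x))⁻¹) ∂μ := lintegral_mono pointwise
    _ = K * (∫⁻ y, (w y)⁻¹ ∂μ + ∫⁻ y, (w (-y + x))⁻¹ ∂μ) := by
        rw [lintegral_const_mul'' _ hw_inv_add, lintegral_add_left' hw_inv]
    _ = 2 * K * ∫⁻ y, (w y)⁻¹ ∂μ := by
        rw [reflected]
        ring

end LConvolution

lemma enorm_convolution_le {𝕜 G E E' F : Type*} [NontriviallyNormedField 𝕜]
    [NormedAddCommGroup E] [NormedSpace 𝕜 E] [NormedAddCommGroup E'] [NormedSpace 𝕜 E']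
    [NormedAddCommGroup F] [NormedSpace 𝕜 F] [NormedSpace ℝ F] [AddCommGroup G]
    [MeasurableSpace G] (L : E →L[𝕜] E' →L[𝕜] F) (f : G → E) (g : G → E') (μ : Measure G) (x : G) :
    ‖(f ⋆[L, μ] g) x‖ₑ ≤ ‖L‖ₑ * ((‖f ·‖ₑ) ⋆ₗ[μ] (‖g ·‖ₑ)) x := by
  calc ‖(f ⋆[L, μ] g) x‖ₑ
      ≤ ∫⁻ y, ‖L (f y) (g (x - y))‖ₑ ∂μ := enorm_integral_le_lintegral_enorm _
    _ ≤ ∫⁻ y, ‖L‖ₑ * (‖f y‖ₑ * ‖g (-y + x)‖ₑ) ∂μ := by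
        refine lintegral_mono fun y => ?_
        rw [neg_add_eq_sub, ← mul_assoc]
        exact L.le_opENorm₂ _ _
    _ = ‖L‖ₑ * ((‖f ·‖ₑ) ⋆ₗ[μ] (‖g ·‖ₑ)) x := lintegral_const_mul' _ _ enorm_ne_top

lemma tsum_mul_le_tsum_mul_tsum {ι : Type*} (a b : ι → ℝ≥0∞) :
    ∑' i, a i * b i ≤ (∑' i, a i) * ∑' i, b i := by
  rw [← ENNReal.tsum_mul_right]
  gcongr with i
  exact ENNReal.le_tsum i

section BracketWeight

variable {E Λ : Type*} [NormedAddCommGroup E] [Norm Λ]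

/-- The weight `⟨(ξ, l)⟩ ^ (2 * s)` of the Sobolev norm of order `s` on the Fourier side, as a
function of the continuous frequency `ξ` for each discrete frequency `l`. -/
def bracketWeight (s : ℝ) (l : Λ) (ξ : E) : ℝ≥0∞ :=
  ENNReal.ofReal (1 + ‖ξ‖ ^ 2 + ‖l‖ ^ 2) ^ s

lemma bracketWeight_ne_zero (s : ℝ) (l : Λ) (ξ : E) : bracketWeight s l ξ ≠ 0 := by
  have hpos : 0 < 1 + ‖ξ‖ ^ 2 + ‖l‖ ^ 2 := by positivity
  exact (ENNReal.rpow_pos (ENNReal.ofReal_pos.2 hpos) ENNReal.ofReal_ne_top).ne'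

lemma bracketWeight_ne_top (s : ℝ) (l : Λ) (ξ : E) : bracketWeight s l ξ ≠ ∞ := by
  have hpos : 0 < 1 + ‖ξ‖ ^ 2 + ‖l‖ ^ 2 := by positivity
  exact ENNReal.rpow_ne_top_of_ne_zero (ENNReal.ofReal_pos.2 hpos).ne' ENNReal.ofReal_ne_top

lemma measurable_bracketWeight [MeasurableSpace E] [OpensMeasurableSpace E] (s : ℝ) (l : Λ) :
    Measurable (bracketWeight s l : E → ℝ≥0∞) := by
  unfold bracketWeight
  fun_prop

lemma bracketWeight_zero_le {s : ℝ} (hs : 0 ≤ s) (l : Λ) (ξ : E) :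
    bracketWeight s (0 : ℝ) ξ ≤ bracketWeight s l ξ :=
  ENNReal.rpow_le_rpow (ENNReal.ofReal_le_ofReal (by simp [sq_nonneg])) hs

lemma bracketWeight_add_le {s : ℝ} (hs : 0 ≤ s) (l : Λ) (y z : E) :
    bracketWeight s l (y + z) ≤ 4 ^ s * (bracketWeight s l y + bracketWeight s l z) := by
  have hsq : 1 + ‖y + z‖ ^ 2 + ‖l‖ ^ 2 ≤
      4 * max (1 + ‖y‖ ^ 2 + ‖l‖ ^ 2) (1 + ‖z‖ ^ 2 + ‖l‖ ^ 2) := by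
    have hnorm : ‖y + z‖ ^ 2 ≤ 2 * (‖y‖ ^ 2 + ‖z‖ ^ 2) :=
      (pow_le_pow_left₀ (norm_nonneg _) (norm_add_le y z) 2).trans add_sq_le
    have hy := le_max_left (1 + ‖y‖ ^ 2 + ‖l‖ ^ 2) (1 + ‖z‖ ^ 2 + ‖l‖ ^ 2)
    have hz := le_max_right (1 + ‖y‖ ^ 2 + ‖l‖ ^ 2) (1 + ‖z‖ ^ 2 + ‖l‖ ^ 2)
    linarith [sq_nonneg ‖l‖]
  unfold bracketWeight
  calc ENNReal.ofReal (1 + ‖y + z‖ ^ 2 + ‖l‖ ^ 2) ^ s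
      ≤ (4 * max (ENNReal.ofReal (1 + ‖y‖ ^ 2 + ‖l‖ ^ 2))
          (ENNReal.ofReal (1 + ‖z‖ ^ 2 + ‖l‖ ^ 2))) ^ s := by
        gcongr
        rw [← ENNReal.ofReal_max, ← ENNReal.ofReal_ofNat 4, ← ENNReal.ofReal_mul (by norm_num)]
        exact ENNReal.ofReal_le_ofReal hsq
    _ = 4 ^ s * max (ENNReal.ofReal (1 + ‖y‖ ^ 2 + ‖l‖ ^ 2) ^ s)
          (ENNReal.ofReal (1 + ‖z‖ ^ 2 + ‖l‖ ^ 2) ^ s) := by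
        rw [ENNReal.mul_rpow_of_nonneg _ _ hs, (ENNReal.monotone_rpow_of_nonneg hs).map_max]
    _ ≤ 4 ^ s * (ENNReal.ofReal (1 + ‖y‖ ^ 2 + ‖l‖ ^ 2) ^ s +
          ENNReal.ofReal (1 + ‖z‖ ^ 2 + ‖l‖ ^ 2) ^ s) := by
        gcongr
        exact max_le_add_of_nonneg zero_le zero_le

lemma lintegral_inv_bracketWeight_zero_ne_top [NormedSpace ℝ E] [FiniteDimensional ℝ E]
    [MeasurableSpace E] [BorelSpace E] (μ : Measure E) [μ.IsAddHaarMeasure] {s : ℝ}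
    (hs : Module.finrank ℝ E < 2 * s) :
    ∫⁻ ξ : E, (bracketWeight s (0 : ℝ) ξ)⁻¹ ∂μ ≠ ∞ := by
  have inv_eq (ξ : E) :
      (bracketWeight s (0 : ℝ) ξ)⁻¹ = ENNReal.ofReal ((1 + ‖ξ‖ ^ 2) ^ (-(2 * s) / 2)) := by
    have hpos : 0 < 1 + ‖ξ‖ ^ 2 := by positivity
    rw [← ENNReal.ofReal_rpow_of_pos hpos, neg_div, mul_div_cancel_left₀ s two_ne_zero,
      ENNReal.rpow_neg, bracketWeight, norm_zero, zero_pow two_ne_zero, add_zero]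
  simp only [inv_eq]
  exact (integrable_rpow_neg_one_add_norm_sq hs).lintegral_lt_top.ne

end BracketWeight

section Sobolev

variable {𝕜 E F₀ F₁ F₂ F₃ Λ : Type*} [Norm Λ] [NormedAddCommGroup E] [MeasurableSpace E]
  [NormedAddCommGroup F₀] {μ : Measure E} {s : ℝ}

/-- The square of the Sobolev norm of order `s`, on the Fourier side, of a function of a continuous
and a periodic variable. The Fourier datum is given as a family `F l` of functions of the continuous
frequency, indexed by the discrete frequency `l`. -/
def sobolevNormSq (μ : Measure E) (s : ℝ) (F : Λ → E → F₀) : ℝ≥0∞ :=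
  ∫⁻ ξ, ∑' l, bracketWeight s l ξ * ‖F l ξ‖ₑ ^ 2 ∂μ

lemma sobolevNormSq_eq_tsum [OpensMeasurableSpace E] [Countable Λ] {F : Λ → E → F₀}
    (hF : ∀ l, AEStronglyMeasurable (F l) μ) :
    sobolevNormSq μ s F = ∑' l, ∫⁻ ξ, bracketWeight s l ξ * ‖F l ξ‖ₑ ^ 2 ∂μ :=
  lintegral_tsum fun l => (measurable_bracketWeight s l).aemeasurable.mul ((hF l).enorm.pow_const 2)

variable [NontriviallyNormedField 𝕜] [NormedAddCommGroup F₁] [NormedSpace 𝕜 F₁]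
  [NormedAddCommGroup F₂] [NormedSpace 𝕜 F₂] [NormedAddCommGroup F₃] [NormedSpace 𝕜 F₃]
  [NormedSpace ℝ F₃] [BorelSpace E] (L : F₁ →L[𝕜] F₂ →L[𝕜] F₃)

section InvariantMeasure

variable [SecondCountableTopology E] [SFinite μ] [μ.IsAddLeftInvariant] [μ.IsNegInvariant]

lemma lintegral_bracketWeight_mul_convolution_sq_le (hs : 0 ≤ s) (l : Λ) {f : E → F₁} {g : E → F₂}
    (hf : AEStronglyMeasurable f μ) (hg : AEStronglyMeasurable g μ) :
    ∫⁻ ξ, bracketWeight s l ξ * ‖(f ⋆[L, μ] g) ξ‖ₑ ^ 2 ∂μ ≤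
      ‖L‖ₑ ^ 2 * (2 * 4 ^ s * ∫⁻ ξ, (bracketWeight s (0 : ℝ) ξ)⁻¹ ∂μ) *
        ((∫⁻ ξ, bracketWeight s l ξ * ‖f ξ‖ₑ ^ 2 ∂μ) *
          ∫⁻ ξ, bracketWeight s l ξ * ‖g ξ‖ₑ ^ 2 ∂μ) := by
  set w : E → ℝ≥0∞ := bracketWeight s l
  have hw : AEMeasurable w μ := (measurable_bracketWeight s l).aemeasurable
  have hw_zero (ξ : E) : w ξ ≠ 0 := bracketWeight_ne_zero s l ξ
  have hw_top (ξ : E) : w ξ ≠ ∞ := bracketWeight_ne_top s l ξ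
  have hM (ξ : E) : w ξ * (w⁻¹ ⋆ₗ[μ] w⁻¹) ξ ≤
      2 * 4 ^ s * ∫⁻ η, (bracketWeight s (0 : ℝ) η)⁻¹ ∂μ := by
    refine (mul_inv_lconvolution_inv_le hw hw_zero hw_top (bracketWeight_add_le hs l) ξ).trans ?_
    gcongr with η
    exact bracketWeight_zero_le hs l η
  calc ∫⁻ ξ, w ξ * ‖(f ⋆[L, μ] g) ξ‖ₑ ^ 2 ∂μ
      ≤ ∫⁻ ξ, ‖L‖ₑ ^ 2 * (w ξ * ((‖f ·‖ₑ) ⋆ₗ[μ] (‖g ·‖ₑ)) ξ ^ 2) ∂μ := by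
        refine lintegral_mono fun ξ => ?_
        rw [mul_left_comm, ← mul_pow]
        gcongr
        exact enorm_convolution_le L f g μ ξ
    _ = ‖L‖ₑ ^ 2 * ∫⁻ ξ, w ξ * ((‖f ·‖ₑ) ⋆ₗ[μ] (‖g ·‖ₑ)) ξ ^ 2 ∂μ :=
        lintegral_const_mul' _ _ (ENNReal.pow_ne_top enorm_ne_top)
    _ ≤ _ := by
        rw [mul_assoc (‖L‖ₑ ^ 2)]
        gcongr
        exact lintegral_mul_lconvolution_sq_le hf.enorm hg.enorm hw hw hw_zero hw_top hw_zero
          hw_top hM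

lemma sobolevNormSq_convolution_le [Countable Λ] (hs : 0 ≤ s) {u : Λ → E → F₁} {v : Λ → E → F₂}
    (hu : ∀ l, AEStronglyMeasurable (u l) μ) (hv : ∀ l, AEStronglyMeasurable (v l) μ) :
    sobolevNormSq μ s (fun l => u l ⋆[L, μ] v l) ≤
      ‖L‖ₑ ^ 2 * (2 * 4 ^ s * ∫⁻ ξ, (bracketWeight s (0 : ℝ) ξ)⁻¹ ∂μ) *
        (sobolevNormSq μ s u * sobolevNormSq μ s v) := by
  have huv (l : Λ) : AEStronglyMeasurable (u l ⋆[L, μ] v l) μ :=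
    ((hu l).convolution_integrand L (hv l)).integral_prod_right'
  rw [sobolevNormSq_eq_tsum huv, sobolevNormSq_eq_tsum hu, sobolevNormSq_eq_tsum hv]
  refine (ENNReal.tsum_le_tsum fun l =>
    lintegral_bracketWeight_mul_convolution_sq_le L hs l (hu l) (hv l)).trans ?_
  rw [ENNReal.tsum_mul_left]
  gcongr
  exact tsum_mul_le_tsum_mul_tsum _ _

end InvariantMeasure

theorem stmt10_general [NormedSpace ℝ E] [FiniteDimensional ℝ E] [Countable Λ] (μ : Measure E)
    [μ.IsAddHaarMeasure] (hs : Module.finrank ℝ E < 2 * s) :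
    ∃ C > 0, ∀ (u : Λ → E → F₁) (v : Λ → E → F₂),
      (∀ l, AEStronglyMeasurable (u l) μ) → (∀ l, AEStronglyMeasurable (v l) μ) →
      sobolevNormSq μ s (fun l => u l ⋆[L, μ] v l) ≤
        ENNReal.ofReal (C ^ 2) * sobolevNormSq μ s u * sobolevNormSq μ s v := by
  have hs_nonneg : 0 ≤ s := by linarith [(Module.finrank ℝ E).cast_nonneg (α := ℝ)]
  set M : ℝ≥0∞ := ‖L‖ₑ ^ 2 * (2 * 4 ^ s * ∫⁻ ξ : E, (bracketWeight s (0 : ℝ) ξ)⁻¹ ∂μ)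
  have hM : M ≠ ∞ := by
    have hI := lintegral_inv_bracketWeight_zero_ne_top μ hs
    finiteness
  have hMC : M ≤ ENNReal.ofReal (√(M.toReal + 1) ^ 2) := by
    rw [Real.sq_sqrt (by positivity), ENNReal.le_ofReal_iff_toReal_le hM (by positivity)]
    linarith
  refine ⟨√(M.toReal + 1), by positivity, fun u v hu hv => ?_⟩
  rw [mul_assoc]
  exact (sobolevNormSq_convolution_le L hs_nonneg hu hv).trans (by gcongr)

lemma SobNormSq_eq_sobolevNormSq (d dstar : ℕ) (F : EuclideanSpace ℝ (Fin (d - 1)) × ℤ → ℂ) :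
    SobNormSq d dstar F = sobolevNormSq volume dstar fun l ξ => F (ξ, l) := by
  unfold SobNormSq sobolevNormSq
  congr! 4 with ξ l
  rw [ENNReal.ofReal_mul (by positivity), ENNReal.ofReal_pow (by positivity),
    ENNReal.ofReal_pow (norm_nonneg _), ofReal_norm, bracketWeight, ENNReal.rpow_natCast,
    Int.norm_eq_abs, sq_abs]

end Sobolev

/-- **Estimate (3.29)** from the proof of Lemma 3.19 (Fourier side): if `2d* > d − 1`,
the mode-diagonal product (convolution in the continuous variable only, with the same
discrete index) is bounded on `H^{d*}`: `‖w‖ ≤ C ‖u‖ ‖v‖`, stated with squared norms. -/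
theorem stmt10 (d dstar : ℕ) (hd : 2 ≤ d) (hdstar : d - 1 < 2 * dstar) :
    ∃ C > 0, ∀ u v : EuclideanSpace ℝ (Fin (d - 1)) × ℤ → ℂ,
      Measurable u → Measurable v →
      SobNormSq d dstar u ≠ ⊤ → SobNormSq d dstar v ≠ ⊤ →
      SobNormSq d dstar (fun p => ∫ η, u (η, p.2) * v (p.1 - η, p.2))
        ≤ ENNReal.ofReal (C ^ 2) * SobNormSq d dstar u * SobNormSq d dstar v := by
  obtain ⟨C, hC, hbound⟩ := stmt10_general (E := EuclideanSpace ℝ (Fin (d - 1))) (Λ := ℤ)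
    (s := dstar) (ContinuousLinearMap.mul ℝ ℂ) volume (by simpa using mod_cast hdstar)
  refine ⟨C, hC, fun u v hu hv _ _ => ?_⟩
  simp only [SobNormSq_eq_sobolevNormSq]
  exact hbound (fun l ξ => u (ξ, l)) (fun l ξ => v (ξ, l))
    (fun l => (hu.comp measurable_prodMk_right).aestronglyMeasurable)
    (fun l => (hv.comp measurable_prodMk_right).aestronglyMeasurable)

end
end

section
/- Let 0 ≤ r₀ ≤ r₁ ≤ 1 and let (B_r)_{r₀ ≤ r ≤ r₁} be a decreasing scale of Banach spaces: all B_r are subspaces of a common vector space, and for r₀ ≤ r' < r ≤ r₁ one has B_r ⊆ B_{r'} with ‖u‖_{r'} ≤ ‖u‖_r for u ∈ B_r. Let T, R, C, M be positive reals, and let F be a map which, for every r₀ ≤ r' < r ≤ r₁, restricts to a continuous map from [−T,T] × {u ∈ B_r : ‖u‖_r < R} into B_{r'}, and which satisfies: (i) sup_{|t|≤T} ‖F(t,u) − F(t,v)‖_{r'} ≤ (C/(r−r')) ‖u−v‖_r for all r₀ ≤ r' < r ≤ r₁ and all u, v ∈ B_r with ‖u‖_r ≤ R and ‖v‖_r ≤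 R; and (ii) sup_{|t|≤T} ‖F(t,0)‖_r ≤ M/(r₁−r) for every r₀ ≤ r < r₁. Then there exists δ ∈ (0,T) and a unique function u, belonging to C¹((−δ(r₁−r), δ(r₁−r)), B_r) for every r₀ ≤ r ≤ r₁, satisfying sup_{|t|<δ(r₁−r)} ‖u(t)‖_r < R, u(0) = 0, and u'(t) = F(t, u(t)) for |t| < δ(r₁−r). -/
open Set

/-!
The operator `u ↦ ∫₀ᵗ F(s, u(s)) ds` contracts the weighted norm
`sup ‖u(t)‖_r (1 - |t| / (a (r₁ - r)))`, taken over the cones `|t| < a (r₁ - r)`, when `a` is small.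
The loss `C / (r - r')` in the Lipschitz estimate is paid by passing to the level that halves the
distance to the boundary of the cone: it turns `d / (d - |t|)` into `d / (d - |t|)²`, which
integrates back to `d / (d - |t|)`. This already gives uniqueness.

The weighted norm does not control `‖u(t)‖_r < R` up to the boundary, so the Picard iterates are
considered on the shrinking cones of aperture `δ (1 + 2⁻ⁿ)`. On the `(n + 1)`-st cone the weight of
the `n`-th one is at most `4 · 2ⁿ`, and the increments decay like `4⁻ⁿ` in the weighted norm.
-/

open Filter Topology

section MeanValue

variable {E : Type*} [NormedAddCommGroup E] [NormedSpace ℝ E] {f f' : ℝ → E} {d K t : ℝ}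

theorem norm_le_of_norm_deriv_le_of_nonneg {φ φ' : ℝ → ℝ}
    (hf : ∀ s ∈ Ico 0 d, HasDerivAt f (f' s) s) (hφ : ∀ s ∈ Ico 0 d, HasDerivAt φ (φ' s) s)
    (h0 : ‖f 0‖ ≤ φ 0) (bound : ∀ s ∈ Ico 0 d, ‖f' s‖ ≤ φ' s) (ht : t ∈ Ico 0 d) :
    ‖f t‖ ≤ φ t := by
  have hIcc : Icc 0 t ⊆ Ico 0 d := Icc_subset_Ico_right ht.2
  have hIco : Ico 0 t ⊆ Ico 0 d := Ico_subset_Ico_right ht.2.le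
  exact image_norm_le_of_norm_deriv_right_le_deriv_boundary'
    (fun s hs ↦ (hf s (hIcc hs)).continuousAt.continuousWithinAt)
    (fun s hs ↦ (hf s (hIco hs)).hasDerivWithinAt) h0
    (fun s hs ↦ (hφ s (hIcc hs)).continuousAt.continuousWithinAt)
    (fun s hs ↦ (hφ s (hIco hs)).hasDerivWithinAt)
    (fun s hs ↦ bound s (hIco hs)) ⟨ht.1, le_rfl⟩

theorem norm_le_of_norm_deriv_le_abs {φ φ' : ℝ → ℝ}
    (hf : ∀ s, |s| < d → HasDerivAt f (f' s) s) (hφ : ∀ s ∈ Ico 0 d, HasDerivAt φ (φ' s) s)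
    (h0 : ‖f 0‖ ≤ φ 0) (bound : ∀ s, |s| < d → ‖f' s‖ ≤ φ' |s|) (ht : |t| < d) :
    ‖f t‖ ≤ φ |t| := by
  have habs : ∀ s ∈ Ico 0 d, |s| < d := fun s hs ↦ by rw [abs_of_nonneg hs.1]; exact hs.2
  rcases abs_choice t with h | h
  · have hpos := norm_le_of_norm_deriv_le_of_nonneg (fun s hs ↦ hf s (habs s hs)) hφ h0
      (fun s hs ↦ by simpa only [abs_of_nonneg hs.1] using bound s (habs s hs))
      ⟨abs_nonneg t, ht⟩
    rwa [h] at hpos ⊢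
  · have hneg := norm_le_of_norm_deriv_le_of_nonneg (f := fun s ↦ f (-s)) (f' := fun s ↦ -f' (-s))
      (fun s hs ↦ by
        simpa [Function.comp_def] using
          (hf (-s) (by rw [abs_neg]; exact habs s hs)).scomp s (hasDerivAt_neg s))
      hφ (by simpa using h0)
      (fun s hs ↦ by
        simpa [abs_of_nonneg hs.1] using bound (-s) (by rw [abs_neg]; exact habs s hs))
      ⟨abs_nonneg t, ht⟩
    rwa [h, neg_neg, ← h] at hneg

theorem norm_le_mul_div_sub_of_norm_deriv_le (hf : ∀ s, |s| < d → HasDerivAt f (f' s) s)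
    (h0 : ‖f 0‖ ≤ K) (bound : ∀ s, |s| < d → ‖f' s‖ ≤ K * (d / (d - |s|) ^ 2)) (ht : |t| < d) :
    ‖f t‖ ≤ K * (d / (d - |t|)) := by
  have hd : d ≠ 0 := ((abs_nonneg t).trans_lt ht).ne'
  refine norm_le_of_norm_deriv_le_abs (φ := fun s ↦ K * (d / (d - s)))
    (φ' := fun s ↦ K * (d / (d - s) ^ 2)) hf (fun s hs ↦ ?_) (by simpa [hd] using h0) bound ht
  have hsub : HasDerivAt (fun s ↦ d - s) (-1) s := by simpa using (hasDerivAt_id s).const_sub d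
  simpa using ((hasDerivAt_const s d).div hsub (sub_pos.2 hs.2).ne').const_mul K

end MeanValue

/-- A scale of Banach spaces over the interval `[r₀, r₁]`: complete normed subspaces `space r` of
a common vector space, shrinking as `r` grows, with norms `levelNorm r` that grow with `r`. Both
families are indexed by all of `ℝ`, but only their members with `r ∈ [r₀, r₁]` are meaningful, and
`levelNorm r` is meaningful only on `space r`. -/
structure BanachScale (X : Type*) [AddCommGroup X] [Module ℝ X] (r₀ r₁ : ℝ) where
  space : ℝ → Submodule ℝ X
  levelNorm : ℝ → X → ℝ
  left_le_right : r₀ ≤ r₁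
  nonneg : ∀ r ∈ Icc r₀ r₁, ∀ u ∈ space r, 0 ≤ levelNorm r u
  eq_zero_iff : ∀ r ∈ Icc r₀ r₁, ∀ u ∈ space r, (levelNorm r u = 0 ↔ u = 0)
  add_le : ∀ r ∈ Icc r₀ r₁, ∀ u ∈ space r, ∀ v ∈ space r,
    levelNorm r (u + v) ≤ levelNorm r u + levelNorm r v
  smul : ∀ r ∈ Icc r₀ r₁, ∀ c : ℝ, ∀ u ∈ space r, levelNorm r (c • u) = |c| * levelNorm r u
  space_le : ∀ r' r : ℝ, r₀ ≤ r' → r' < r → r ≤ r₁ → space r ≤ space r'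
  levelNorm_le : ∀ r' r : ℝ, r₀ ≤ r' → r' < r → r ≤ r₁ → ∀ u ∈ space r,
    levelNorm r' u ≤ levelNorm r u
  complete : ∀ r ∈ Icc r₀ r₁, ∀ u : ℕ → X, (∀ n, u n ∈ space r) →
    (∀ ε > 0, ∃ K : ℕ, ∀ p ≥ K, ∀ q ≥ K, levelNorm r (u p - u q) < ε) →
    ∃ l ∈ space r, ∀ ε > 0, ∃ K : ℕ, ∀ n ≥ K, levelNorm r (u n - l) < ε

namespace BanachScale

variable {X : Type*} [AddCommGroup X] [Module ℝ X] {r₀ r₁ : ℝ} (S : BanachScale X r₀ r₁)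

section Levels

variable {r r' : Icc r₀ r₁} {x y : X}

/-- The subspace `S.space r` as a Banach space of its own. This is a type synonym, so that the
norm of the scale cannot clash with a norm that `X` may carry. -/
def Level (r : Icc r₀ r₁) : Type _ := S.space r

instance (r : Icc r₀ r₁) : AddCommGroup (S.Level r) := inferInstanceAs (AddCommGroup (S.space r))

instance (r : Icc r₀ r₁) : Module ℝ (S.Level r) := inferInstanceAs (Module ℝ (S.space r))

/-- The inclusion of a level of the scale into the ambient vector space. -/
def inclusion (r : Icc r₀ r₁) : S.Level r →ₗ[ℝ] X := (S.space r).subtype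

theorem inclusion_mem (x : S.Level r) : S.inclusion r x ∈ S.space r := Subtype.property x

theorem inclusion_injective : Function.Injective (S.inclusion r) := Subtype.val_injective

instance (r : Icc r₀ r₁) : Norm (S.Level r) := ⟨fun x ↦ S.levelNorm r (S.inclusion r x)⟩

theorem norm_def (x : S.Level r) : ‖x‖ = S.levelNorm r (S.inclusion r x) := rfl

theorem normedSpaceCore (r : Icc r₀ r₁) : NormedSpace.Core ℝ (S.Level r) where
  norm_nonneg x := S.nonneg r r.2 _ (S.inclusion_mem x)
  norm_smul c x := by
    rw [norm_def, map_smul, S.smul r r.2 c _ (S.inclusion_mem x), Real.norm_eq_abs, norm_def]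
  norm_triangle x y := by
    rw [norm_def, map_add]
    exact S.add_le r r.2 _ (S.inclusion_mem x) _ (S.inclusion_mem y)
  norm_eq_zero_iff x := by
    rw [norm_def, S.eq_zero_iff r r.2 _ (S.inclusion_mem x),
      map_eq_zero_iff _ S.inclusion_injective]

noncomputable instance (r : Icc r₀ r₁) : NormedAddCommGroup (S.Level r) :=
  NormedAddCommGroup.ofCore (S.normedSpaceCore r)

noncomputable instance (r : Icc r₀ r₁) : NormedSpace ℝ (S.Level r) :=
  NormedSpace.ofCore (S.normedSpaceCore r)

instance (r : Icc r₀ r₁) : CompleteSpace (S.Level r) := by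
  refine Metric.complete_of_cauchySeq_tendsto fun u hu ↦ ?_
  have dist_eq (x y : S.Level r) :
      dist x y = S.levelNorm r (S.inclusion r x - S.inclusion r y) := by
    rw [dist_eq_norm, norm_def, map_sub]
  simp only [Metric.cauchySeq_iff, dist_eq] at hu
  obtain ⟨l, hl, hlim⟩ := S.complete r r.2 (fun n ↦ S.inclusion r (u n))
    (fun n ↦ S.inclusion_mem (u n)) hu
  refine ⟨⟨l, hl⟩, Metric.tendsto_atTop.2 fun ε hε ↦ ?_⟩
  obtain ⟨K, hK⟩ := hlim ε hε
  exact ⟨K, fun n hn ↦ (dist_eq _ _).trans_lt (hK n hn)⟩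

/-- A linear retraction of the ambient space onto a level, used to regard `X`-valued functions as
functions into that level. It is an arbitrary algebraic left inverse of the inclusion, hence
meaningful only on `S.space r`. -/
noncomputable def retract (r : Icc r₀ r₁) : X →ₗ[ℝ] S.Level r := (S.inclusion r).leftInverse

theorem retract_inclusion (x : S.Level r) : S.retract r (S.inclusion r x) = x :=
  LinearMap.leftInverse_apply_of_inj (LinearMap.ker_eq_bot.2 S.inclusion_injective) x

theorem inclusion_retract (hx : x ∈ S.space r) : S.inclusion r (S.retract r x) = x :=
  congrArg (S.inclusion r) (S.retract_inclusion ⟨x, hx⟩)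

theorem norm_retract (hx : x ∈ S.space r) : ‖S.retract r x‖ = S.levelNorm r x := by
  rw [norm_def, S.inclusion_retract hx]

theorem retract_injOn : InjOn (S.retract r) (S.space r) :=
  LeftInvOn.injOn fun _ hx ↦ S.inclusion_retract hx

theorem space_antitone (h : r' ≤ r) : S.space r ≤ S.space r' := by
  rcases h.eq_or_lt with rfl | h
  · exact le_rfl
  · exact S.space_le r' r r'.2.1 h r.2.2

theorem levelNorm_mono (h : r' ≤ r) (hx : x ∈ S.space r) : S.levelNorm r' x ≤ S.levelNorm r x := by
  rcases h.eq_or_lt with rfl | h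
  · exact le_rfl
  · exact S.levelNorm_le r' r r'.2.1 h r.2.2 x hx

/-- The continuous inclusion of a smaller space of the scale into a larger one. -/
noncomputable def levelInclusion (h : r' ≤ r) : S.Level r →L[ℝ] S.Level r' :=
  LinearMap.mkContinuous (Submodule.inclusion (S.space_antitone h) : S.space r →ₗ[ℝ] S.space r') 1
    fun x ↦ by rw [one_mul]; exact S.levelNorm_mono h (S.inclusion_mem x)

theorem inclusion_levelInclusion (h : r' ≤ r) (x : S.Level r) :
    S.inclusion r' (S.levelInclusion h x) = S.inclusion r x := rfl

theorem levelInclusion_retract (h : r' ≤ r) (hx : x ∈ S.space r) :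
    S.levelInclusion h (S.retract r x) = S.retract r' x := by
  rw [← S.retract_inclusion (S.levelInclusion h _), S.inclusion_levelInclusion,
    S.inclusion_retract hx]

/-- The smallest index of the scale, whose level contains all the others. -/
def bot : Icc r₀ r₁ := ⟨r₀, left_mem_Icc.2 S.left_le_right⟩

theorem bot_le (r : Icc r₀ r₁) : S.bot ≤ r := r.2.1

theorem hasDerivAt_retract_iff {d t : ℝ} {f : ℝ → X} (hf : ∀ s, |s| < d → f s ∈ S.space r)
    (hy : y ∈ S.space r) (ht : |t| < d) :
    HasDerivAt (fun s ↦ S.retract r (f s)) (S.retract r y) t ↔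
      ∀ ε > 0, ∃ η > 0, ∀ h : ℝ, h ≠ 0 → |h| < η → |t + h| < d →
        S.levelNorm r (f (t + h) - f t - h • y) ≤ ε * |h| := by
  have norm_eq {h : ℝ} (hh : |t + h| < d) :
      ‖S.retract r (f (t + h)) - S.retract r (f t) - h • S.retract r y‖ =
        S.levelNorm r (f (t + h) - f t - h • y) := by
    rw [← map_sub, ← map_smul, ← map_sub, S.norm_retract (sub_mem (sub_mem (hf _ hh) (hf _ ht))
      (Submodule.smul_mem _ h hy))]
  have near : ∀ᶠ h in 𝓝 (0 : ℝ), |t + h| < d :=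
    Tendsto.eventually_lt_const (by simpa using ht) (Continuous.tendsto (by fun_prop) 0)
  simp only [hasDerivAt_iff_isLittleO_nhds_zero, Asymptotics.isLittleO_iff, Real.norm_eq_abs]
  refine forall₂_congr fun ε _ ↦ ⟨fun H ↦ ?_, fun ⟨η, hη, H⟩ ↦ ?_⟩
  · obtain ⟨η, hη, H⟩ := Metric.eventually_nhds_iff.1 H
    exact ⟨η, hη, fun h _ hh hd ↦ norm_eq hd ▸ H (by simpa using hh)⟩
  · filter_upwards [near, Metric.ball_mem_nhds 0 hη] with h hd hh
    rcases eq_or_ne h 0 with rfl | h0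
    · simp
    · rw [norm_eq hd]
      exact H h h0 (by simpa using hh) hd

end Levels

section Cones

variable {a a' K t : ℝ} {r : Icc r₀ r₁} {u u' g g' : ℝ → X}

/-- `u` is a continuous map into every space of the scale along the cone `|t| < a (r₁ - r)`: at
level `r`, on the time interval `|t| < a (r₁ - r)`. -/
def IsConeContinuous (a : ℝ) (u : ℝ → X) : Prop :=
  ∀ (r : Icc r₀ r₁) (t : ℝ), |t| < a * (r₁ - r) →
    u t ∈ S.space r ∧ ContinuousAt (fun s ↦ S.retract r (u s)) t

/-- `u` maps the cone `|t| < a (r₁ - r)` into the scale and has derivative `g` there at every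
level. -/
def HasConeDeriv (a : ℝ) (u g : ℝ → X) : Prop :=
  ∀ (r : Icc r₀ r₁) (t : ℝ), |t| < a * (r₁ - r) →
    u t ∈ S.space r ∧ HasDerivAt (fun s ↦ S.retract r (u s)) (S.retract r (g t)) t

/-- `u` maps the cone `|t| < a (r₁ - r)` into the open balls of radius `R` of the scale. -/
def MapsConeToBall (a R : ℝ) (u : ℝ → X) : Prop :=
  ∀ (r : Icc r₀ r₁) (t : ℝ), |t| < a * (r₁ - r) → u t ∈ S.space r ∧ ‖S.retract r (u t)‖ < R

/-- `K` bounds `u` in the weighted norm of the cone `|t| < a (r₁ - r)`, whose weight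
`d / (d - |t|)` with `d = a (r₁ - r)` blows up at the boundary. -/
def HasConeBound (a K : ℝ) (u : ℝ → X) : Prop :=
  ∀ (r : Icc r₀ r₁) (t : ℝ), |t| < a * (r₁ - r) →
    ‖S.retract r (u t)‖ ≤ K * (a * (r₁ - r) / (a * (r₁ - r) - |t|))

theorem lt_cone_of_le (h : a' ≤ a) (ht : |t| < a' * (r₁ - r)) : |t| < a * (r₁ - r) :=
  ht.trans_le (mul_le_mul_of_nonneg_right h (sub_nonneg.2 r.2.2))

theorem exists_intermediate_level (ha : 0 < a) (ht : |t| < a * (r₁ - r)) :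
    ∃ r' : Icc r₀ r₁, r < r' ∧ |t| < a * (r₁ - r') ∧
      a * (r' - r) = (a * (r₁ - r) - |t|) / 2 := by
  set h := (a * (r₁ - r) - |t|) / (2 * a) with hh
  have ah : a * h = (a * (r₁ - r) - |t|) / 2 := by rw [hh]; field_simp
  have h_pos : 0 < h := div_pos (sub_pos.2 ht) (by positivity)
  have h_le : h ≤ r₁ - r := le_of_mul_le_mul_left (by linarith [abs_nonneg t]) ha
  refine ⟨⟨r + h, by linarith [r.2.1], by linarith⟩, ?_, ?_, ?_⟩
  · exact Subtype.coe_lt_coe.1 (by simpa using h_pos)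
  · linarith
  · linarith

variable {S}

theorem IsConeContinuous.mono (h : a' ≤ a) (hu : S.IsConeContinuous a u) :
    S.IsConeContinuous a' u := fun r t ht ↦ hu r t (lt_cone_of_le h ht)

theorem HasConeDeriv.mono (h : a' ≤ a) (hu : S.HasConeDeriv a u g) : S.HasConeDeriv a' u g :=
  fun r t ht ↦ hu r t (lt_cone_of_le h ht)

theorem HasConeDeriv.sub (hu : S.HasConeDeriv a u g) (hu' : S.HasConeDeriv a u' g') :
    S.HasConeDeriv a (u - u') (g - g') := fun r t ht ↦
  ⟨sub_mem (hu r t ht).1 (hu' r t ht).1, by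
    simpa only [Pi.sub_apply, map_sub] using (hu r t ht).2.fun_sub (hu' r t ht).2⟩

theorem HasConeDeriv.isConeContinuous (hu : S.HasConeDeriv a u g) : S.IsConeContinuous a u :=
  fun r t ht ↦ ⟨(hu r t ht).1, (hu r t ht).2.continuousAt⟩

theorem MapsConeToBall.mono {R R' : ℝ} (h : a' ≤ a) (hR : R' ≤ R) (hu : S.MapsConeToBall a R' u) :
    S.MapsConeToBall a' R u := fun r t ht ↦
  (hu r t (lt_cone_of_le h ht)).imp_right hR.trans_lt'

theorem HasConeBound.mono (h : a' ≤ a) (hK : 0 ≤ K) (hu : S.HasConeBound a K u) :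
    S.HasConeBound a' K u := by
  intro r t ht
  have hle : a' * (r₁ - r) ≤ a * (r₁ - r) :=
    mul_le_mul_of_nonneg_right h (sub_nonneg.2 r.2.2)
  refine (hu r t (ht.trans_le hle)).trans (mul_le_mul_of_nonneg_left ?_ hK)
  rw [div_le_div_iff₀ (by linarith) (by linarith)]
  linarith [mul_le_mul_of_nonneg_right hle (abs_nonneg t)]

theorem HasConeBound.mono_const {K' : ℝ} (h : K ≤ K') (hu : S.HasConeBound a K u) :
    S.HasConeBound a K' u := fun r t ht ↦
  (hu r t ht).trans <| mul_le_mul_of_nonneg_right h <|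
    div_nonneg ((abs_nonneg t).trans ht.le) (sub_pos.2 ht).le

theorem hasConeBound_of_norm_le (h : ∀ (r : Icc r₀ r₁) (t : ℝ), |t| < a * (r₁ - r) →
    ‖S.retract r (u t)‖ ≤ K) : S.HasConeBound a K u := fun r t ht ↦
  (h r t ht).trans <| le_mul_of_one_le_right ((norm_nonneg _).trans (h r t ht)) <|
    (one_le_div (sub_pos.2 ht)).2 (by linarith [abs_nonneg t])

theorem HasConeDeriv.hasConeBound (hu : S.HasConeDeriv a u g) (h0 : u 0 = 0) (hK : 0 ≤ K)
    (bound : ∀ (r : Icc r₀ r₁) (t : ℝ), |t| < a * (r₁ - r) →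
      ‖S.retract r (g t)‖ ≤ K * (a * (r₁ - r) / (a * (r₁ - r) - |t|) ^ 2)) :
    S.HasConeBound a K u := fun r t ht ↦
  norm_le_mul_div_sub_of_norm_deriv_le (fun s hs ↦ (hu r s hs).2)
    (by rwa [h0, map_zero, norm_zero]) (bound r) ht

end Cones

section Primitive

variable {a t : ℝ} {r : Icc r₀ r₁} {g : ℝ → X}

/-- The primitive of `g` that vanishes at `0`, as a Bochner integral at the bottom level. -/
noncomputable def primitive (g : ℝ → X) (t : ℝ) : X :=
  S.inclusion S.bot (∫ s in (0 : ℝ)..t, S.retract S.bot (g s))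

theorem primitive_zero : S.primitive g 0 = 0 := by
  rw [primitive, intervalIntegral.integral_same, map_zero]

variable {S}

theorem IsConeContinuous.continuousOn (hg : S.IsConeContinuous a g) (r : Icc r₀ r₁) :
    ContinuousOn (fun s ↦ S.retract r (g s)) {s | |s| < a * (r₁ - r)} :=
  fun s hs ↦ (hg r s hs).2.continuousWithinAt

theorem abs_lt_of_mem_uIcc {d s : ℝ} (ht : |t| < d) (hs : s ∈ uIcc 0 t) : |s| < d := by
  simpa using (abs_sub_left_of_mem_uIcc hs).trans_lt (by simpa using ht)

theorem IsConeContinuous.intervalIntegrable (hg : S.IsConeContinuous a g)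
    (ht : |t| < a * (r₁ - r)) :
    IntervalIntegrable (fun s ↦ S.retract r (g s)) MeasureTheory.volume 0 t :=
  ((hg.continuousOn r).mono fun _ hs ↦ abs_lt_of_mem_uIcc ht hs).intervalIntegrable

theorem IsConeContinuous.primitive_eq (hg : S.IsConeContinuous a g) (ht : |t| < a * (r₁ - r)) :
    S.primitive g t = S.inclusion r (∫ s in (0 : ℝ)..t, S.retract r (g s)) := by
  have hbot : ∫ s in (0 : ℝ)..t, S.retract S.bot (g s) =
      ∫ s in (0 : ℝ)..t, S.levelInclusion (S.bot_le r) (S.retract r (g s)) :=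
    intervalIntegral.integral_congr fun s hs ↦
      (S.levelInclusion_retract _ (hg r s (abs_lt_of_mem_uIcc ht hs)).1).symm
  rw [primitive, hbot, ContinuousLinearMap.intervalIntegral_comp_comm _ (hg.intervalIntegrable ht),
    inclusion_levelInclusion]

theorem IsConeContinuous.hasConeDeriv_primitive (hg : S.IsConeContinuous a g) :
    S.HasConeDeriv a (S.primitive g) g := by
  intro r t ht
  have hopen : IsOpen {s : ℝ | |s| < a * (r₁ - r)} := isOpen_lt continuous_abs continuous_const
  have hderiv : HasDerivAt (fun x ↦ ∫ s in (0 : ℝ)..x, S.retract r (g s)) (S.retract r (g t)) t :=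
    intervalIntegral.integral_hasDerivAt_right (hg.intervalIntegrable ht)
      ((hg.continuousOn r).stronglyMeasurableAtFilter hopen t ht) (hg r t ht).2
  refine ⟨hg.primitive_eq ht ▸ S.inclusion_mem _, hderiv.congr_of_eventuallyEq ?_⟩
  filter_upwards [hopen.mem_nhds ht] with s hs
  rw [hg.primitive_eq hs, retract_inclusion]

end Primitive

section Limit

variable {S} {a A : ℝ} {U : ℕ → ℝ → X}

theorem exists_cone_limit (h0 : ∀ n, U n 0 = 0)
    (hU : ∀ n (r : Icc r₀ r₁) (t : ℝ), |t| < a * (r₁ - r) → U n t ∈ S.space r)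
    (hA : ∀ n (r : Icc r₀ r₁) (t : ℝ), |t| < a * (r₁ - r) →
      ‖S.retract r (U (n + 1) t - U n t)‖ ≤ A / 2 / 2 ^ n) :
    ∃ u : ℝ → X, u 0 = 0 ∧ ∀ (r : Icc r₀ r₁) (t : ℝ), |t| < a * (r₁ - r) →
      u t ∈ S.space r ∧ ∀ n, ‖S.retract r (U n t - u t)‖ ≤ A / 2 ^ n := by
  refine ⟨fun t ↦ S.inclusion S.bot (limUnder atTop fun n ↦ S.retract S.bot (U n t)), ?_,
    fun r t ht ↦ ?_⟩
  · simp only [h0, map_zero, tendsto_const_nhds.limUnder_eq]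
  have hdist : ∀ n, dist (S.retract r (U n t)) (S.retract r (U (n + 1) t)) ≤ A / 2 / 2 ^ n :=
    fun n ↦ by rw [dist_comm, dist_eq_norm, ← map_sub]; exact hA n r t ht
  obtain ⟨l, hl⟩ := cauchySeq_tendsto_of_complete (cauchySeq_of_le_geometric_two hdist)
  have hbot : Tendsto (fun n ↦ S.retract S.bot (U n t)) atTop
      (𝓝 (S.levelInclusion (S.bot_le r) l)) := by
    simpa only [Function.comp_def, S.levelInclusion_retract _ (hU _ r t ht)] using
      ((S.levelInclusion (S.bot_le r)).continuous.tendsto l).comp hl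
  simp only [hbot.limUnder_eq, inclusion_levelInclusion]
  refine ⟨S.inclusion_mem l, fun n ↦ ?_⟩
  rw [map_sub, retract_inclusion, ← dist_eq_norm]
  exact dist_le_of_le_geometric_two_of_tendsto hdist hl n

end Limit

/-- The hypotheses of the abstract Cauchy–Kovalevskaya theorem on the regularity of `F`: for
`r' < r` it is a continuous map from `[-T, T] × {u ∈ S.space r | ‖u‖ < R}` to `S.space r'`, and it
is Lipschitz in `u` with a constant `C / (r - r')` that is singular as `r' → r`. -/
structure IsSingularLipschitz (T R C : ℝ) (F : ℝ → X → X) : Prop where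
  mem : ∀ r' r : ℝ, r₀ ≤ r' → r' < r → r ≤ r₁ → ∀ t ∈ Icc (-T) T,
    ∀ u ∈ S.space r, S.levelNorm r u < R → F t u ∈ S.space r'
  continuous : ∀ r' r : ℝ, r₀ ≤ r' → r' < r → r ≤ r₁ → ∀ t ∈ Icc (-T) T,
    ∀ u ∈ S.space r, S.levelNorm r u < R → ∀ ε > 0, ∃ η > 0, ∀ t' ∈ Icc (-T) T,
      ∀ u' ∈ S.space r, S.levelNorm r u' < R → |t' - t| < η → S.levelNorm r (u' - u) < η →
        S.levelNorm r' (F t' u' - F t u) < ε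
  lipschitz : ∀ r' r : ℝ, r₀ ≤ r' → r' < r → r ≤ r₁ → ∀ t ∈ Icc (-T) T,
    ∀ u ∈ S.space r, ∀ v ∈ S.space r, S.levelNorm r u ≤ R → S.levelNorm r v ≤ R →
      S.levelNorm r' (F t u - F t v) ≤ C / (r - r') * S.levelNorm r (u - v)

section SingularLipschitz

variable {S} {T R C a K t : ℝ} {r : Icc r₀ r₁} {F : ℝ → X → X} {u v u' v' : ℝ → X}

theorem mem_Icc_of_abs_lt_cone (ha : 0 < a) (haT : a * (r₁ - r₀) ≤ T) (ht : |t| < a * (r₁ - r)) :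
    t ∈ Icc (-T) T :=
  abs_le.1 <| ht.le.trans <| haT.trans' <|
    mul_le_mul_of_nonneg_left (sub_le_sub_left r.2.1 r₁) ha.le

theorem IsSingularLipschitz.comp_mem (hF : S.IsSingularLipschitz T R C F) (ha : 0 < a)
    (haT : a * (r₁ - r₀) ≤ T) (hu : S.MapsConeToBall a R u) (ht : |t| < a * (r₁ - r)) :
    F t (u t) ∈ S.space r := by
  obtain ⟨r', hr, ht', -⟩ := exists_intermediate_level ha ht
  obtain ⟨hmem, hR⟩ := hu r' t ht'
  exact hF.mem r r' r.2.1 hr r'.2.2 t (mem_Icc_of_abs_lt_cone ha haT ht) _ hmem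
    (S.norm_retract hmem ▸ hR)

theorem IsSingularLipschitz.comp_isConeContinuous (hF : S.IsSingularLipschitz T R C F)
    (ha : 0 < a) (haT : a * (r₁ - r₀) ≤ T) (hu : S.MapsConeToBall a R u)
    (hcont : S.IsConeContinuous a u) : S.IsConeContinuous a fun t ↦ F t (u t) := by
  intro r t ht
  refine ⟨hF.comp_mem ha haT hu ht, Metric.tendsto_nhds.2 fun ε hε ↦ ?_⟩
  obtain ⟨r', hr, ht', -⟩ := exists_intermediate_level ha ht
  have ball {s : ℝ} (hs : |s| < a * (r₁ - r')) : S.levelNorm r' (u s) < R :=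
    S.norm_retract (hu r' s hs).1 ▸ (hu r' s hs).2
  obtain ⟨η, hη, hFη⟩ := hF.continuous r r' r.2.1 hr r'.2.2 t (mem_Icc_of_abs_lt_cone ha haT ht)
    (u t) (hu r' t ht').1 (ball ht') ε hε
  filter_upwards [continuous_abs.continuousAt.eventually_lt_const ht,
    continuous_abs.continuousAt.eventually_lt_const ht', Metric.ball_mem_nhds t hη,
    Metric.tendsto_nhds.1 (hcont r' t ht').2 η hη] with s hs hs' hst hdist
  rw [dist_eq_norm, ← map_sub, S.norm_retract (sub_mem (hu r' s hs').1 (hu r' t ht').1)] at hdist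
  rw [dist_eq_norm, ← map_sub,
    S.norm_retract (sub_mem (hF.comp_mem ha haT hu hs) (hF.comp_mem ha haT hu ht))]
  exact hFη s (mem_Icc_of_abs_lt_cone ha haT hs) (u s) (hu r' s hs').1 (ball hs') hst hdist

theorem IsSingularLipschitz.norm_comp_sub_le (hF : S.IsSingularLipschitz T R C F) (ha : 0 < a)
    (haT : a * (r₁ - r₀) ≤ T) (hu : S.MapsConeToBall a R u) (hv : S.MapsConeToBall a R v)
    {r' : Icc r₀ r₁} (hr : r < r') (ht : |t| < a * (r₁ - r')) :
    ‖S.retract r (F t (u t) - F t (v t))‖ ≤ C / (r' - r) * ‖S.retract r' (u t - v t)‖ := by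
  have ht' : |t| < a * (r₁ - r) := ht.trans_le (by gcongr)
  obtain ⟨hut, huR⟩ := hu r' t ht
  obtain ⟨hvt, hvR⟩ := hv r' t ht
  rw [S.norm_retract (sub_mem hut hvt),
    S.norm_retract (sub_mem (hF.comp_mem ha haT hu ht') (hF.comp_mem ha haT hv ht'))]
  rw [S.norm_retract hut] at huR
  rw [S.norm_retract hvt] at hvR
  exact hF.lipschitz r r' r.2.1 hr r'.2.2 t (mem_Icc_of_abs_lt_cone ha haT ht) _ hut _ hvt
    huR.le hvR.le

theorem IsSingularLipschitz.norm_comp_sub_le_of_hasConeBound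
    (hF : S.IsSingularLipschitz T R C F) (hC : 0 ≤ C) (ha : 0 < a) (haT : a * (r₁ - r₀) ≤ T)
    (hu : S.MapsConeToBall a R u) (hv : S.MapsConeToBall a R v) (hK : 0 ≤ K)
    (huv : S.HasConeBound a K (u - v)) (ht : |t| < a * (r₁ - r)) :
    ‖S.retract r (F t (u t) - F t (v t))‖ ≤
      4 * a * C * K * (a * (r₁ - r) / (a * (r₁ - r) - |t|) ^ 2) := by
  obtain ⟨r', hr, ht', half⟩ := exists_intermediate_level ha ht
  have gap : 0 < (r' - r : ℝ) := sub_pos.2 hr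
  have dist_eq : a * (r₁ - r) - |t| = 2 * (a * (r' - r)) := by linarith
  have dist_eq' : a * (r₁ - r') - |t| = a * (r' - r) := by linarith
  calc ‖S.retract r (F t (u t) - F t (v t))‖
    _ ≤ C / (r' - r) * ‖S.retract r' (u t - v t)‖ := hF.norm_comp_sub_le ha haT hu hv hr ht'
    _ ≤ C / (r' - r) * (K * (a * (r₁ - r') / (a * (r₁ - r') - |t|))) := by
      gcongr
      exact huv r' t ht'
    _ ≤ C / (r' - r) * (K * (a * (r₁ - r) / (a * (r₁ - r') - |t|))) := by
      rw [dist_eq']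
      gcongr
    _ = 4 * a * C * K * (a * (r₁ - r) / (a * (r₁ - r) - |t|) ^ 2) := by
      rw [dist_eq, dist_eq']
      field_simp
      norm_num

theorem IsSingularLipschitz.hasConeBound_sub (hF : S.IsSingularLipschitz T R C F) (hC : 0 ≤ C)
    (ha : 0 < a) (haT : a * (r₁ - r₀) ≤ T) (hu : S.MapsConeToBall a R u)
    (hv : S.MapsConeToBall a R v) (hu' : S.HasConeDeriv a u' fun t ↦ F t (u t))
    (hv' : S.HasConeDeriv a v' fun t ↦ F t (v t)) (h0 : u' 0 = v' 0) (hK : 0 ≤ K)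
    (huv : S.HasConeBound a K (u - v)) : S.HasConeBound a (4 * a * C * K) (u' - v') :=
  (hu'.sub hv').hasConeBound (sub_eq_zero.2 h0) (by positivity) fun _ _ ht ↦
    hF.norm_comp_sub_le_of_hasConeBound hC ha haT hu hv hK huv ht

theorem IsSingularLipschitz.eq_of_hasConeDeriv (hF : S.IsSingularLipschitz T R C F) (hC : 0 ≤ C)
    (ha : 0 < a) (haT : a * (r₁ - r₀) ≤ T) (haC : 4 * a * C < 1) (hu : S.MapsConeToBall a R u)
    (hv : S.MapsConeToBall a R v) (hu' : S.HasConeDeriv a u fun t ↦ F t (u t))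
    (hv' : S.HasConeDeriv a v fun t ↦ F t (v t)) (h0 : u 0 = v 0) (ht : |t| < a * (r₁ - r)) :
    u t = v t := by
  have hR : 0 ≤ R := (norm_nonneg _).trans (hu r t ht).2.le
  have iterate (n : ℕ) : S.HasConeBound a ((4 * a * C) ^ n * (R + R)) (u - v) := by
    induction n with
    | zero =>
      rw [pow_zero, one_mul]
      exact hasConeBound_of_norm_le fun r t ht ↦ by
        rw [Pi.sub_apply, map_sub]
        exact norm_sub_le_of_le (hu r t ht).2.le (hv r t ht).2.le
    | succ n ih =>
      rw [pow_succ', mul_assoc]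
      exact hF.hasConeBound_sub hC ha haT hu hv hu' hv' h0 (by positivity) ih
  have limit : Tendsto (fun n ↦ (4 * a * C) ^ n * (R + R) *
      (a * (r₁ - r) / (a * (r₁ - r) - |t|))) atTop (𝓝 0) := by
    simpa using
      ((tendsto_pow_atTop_nhds_zero_of_lt_one (by positivity) haC).mul_const _).mul_const _
  refine S.retract_injOn (hu r t ht).1 (hv r t ht).1 (sub_eq_zero.1 ?_)
  rw [← map_sub]
  exact norm_le_zero_iff.1 (ge_of_tendsto' limit fun n ↦ iterate n r t ht)

theorem IsSingularLipschitz.hasConeDeriv_of_tendsto (hF : S.IsSingularLipschitz T R C F)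
    (hC : 0 ≤ C) (ha : 0 < a) (haT : a * (r₁ - r₀) ≤ T) {U : ℕ → ℝ → X} {e : ℕ → ℝ}
    (hU : ∀ n, S.MapsConeToBall a R (U n)) (hu : S.MapsConeToBall a R u)
    (hderiv : ∀ n, S.HasConeDeriv a (U (n + 1)) fun t ↦ F t (U n t))
    (he : Tendsto e atTop (𝓝 0)) (hUu : ∀ n (r : Icc r₀ r₁) (t : ℝ), |t| < a * (r₁ - r) →
      ‖S.retract r (U n t - u t)‖ ≤ e n) :
    S.HasConeDeriv a u fun t ↦ F t (u t) := by
  intro r t ht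
  obtain ⟨r', hr, ht', -⟩ := exists_intermediate_level ha ht
  have cone_le {s : ℝ} (hs : |s| < a * (r₁ - r')) : |s| < a * (r₁ - r) :=
    hs.trans_le (by gcongr)
  refine ⟨(hu r t ht).1, hasDerivAt_of_tendstoUniformlyOn (l := atTop)
    (f := fun n s ↦ S.retract r (U (n + 1) s)) (f' := fun n s ↦ S.retract r (F s (U n s)))
    (g' := fun s ↦ S.retract r (F s (u s)))
    (isOpen_lt continuous_abs continuous_const : IsOpen {s : ℝ | |s| < a * (r₁ - r')}) ?_
    (.of_forall fun n s hs ↦ (hderiv n r s (cone_le hs)).2) (fun s hs ↦ ?_) ht'⟩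
  · have he' : Tendsto (fun n ↦ C / (r' - r) * e n) atTop (𝓝 0) := by
      simpa using he.const_mul (C / (r' - r : ℝ))
    refine Metric.tendstoUniformlyOn_iff.2 fun ε hε ↦ ?_
    filter_upwards [he'.eventually_lt_const hε] with n hn s hs
    rw [dist_comm, dist_eq_norm, ← map_sub]
    refine (hF.norm_comp_sub_le ha haT (hU n) hu hr hs).trans_lt (hn.trans_le' ?_)
    exact mul_le_mul_of_nonneg_left (hUu n r' s hs) (div_nonneg hC (sub_nonneg.2 hr.le))
  · refine tendsto_iff_norm_sub_tendsto_zero.2 (squeeze_zero (fun _ ↦ norm_nonneg _) (fun n ↦ ?_)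
      ((tendsto_add_atTop_iff_nat 1).2 he))
    rw [← map_sub]
    exact hUu (n + 1) r s (cone_le hs)

end SingularLipschitz

section Picard

/-- The Picard iterates of `u' = F(t, u)`, `u 0 = 0`. -/
noncomputable def picard (F : ℝ → X → X) : ℕ → ℝ → X
  | 0 => 0
  | n + 1 => S.primitive fun t ↦ F t (picard F n t)

/-- The aperture of the cone on which the `n`-th Picard iterate is controlled; it decreases to
`δ`. -/
noncomputable def aperture (δ : ℝ) (n : ℕ) : ℝ := δ * (1 + (1 / 2) ^ n)

variable {S} {T R C M a δ t : ℝ} {n : ℕ} {F : ℝ → X → X}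

theorem picard_apply_zero (n : ℕ) : S.picard F n 0 = 0 := by
  cases n with
  | zero => rfl
  | succ n => exact S.primitive_zero

theorem le_aperture (hδ : 0 ≤ δ) (n : ℕ) : δ ≤ aperture δ n :=
  le_mul_of_one_le_right hδ (le_add_of_nonneg_right (by positivity))

theorem aperture_pos (hδ : 0 < δ) (n : ℕ) : 0 < aperture δ n := hδ.trans_le (le_aperture hδ.le n)

theorem aperture_antitone (hδ : 0 ≤ δ) : Antitone (aperture δ) := fun m n h ↦ by
  unfold aperture
  gcongr ?_ * (1 + ?_)
  exact pow_le_pow_of_le_one (by norm_num) (by norm_num) h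

theorem aperture_zero : aperture δ 0 = 2 * δ := by
  rw [aperture, pow_zero, one_add_one_eq_two, mul_comm]

theorem aperture_le (hδ : 0 ≤ δ) (n : ℕ) : aperture δ n ≤ 2 * δ :=
  aperture_zero (δ := δ) ▸ aperture_antitone hδ n.zero_le

theorem aperture_mul_le (hδ : 0 ≤ δ) (h : r₀ ≤ r₁) (hδT : 2 * δ * (r₁ - r₀) ≤ T) (n : ℕ) :
    aperture δ n * (r₁ - r₀) ≤ T :=
  hδT.trans' (mul_le_mul_of_nonneg_right (aperture_le hδ n) (sub_nonneg.2 h))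

theorem aperture_sub_aperture_succ : aperture δ n - aperture δ (n + 1) = δ / 2 / 2 ^ n := by
  rw [aperture, aperture, pow_succ, one_div_pow]
  ring

theorem aperture_weight_le (hδ : 0 < δ) {ρ : ℝ} (ht : |t| < aperture δ (n + 1) * ρ) :
    aperture δ n * ρ / (aperture δ n * ρ - |t|) ≤ 4 * 2 ^ n := by
  have hρ : 0 < ρ := pos_of_mul_pos_right ((abs_nonneg t).trans_lt ht)
    (aperture_pos hδ _).le
  have margin : δ / 2 / 2 ^ n * ρ ≤ aperture δ n * ρ - |t| := by
    rw [← aperture_sub_aperture_succ, sub_mul]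
    exact sub_le_sub_left ht.le _
  calc aperture δ n * ρ / (aperture δ n * ρ - |t|)
    _ ≤ 2 * δ * ρ / (δ / 2 / 2 ^ n * ρ) := by
      gcongr
      exact aperture_le hδ.le n
    _ = 4 * 2 ^ n := by
      field_simp
      norm_num

theorem IsSingularLipschitz.hasConeDeriv_picard_succ (hF : S.IsSingularLipschitz T R C F)
    (ha : 0 < a) (haT : a * (r₁ - r₀) ≤ T) (hmaps : S.MapsConeToBall a R (S.picard F n))
    (hcont : S.IsConeContinuous a (S.picard F n)) :
    S.HasConeDeriv a (S.picard F (n + 1)) fun t ↦ F t (S.picard F n t) :=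
  (hF.comp_isConeContinuous ha haT hmaps hcont).hasConeDeriv_primitive

theorem mul_one_sub_half_pow_le (hR : 0 ≤ R) (n : ℕ) : R * (1 - (1 / 2) ^ n) ≤ R :=
  mul_le_of_le_one_right hR (sub_le_self _ (by positivity))

/-- The control on the `n`-th Picard iterate that is propagated by induction. On the next cone the
weight is at most `4 * 2 ^ n`, so the factor `(1 / 4) ^ n` makes the increments summable there. -/
structure PicardBounds (S : BanachScale X r₀ r₁) (R M δ : ℝ) (F : ℝ → X → X) (n : ℕ) : Prop where
  isConeContinuous : S.IsConeContinuous (aperture δ n) (S.picard F n)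
  mapsConeToBall : S.MapsConeToBall (aperture δ n) (R * (1 - (1 / 2) ^ (n + 1))) (S.picard F n)
  increment : S.HasConeBound (aperture δ n) (2 * M * δ * (1 / 4) ^ n)
    (S.picard F (n + 1) - S.picard F n)

theorem PicardBounds.mapsConeToBall_radius (h : S.PicardBounds R M δ F n) (hR : 0 ≤ R) :
    S.MapsConeToBall (aperture δ n) R (S.picard F n) :=
  h.mapsConeToBall.mono le_rfl (mul_one_sub_half_pow_le hR _)

theorem PicardBounds.hasConeDeriv (h : S.PicardBounds R M δ F n)
    (hF : S.IsSingularLipschitz T R C F) (hR : 0 ≤ R) (hδ : 0 < δ)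
    (hδT : 2 * δ * (r₁ - r₀) ≤ T) :
    S.HasConeDeriv (aperture δ n) (S.picard F (n + 1)) fun t ↦ F t (S.picard F n t) :=
  hF.hasConeDeriv_picard_succ (aperture_pos hδ n) (aperture_mul_le hδ.le S.left_le_right hδT n)
    (h.mapsConeToBall_radius hR) h.isConeContinuous

theorem PicardBounds.norm_increment_le (h : S.PicardBounds R M δ F n) (hM : 0 ≤ M) (hδ : 0 < δ)
    (hδM : 32 * δ * M ≤ R) {r : Icc r₀ r₁} (ht : |t| < aperture δ (n + 1) * (r₁ - r)) :
    ‖S.retract r (S.picard F (n + 1) t - S.picard F n t)‖ ≤ R / 2 / 2 / 2 ^ n := by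
  have four_pow : (4 : ℝ) ^ n = 2 ^ n * 2 ^ n := by rw [← mul_pow]; norm_num
  calc ‖S.retract r (S.picard F (n + 1) t - S.picard F n t)‖
    _ ≤ 2 * M * δ * (1 / 4) ^ n *
          (aperture δ n * (r₁ - r) / (aperture δ n * (r₁ - r) - |t|)) :=
      h.increment r t (lt_cone_of_le (aperture_antitone hδ.le n.le_succ) ht)
    _ ≤ 2 * M * δ * (1 / 4) ^ n * (4 * 2 ^ n) := by
      gcongr
      exact aperture_weight_le hδ ht
    _ = 32 * δ * M / 2 / 2 / 2 ^ n := by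
      rw [one_div_pow, four_pow]
      field_simp
      ring
    _ ≤ R / 2 / 2 / 2 ^ n := by gcongr

theorem picardBounds_zero (hF : S.IsSingularLipschitz T R C F) (hR : 0 < R) (hM : 0 ≤ M)
    (hF0 : ∀ r : ℝ, r₀ ≤ r → r < r₁ → ∀ t ∈ Icc (-T) T, S.levelNorm r (F t 0) ≤ M / (r₁ - r))
    (hδ : 0 < δ) (hδT : 2 * δ * (r₁ - r₀) ≤ T) : S.PicardBounds R M δ F 0 := by
  have hball {R' : ℝ} (hR' : 0 < R') : S.MapsConeToBall (2 * δ) R' 0 := fun r t _ ↦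
    ⟨zero_mem _, by simpa using hR'⟩
  have hcont : S.IsConeContinuous (2 * δ) 0 := fun r t _ ↦
    ⟨zero_mem _, by simpa using continuousAt_const⟩
  constructor <;> rw [aperture_zero]
  · exact hcont
  · exact hball (mul_pos hR (by norm_num))
  rw [pow_zero, mul_one, picard, sub_zero]
  have hderiv : S.HasConeDeriv (2 * δ) (S.picard F 1) fun t ↦ F t 0 :=
    hF.hasConeDeriv_picard_succ (by positivity) hδT (hball hR) hcont
  refine hderiv.hasConeBound (picard_apply_zero 1) (by positivity) fun r t ht ↦ ?_
  have hr : 0 < r₁ - (r : ℝ) := pos_of_mul_pos_right ((abs_nonneg t).trans_lt ht) (by positivity)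
  have hmem : F t 0 ∈ S.space r := hF.comp_mem (by positivity) hδT (hball hR) ht
  calc ‖S.retract r (F t 0)‖
    _ ≤ M / (r₁ - r) := by
      rw [S.norm_retract hmem]
      exact hF0 r r.2.1 (sub_pos.1 hr) t (mem_Icc_of_abs_lt_cone (by positivity) hδT ht)
    _ = 2 * M * δ * (2 * δ * (r₁ - r) / (2 * δ * (r₁ - r)) ^ 2) := by field_simp
    _ ≤ 2 * M * δ * (2 * δ * (r₁ - r) / (2 * δ * (r₁ - r) - |t|) ^ 2) := by
      have := sub_pos.2 ht
      gcongr
      exact sub_le_self _ (abs_nonneg t)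

theorem PicardBounds.mapsConeToBall_succ (h : S.PicardBounds R M δ F n) (hM : 0 ≤ M) (hδ : 0 < δ)
    (hδM : 32 * δ * M ≤ R) (hcont : S.IsConeContinuous (aperture δ (n + 1)) (S.picard F (n + 1))) :
    S.MapsConeToBall (aperture δ (n + 1)) (R * (1 - (1 / 2) ^ (n + 2))) (S.picard F (n + 1)) := by
  intro r t ht
  refine ⟨(hcont r t ht).1, ?_⟩
  have hn := h.mapsConeToBall r t (lt_cone_of_le (aperture_antitone hδ.le n.le_succ) ht)
  calc ‖S.retract r (S.picard F (n + 1) t)‖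
    _ ≤ ‖S.retract r (S.picard F n t)‖ +
          ‖S.retract r (S.picard F (n + 1) t - S.picard F n t)‖ := by
      rw [map_sub]
      exact norm_le_norm_add_norm_sub' _ _
    _ < R * (1 - (1 / 2) ^ (n + 1)) + R / 2 / 2 / 2 ^ n :=
      add_lt_add_of_lt_of_le hn.2 (h.norm_increment_le hM hδ hδM ht)
    _ = R * (1 - (1 / 2) ^ (n + 2)) := by
      rw [one_div_pow, one_div_pow]
      field_simp
      ring

theorem PicardBounds.succ (h : S.PicardBounds R M δ F n) (hF : S.IsSingularLipschitz T R C F)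
    (hR : 0 ≤ R) (hC : 0 ≤ C) (hM : 0 ≤ M) (hδ : 0 < δ) (hδT : 2 * δ * (r₁ - r₀) ≤ T)
    (hδC : 32 * δ * C ≤ 1) (hδM : 32 * δ * M ≤ R) : S.PicardBounds R M δ F (n + 1) := by
  have hle : aperture δ (n + 1) ≤ aperture δ n := aperture_antitone hδ.le n.le_succ
  have ha : 0 < aperture δ (n + 1) := aperture_pos hδ _
  have haT := aperture_mul_le hδ.le S.left_le_right hδT (n + 1)
  have hderiv := (h.hasConeDeriv hF hR hδ hδT).mono hle
  have hcont := hderiv.isConeContinuous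
  have hball := h.mapsConeToBall_succ hM hδ hδM hcont
  have hmaps := hball.mono le_rfl (mul_one_sub_half_pow_le hR _)
  have hderiv_succ := hF.hasConeDeriv_picard_succ ha haT hmaps hcont
  have contraction : 4 * aperture δ (n + 1) * C ≤ 1 / 4 := by
    linarith [mul_le_mul_of_nonneg_right (aperture_le hδ.le (n + 1)) hC]
  refine ⟨hcont, hball, HasConeBound.mono_const ?_ <|
    hF.hasConeBound_sub hC ha haT hmaps ((h.mapsConeToBall_radius hR).mono hle le_rfl) hderiv_succ
      hderiv ((picard_apply_zero _).trans (picard_apply_zero _).symm) (by positivity)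
      (h.increment.mono hle (by positivity))⟩
  calc 4 * aperture δ (n + 1) * C * (2 * M * δ * (1 / 4) ^ n)
    _ ≤ 1 / 4 * (2 * M * δ * (1 / 4) ^ n) := by gcongr
    _ = 2 * M * δ * (1 / 4) ^ (n + 1) := by ring

theorem picardBounds (hF : S.IsSingularLipschitz T R C F) (hR : 0 < R) (hC : 0 ≤ C) (hM : 0 ≤ M)
    (hF0 : ∀ r : ℝ, r₀ ≤ r → r < r₁ → ∀ t ∈ Icc (-T) T, S.levelNorm r (F t 0) ≤ M / (r₁ - r))
    (hδ : 0 < δ) (hδT : 2 * δ * (r₁ - r₀) ≤ T) (hδC : 32 * δ * C ≤ 1) (hδM : 32 * δ * M ≤ R)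
    (n : ℕ) : S.PicardBounds R M δ F n := by
  induction n with
  | zero => exact picardBounds_zero hF hR hM hF0 hδ hδT
  | succ n ih => exact ih.succ hF hR.le hC hM hδ hδT hδC hδM

theorem exists_hasConeDeriv (hF : S.IsSingularLipschitz T R C F) (hR : 0 < R) (hC : 0 ≤ C)
    (hM : 0 ≤ M)
    (hF0 : ∀ r : ℝ, r₀ ≤ r → r < r₁ → ∀ t ∈ Icc (-T) T, S.levelNorm r (F t 0) ≤ M / (r₁ - r))
    (hδ : 0 < δ) (hδT : 2 * δ * (r₁ - r₀) ≤ T) (hδC : 32 * δ * C ≤ 1) (hδM : 32 * δ * M ≤ R) :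
    ∃ u : ℝ → X, u 0 = 0 ∧ S.HasConeDeriv δ u (fun t ↦ F t (u t)) ∧
      ∀ (r : Icc r₀ r₁) (t : ℝ), |t| < δ * (r₁ - r) → ‖S.retract r (u t)‖ ≤ R / 2 := by
  have bounds (n : ℕ) := picardBounds hF hR hC hM hF0 hδ hδT hδC hδM n
  have hmaps (n : ℕ) : S.MapsConeToBall δ R (S.picard F n) :=
    ((bounds n).mapsConeToBall_radius hR.le).mono (le_aperture hδ.le n) le_rfl
  obtain ⟨u, hu0, hu⟩ := S.exists_cone_limit (A := R / 2) picard_apply_zero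
    (fun n r t ht ↦ (hmaps n r t ht).1)
    fun n r t ht ↦ (bounds n).norm_increment_le hM hδ hδM (lt_cone_of_le (le_aperture hδ.le _) ht)
  have hu_le (r : Icc r₀ r₁) (t : ℝ) (ht : |t| < δ * (r₁ - r)) :
      ‖S.retract r (u t)‖ ≤ R / 2 := by
    simpa [picard] using (hu r t ht).2 0
  have limit : Tendsto (fun n : ℕ ↦ R / 2 / 2 ^ n) atTop (𝓝 0) :=
    tendsto_const_nhds.div_atTop (tendsto_pow_atTop_atTop_of_one_lt one_lt_two)
  refine ⟨u, hu0, hF.hasConeDeriv_of_tendsto hC hδ ?_ hmaps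
    (fun r t ht ↦ ⟨(hu r t ht).1, (hu_le r t ht).trans_lt (half_lt_self hR)⟩)
    (fun n ↦ ((bounds n).hasConeDeriv hF hR.le hδ hδT).mono (le_aperture hδ.le n)) limit
    fun n r t ht ↦ (hu r t ht).2 n, hu_le⟩
  exact hδT.trans' (mul_le_mul_of_nonneg_right (by linarith) (sub_nonneg.2 S.left_le_right))

end Picard

section Solution

/-- `u` solves `u' = F(t, u)`, `u 0 = 0` on the cone `|t| < δ (r₁ - r)`, and at every level `r` it
stays in a ball of radius smaller than `R`. Derivatives are expressed through the norms of the
scale. -/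
def IsSolution (F : ℝ → X → X) (R δ : ℝ) (u : ℝ → X) : Prop :=
  u 0 = 0
    ∧ (∀ r ∈ Icc r₀ r₁, ∀ t : ℝ, |t| < δ * (r₁ - r) → u t ∈ S.space r)
    ∧ (∀ r ∈ Icc r₀ r₁, ∃ R' < R, ∀ t : ℝ, |t| < δ * (r₁ - r) → S.levelNorm r (u t) ≤ R')
    ∧ (∀ r ∈ Icc r₀ r₁, ∀ t : ℝ, |t| < δ * (r₁ - r) → ∀ ε > 0, ∃ η > 0,
        ∀ h : ℝ, h ≠ 0 → |h| < η → |t + h| < δ * (r₁ - r) →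
          S.levelNorm r (u (t + h) - u t - h • F t (u t)) ≤ ε * |h|)

variable {S} {T R C δ : ℝ} {F : ℝ → X → X} {u : ℝ → X}

theorem IsSolution.mapsConeToBall (hu : S.IsSolution F R δ u) : S.MapsConeToBall δ R u :=
  fun r t ht ↦ by
    obtain ⟨R', hR', hle⟩ := hu.2.2.1 r r.2
    have hmem := hu.2.1 r r.2 t ht
    exact ⟨hmem, (S.norm_retract hmem).trans_lt ((hle t ht).trans_lt hR')⟩

theorem IsSolution.hasConeDeriv (hu : S.IsSolution F R δ u) (hF : S.IsSingularLipschitz T R C F)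
    (hδ : 0 < δ) (hδT : δ * (r₁ - r₀) ≤ T) : S.HasConeDeriv δ u fun t ↦ F t (u t) :=
  fun r t ht ↦ ⟨hu.2.1 r r.2 t ht, (S.hasDerivAt_retract_iff (hu.2.1 r r.2)
    (hF.comp_mem hδ hδT hu.mapsConeToBall ht) ht).2 (hu.2.2.2 r r.2 t ht)⟩

theorem HasConeDeriv.isSolution (hu : S.HasConeDeriv δ u fun t ↦ F t (u t))
    (hF : S.IsSingularLipschitz T R C F) (hδ : 0 < δ) (hδT : δ * (r₁ - r₀) ≤ T) (h0 : u 0 = 0)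
    {R' : ℝ} (hR' : R' < R)
    (hle : ∀ (r : Icc r₀ r₁) (t : ℝ), |t| < δ * (r₁ - r) → ‖S.retract r (u t)‖ ≤ R') :
    S.IsSolution F R δ u := by
  have hmem (r) (hr : r ∈ Icc r₀ r₁) (t) (ht : |t| < δ * (r₁ - r)) : u t ∈ S.space r :=
    (hu ⟨r, hr⟩ t ht).1
  have hmaps : S.MapsConeToBall δ R u := fun r t ht ↦ ⟨hmem r r.2 t ht, (hle r t ht).trans_lt hR'⟩
  refine ⟨h0, hmem, fun r hr ↦ ⟨R', hR', fun t ht ↦ ?_⟩, fun r hr t ht ↦ ?_⟩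
  · rw [← S.norm_retract (r := ⟨r, hr⟩) (hmem r hr t ht)]
    exact hle ⟨r, hr⟩ t ht
  · exact (S.hasDerivAt_retract_iff (r := ⟨r, hr⟩) (hmem r hr)
      (hF.comp_mem (r := ⟨r, hr⟩) hδ hδT hmaps ht) ht).1 (hu ⟨r, hr⟩ t ht).2

theorem IsSolution.eq (hu : S.IsSolution F R δ u) {v : ℝ → X} (hv : S.IsSolution F R δ v)
    (hF : S.IsSingularLipschitz T R C F) (hC : 0 ≤ C) (hδ : 0 < δ) (hδT : δ * (r₁ - r₀) ≤ T)
    (hδC : 4 * δ * C < 1) {t : ℝ} (ht : |t| < δ * (r₁ - r₀)) : u t = v t :=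
  hF.eq_of_hasConeDeriv (r := S.bot) hC hδ hδT hδC hu.mapsConeToBall hv.mapsConeToBall
    (hu.hasConeDeriv hF hδ hδT) (hv.hasConeDeriv hF hδ hδT) (hu.1.trans hv.1.symm) ht

theorem exists_admissible_aperture (hT : 0 < T) (hR : 0 < R) (ℓ C M : ℝ) :
    ∃ δ ∈ Ioo 0 T, 2 * δ * ℓ ≤ T ∧ 32 * δ * C ≤ 1 ∧ 32 * δ * M ≤ R := by
  have small (c : ℝ) {b : ℝ} (hb : 0 < b) : ∀ᶠ δ in 𝓝[>] (0 : ℝ), c * δ < b :=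
    (Tendsto.eventually_lt_const (by simpa using hb)
      (Continuous.tendsto (by fun_prop : Continuous fun δ : ℝ ↦ c * δ) 0)).filter_mono
        nhdsWithin_le_nhds
  obtain ⟨δ, hδ, hδT, hδℓ, hδC, hδM⟩ := (eventually_mem_nhdsWithin.and <| (small 1 hT).and <|
    (small (2 * ℓ) hT).and <| (small (32 * C) one_pos).and (small (32 * M) hR)).exists
  exact ⟨δ, ⟨hδ, by linarith⟩, by linarith, by linarith, by linarith⟩

end Solution

end BanachScale

theorem stmt11_general {X : Type*} [AddCommGroup X] [Module ℝ X] {r₀ r₁ : ℝ}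
    (S : BanachScale X r₀ r₁) {T R C M : ℝ} (hT : 0 < T) (hR : 0 < R) (hC : 0 ≤ C) (hM : 0 ≤ M)
    {F : ℝ → X → X} (hF : S.IsSingularLipschitz T R C F)
    (hF0 : ∀ r : ℝ, r₀ ≤ r → r < r₁ → ∀ t ∈ Icc (-T) T, S.levelNorm r (F t 0) ≤ M / (r₁ - r)) :
    ∃ δ ∈ Ioo (0 : ℝ) T, ∃ u : ℝ → X, S.IsSolution F R δ u ∧
      ∀ v : ℝ → X, S.IsSolution F R δ v → ∀ t : ℝ, |t| < δ * (r₁ - r₀) → v t = u t := by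
  obtain ⟨δ, hδ, hδT₂, hδC, hδM⟩ := BanachScale.exists_admissible_aperture hT hR (r₁ - r₀) C M
  have hδT : δ * (r₁ - r₀) ≤ T := by nlinarith [hδ.1, S.left_le_right]
  obtain ⟨u, hu0, hderiv, hle⟩ :=
    BanachScale.exists_hasConeDeriv hF hR hC hM hF0 hδ.1 hδT₂ hδC hδM
  have hu : S.IsSolution F R δ u := hderiv.isSolution hF hδ.1 hδT hu0 (half_lt_self hR) hle
  exact ⟨δ, hδ, u, hu, fun v hv t ht ↦ hv.eq hu hF hC hδ.1 hδT (by linarith) ht⟩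

/-- **Theorem 3.1** (abstract Cauchy–Kovalevskaya theorem, Baouendi–Goulaouic
formulation). The scale of Banach spaces is encoded by submodules `B r` of a common
vector space `X` together with norms `N r`, decreasing in `r`, each complete; `F`
satisfies the scaled Lipschitz estimate (i) and the bound (ii). The conclusion produces
`δ ∈ (0,T)` and a solution `u` of `u' = F(t,u)`, `u(0) = 0`, with `sup ‖u(t)‖_r < R` on
`|t| < δ(r₁−r)` for every `r`, differentiability being expressed through the norms `N r`;
the solution is unique on `(−δ(r₁−r₀), δ(r₁−r₀))`. -/
theorem stmt11
    (X : Type*) [AddCommGroup X] [Module ℝ X]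
    (r₀ r₁ : ℝ) (hr₀ : 0 ≤ r₀) (hr₀₁ : r₀ ≤ r₁) (hr₁ : r₁ ≤ 1)
    (B : ℝ → Submodule ℝ X) (N : ℝ → X → ℝ)
    -- `N r` is a norm on `B r`
    (hN_nonneg : ∀ r ∈ Icc r₀ r₁, ∀ u ∈ B r, 0 ≤ N r u)
    (hN_eq_zero : ∀ r ∈ Icc r₀ r₁, ∀ u ∈ B r, (N r u = 0 ↔ u = 0))
    (hN_add : ∀ r ∈ Icc r₀ r₁, ∀ u ∈ B r, ∀ v ∈ B r, N r (u + v) ≤ N r u + N r v)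
    (hN_smul : ∀ r ∈ Icc r₀ r₁, ∀ c : ℝ, ∀ u ∈ B r, N r (c • u) = |c| * N r u)
    -- decreasing scale of spaces with nonincreasing norms
    (hBmono : ∀ r' r : ℝ, r₀ ≤ r' → r' < r → r ≤ r₁ → B r ≤ B r')
    (hNmono : ∀ r' r : ℝ, r₀ ≤ r' → r' < r → r ≤ r₁ → ∀ u ∈ B r, N r' u ≤ N r u)
    -- each `(B r, N r)` is complete
    (hcomplete : ∀ r ∈ Icc r₀ r₁, ∀ u : ℕ → X, (∀ n, u n ∈ B r) →
      (∀ ε > 0, ∃ K : ℕ, ∀ p ≥ K, ∀ q ≥ K, N r (u p - u q) < ε) →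
      ∃ l ∈ B r, ∀ ε > 0, ∃ K : ℕ, ∀ n ≥ K, N r (u n - l) < ε)
    (T R C M : ℝ) (hT : 0 < T) (hR : 0 < R) (hC : 0 < C) (hM : 0 < M)
    (F : ℝ → X → X)
    -- `F` maps `[−T,T] × {u ∈ B_r : ‖u‖_r < R}` into `B_{r'}` …
    (hFmem : ∀ r' r : ℝ, r₀ ≤ r' → r' < r → r ≤ r₁ → ∀ t ∈ Icc (-T) T,
      ∀ u ∈ B r, N r u < R → F t u ∈ B r')
    -- … continuously
    (hFcont : ∀ r' r : ℝ, r₀ ≤ r' → r' < r → r ≤ r₁ → ∀ t ∈ Icc (-T) T,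
      ∀ u ∈ B r, N r u < R → ∀ ε > 0, ∃ η > 0, ∀ t' ∈ Icc (-T) T, ∀ u' ∈ B r,
        N r u' < R → |t' - t| < η → N r (u' - u) < η → N r' (F t' u' - F t u) < ε)
    -- (i) scaled Lipschitz estimate
    (hFlip : ∀ r' r : ℝ, r₀ ≤ r' → r' < r → r ≤ r₁ → ∀ t ∈ Icc (-T) T,
      ∀ u ∈ B r, ∀ v ∈ B r, N r u ≤ R → N r v ≤ R →
        N r' (F t u - F t v) ≤ C / (r - r') * N r (u - v))
    -- (ii) bound on `F(t,0)`
    (hF0 : ∀ r : ℝ, r₀ ≤ r → r < r₁ → ∀ t ∈ Icc (-T) T, N r (F t 0) ≤ M / (r₁ - r)) :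
    ∃ δ ∈ Ioo (0 : ℝ) T, ∃ u : ℝ → X,
      (u 0 = 0
        ∧ (∀ r ∈ Icc r₀ r₁, ∀ t : ℝ, |t| < δ * (r₁ - r) → u t ∈ B r)
        ∧ (∀ r ∈ Icc r₀ r₁, ∃ R' < R, ∀ t : ℝ, |t| < δ * (r₁ - r) → N r (u t) ≤ R')
        ∧ (∀ r ∈ Icc r₀ r₁, ∀ t : ℝ, |t| < δ * (r₁ - r) → ∀ ε > 0, ∃ η > 0,
            ∀ h : ℝ, h ≠ 0 → |h| < η → |t + h| < δ * (r₁ - r) →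
              N r (u (t + h) - u t - h • F t (u t)) ≤ ε * |h|))
      ∧ ∀ v : ℝ → X,
          (v 0 = 0
            ∧ (∀ r ∈ Icc r₀ r₁, ∀ t : ℝ, |t| < δ * (r₁ - r) → v t ∈ B r)
            ∧ (∀ r ∈ Icc r₀ r₁, ∃ R' < R, ∀ t : ℝ, |t| < δ * (r₁ - r) → N r (v t) ≤ R')
            ∧ (∀ r ∈ Icc r₀ r₁, ∀ t : ℝ, |t| < δ * (r₁ - r) → ∀ ε > 0, ∃ η > 0,
                ∀ h : ℝ, h ≠ 0 → |h| < η → |t + h| < δ * (r₁ - r) →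
                  N r (v (t + h) - v t - h • F t (v t)) ≤ ε * |h|)) →
          ∀ t : ℝ, |t| < δ * (r₁ - r₀) → v t = u t :=
  stmt11_general ⟨B, N, hr₀₁, hN_nonneg, hN_eq_zero, hN_add, hN_smul, hBmono, hNmono, hcomplete⟩
    hT hR hC.le hM.le ⟨hFmem, hFcont, hFlip⟩ hF0
end

section
/- Let M be a real number with 0 < M < 1, let λ_φ, λ_ψ be nonzero integers, and let θ ∈ ℝ with cos θ ≠ 1. Then it is impossible that the following three conditions hold simultaneously: M²(λ_φ + λ_ψ)² + 2λ_φλ_ψ(1 − M²)(1 − cos θ) > 0, (λ_φ + λ_ψ)(λ_φM² − λ_ψ) ≥ 0, and (λ_φ + λ_ψ)(λ_ψM² − λ_φ) ≥ 0. -/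
section ResonanceIncompatibility

variable {R : Type*} [CommRing R] [LinearOrder R] [IsStrictOrderedRing R] {a b m c : R}

-- With `m = M ^ 2`, the hypotheses `hab` and `hba` are the sign conditions (5.6) and (5.7).
lemma add_eq_zero_of_add_mul_sub_nonneg (hm : m < 1)
    (hab : 0 ≤ (a + b) * (a * m - b)) (hba : 0 ≤ (a + b) * (b * m - a)) : a + b = 0 := by
  have sum_nonneg : 0 ≤ -((1 - m) * (a + b) ^ 2) :=
    calc 0 ≤ (a + b) * (a * m - b) + (a + b) * (b * m - a) := add_nonneg hab hba
      _ = -((1 - m) * (a + b) ^ 2) := by ring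
  have sq_nonpos : (a + b) ^ 2 ≤ 0 :=
    nonpos_of_mul_nonpos_right (neg_nonneg.mp sum_nonneg) (sub_pos.mpr hm)
  exact (sq_nonpos_iff (a + b)).mp sq_nonpos

-- With `m = M ^ 2` and `c = cos θ`, the left-hand side is the quantity that (5.4) requires positive.
lemma hyperbolicity_nonpos_of_add_eq_zero (hm : m ≤ 1) (hc : c ≤ 1) (hsum : a + b = 0) :
    m * (a + b) ^ 2 + 2 * a * b * (1 - m) * (1 - c) ≤ 0 := by
  obtain rfl : b = -a := eq_neg_of_add_eq_zero_right hsum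
  have term_nonneg : 0 ≤ 2 * a ^ 2 * (1 - m) * (1 - c) :=
    mul_nonneg (mul_nonneg (by positivity) (sub_nonneg.mpr hm)) (sub_nonneg.mpr hc)
  calc m * (a + -a) ^ 2 + 2 * a * -a * (1 - m) * (1 - c)
      = -(2 * a ^ 2 * (1 - m) * (1 - c)) := by ring
    _ ≤ 0 := neg_nonpos.mpr term_nonneg

theorem stmt18_general (hm : m < 1) (hc : c ≤ 1) :
    ¬ (0 < m * (a + b) ^ 2 + 2 * a * b * (1 - m) * (1 - c)
        ∧ 0 ≤ (a + b) * (a * m - b)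
        ∧ 0 ≤ (a + b) * (b * m - a)) := by
  rintro ⟨hyperbolic, hab, hba⟩
  have hsum : a + b = 0 := add_eq_zero_of_add_mul_sub_nonneg hm hab hba
  exact (hyperbolicity_nonpos_of_add_eq_zero hm.le hc hsum).not_gt hyperbolic

end ResonanceIncompatibility

/-- **Section 5, incompatibility of the resonance configuration (5.5b)** for the 3D
isentropic Euler equations with Mach number `M ∈ (0,1)`: the hyperbolicity criterion (5.4)
and the two sign conditions (5.6), (5.7) cannot hold simultaneously. -/
theorem stmt18 (M : ℝ) (hM₀ : 0 < M) (hM₁ : M < 1)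
    (lφ lψ : ℤ) (hlφ : lφ ≠ 0) (hlψ : lψ ≠ 0)
    (θ : ℝ) (hθ : Real.cos θ ≠ 1) :
    ¬ (0 < M ^ 2 * ((lφ : ℝ) + (lψ : ℝ)) ^ 2
          + 2 * (lφ : ℝ) * (lψ : ℝ) * (1 - M ^ 2) * (1 - Real.cos θ)
        ∧ 0 ≤ ((lφ : ℝ) + (lψ : ℝ)) * ((lφ : ℝ) * M ^ 2 - (lψ : ℝ))
        ∧ 0 ≤ ((lφ : ℝ) + (lψ : ℝ)) * ((lψ : ℝ) * M ^ 2 - (lφ : ℝ))) :=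
  stmt18_general ((sq_lt_one_iff₀ hM₀.le).mpr hM₁) (Real.cos_le_one θ)
end

section
/- Let v₀ > 0, u₀ > 0, c₀ > 0 and μ₁, μ₂, μ₃ ∈ ℝ. Then the following are equivalent: (i) for every θ ∈ ℝ, the three vectors of ℝ³ given by (v₀, c₀cos θ, c₀sin θ), (μ₁u₀, c₀cos θ + μ₂u₀, c₀sin θ + μ₃u₀) and (0, c₀sin θ, −c₀cos θ) are linearly dependent; (ii) μ₁ = v₀/u₀, μ₂ = 0 and μ₃ = 0. -/
/-!
At `η = (x, y)` the three image vectors have determinant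
`c * (c * (μ₁ * u - v) * (x ^ 2 + y ^ 2) - v * u * (μ₂ * x + μ₃ * y))`. It vanishes on the whole
unit circle exactly when the linear form `v * u * (μ₂ * x + μ₃ * y)` has the constant value
`c * (μ₁ * u - v)` there. A linear form is odd, so that constant equals its own opposite and is
zero, and then so is the form.
-/

section LopatinskiiDeterminant

variable {R : Type*} [CommRing R]

/-- The Lopatinskii matrix of the boundary matrix `B = (e₁ e₂ e₃ b₄)`, `b₄ = (μ₁, μ₂, μ₃)`, at the
frequency `(c, x, y)`: its rows are the images under `B` of the basis vectors `r₁`, `r₃¹`, `r₃²` of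
the stable subspace, so that `B` is injective on that subspace iff the rows are independent. The
direction `η = (x, y)` takes the place of `(cos θ, sin θ)` and is not required to be of unit
length. -/
def lopatinskiiMatrix (v u c μ₁ μ₂ μ₃ x y : R) : Matrix (Fin 3) (Fin 3) R :=
  !![v, c * x, c * y;
     μ₁ * u, c * x + μ₂ * u, c * y + μ₃ * u;
     0, c * y, -(c * x)]

theorem det_lopatinskiiMatrix (v u c μ₁ μ₂ μ₃ x y : R) :
    (lopatinskiiMatrix v u c μ₁ μ₂ μ₃ x y).det =
      c * (c * (μ₁ * u - v) * (x ^ 2 + y ^ 2) - v * u * (μ₂ * x + μ₃ * y)) := by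
  simp only [lopatinskiiMatrix, Matrix.det_fin_three, Matrix.of_apply, Matrix.cons_val]
  ring

end LopatinskiiDeterminant

theorem not_linearIndependent_row_iff_det_eq_zero {n K : Type*} [Fintype n]
    [DecidableEq n] [Field K] {A : Matrix n n K} : ¬ LinearIndependent K A.row ↔ A.det = 0 := by
  rw [Matrix.linearIndependent_rows_iff_isUnit, Matrix.isUnit_iff_isUnit_det, isUnit_iff_ne_zero,
    not_not]

theorem forall_sq_add_sq_eq_one_eq_linear_iff {R : Type*} [CommRing R] [NoZeroDivisors R]
    [NeZero (2 : R)] {k a b : R} :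
    (∀ x y : R, x ^ 2 + y ^ 2 = 1 → k = a * x + b * y) ↔ k = 0 ∧ a = 0 ∧ b = 0 := by
  constructor
  · intro h
    have at_east : k = a := by simpa using h 1 0 (by ring)
    have at_west : k = -a := by simpa using h (-1) 0 (by ring)
    have at_north : k = b := by simpa using h 0 1 (by ring)
    have two_mul_k : 2 * k = 0 := by linear_combination at_east + at_west
    have k_eq_zero : k = 0 := (mul_eq_zero.mp two_mul_k).resolve_left two_ne_zero
    exact ⟨k_eq_zero, at_east.symm.trans k_eq_zero, at_north.symm.trans k_eq_zero⟩
  · rintro ⟨rfl, rfl, rfl⟩ x y -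
    ring

theorem forall_cos_sin_iff_forall_sq_add_sq_eq_one {p : ℝ → ℝ → Prop} :
    (∀ θ : ℝ, p (Real.cos θ) (Real.sin θ)) ↔ ∀ x y : ℝ, x ^ 2 + y ^ 2 = 1 → p x y := by
  refine ⟨fun h x y hxy => ?_, fun h θ => h _ _ (Real.cos_sq_add_sin_sq θ)⟩
  have norm_eq_one : ‖(⟨x, y⟩ : ℂ)‖ = 1 := by
    rw [Complex.norm_eq_sqrt_sq_add_sq, hxy, Real.sqrt_one]
  obtain ⟨θ, hθ⟩ := (Complex.norm_eq_one_iff _).mp norm_eq_one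
  have cos_eq : Real.cos θ = x := by rw [← Complex.exp_ofReal_mul_I_re, hθ]
  have sin_eq : Real.sin θ = y := by rw [← Complex.exp_ofReal_mul_I_im, hθ]
  exact cos_eq ▸ sin_eq ▸ h θ

section Field

variable {K : Type*} [Field K] {v u c μ₁ μ₂ μ₃ : K}

theorem not_linearIndependent_lopatinskiiMatrix_iff (hc : c ≠ 0) {x y : K}
    (hxy : x ^ 2 + y ^ 2 = 1) :
    ¬ LinearIndependent K (lopatinskiiMatrix v u c μ₁ μ₂ μ₃ x y).row ↔
      c * (μ₁ * u - v) = v * u * μ₂ * x + v * u * μ₃ * y := by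
  rw [not_linearIndependent_row_iff_det_eq_zero, det_lopatinskiiMatrix, hxy, mul_one,
    mul_eq_zero_iff_left hc, sub_eq_zero, mul_add, mul_assoc _ μ₂, mul_assoc _ μ₃]

theorem stmt19_general [NeZero (2 : K)] (hv : v ≠ 0) (hu : u ≠ 0) (hc : c ≠ 0) :
    (∀ x y : K, x ^ 2 + y ^ 2 = 1 →
        ¬ LinearIndependent K (lopatinskiiMatrix v u c μ₁ μ₂ μ₃ x y).row)
      ↔ (μ₁ = v / u ∧ μ₂ = 0 ∧ μ₃ = 0) := by
  calc
    _ ↔ ∀ x y : K, x ^ 2 + y ^ 2 = 1 → c * (μ₁ * u - v) = v * u * μ₂ * x + v * u * μ₃ * y :=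
      forall₃_congr fun _ _ hxy => not_linearIndependent_lopatinskiiMatrix_iff hc hxy
    _ ↔ c * (μ₁ * u - v) = 0 ∧ v * u * μ₂ = 0 ∧ v * u * μ₃ = 0 :=
      forall_sq_add_sq_eq_one_eq_linear_iff
    _ ↔ μ₁ = v / u ∧ μ₂ = 0 ∧ μ₃ = 0 := by
      rw [mul_eq_zero_iff_left hc, mul_eq_zero_iff_left (mul_ne_zero hv hu),
        mul_eq_zero_iff_left (mul_ne_zero hv hu), sub_eq_zero, eq_div_iff hu]

end Field

/-- **Section 5, determination of the boundary matrix `B`** for the 3D isentropic Euler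
equations at the subsonic equilibrium: the images under `B = (e₁ e₂ e₃ b₄)`,
`b₄ = μ₁e₁ + μ₂e₂ + μ₃e₃`, of the basis of the stable subspace `E₋(ζ)` at
`ζ = (c₀, cos θ, sin θ)` are linearly dependent for every `θ` if and only if
`μ₁ = v₀/u₀`, `μ₂ = 0`, `μ₃ = 0`. -/
theorem stmt19 (v₀ u₀ c₀ : ℝ) (hv₀ : 0 < v₀) (hu₀ : 0 < u₀) (hc₀ : 0 < c₀)
    (μ₁ μ₂ μ₃ : ℝ) :
    (∀ θ : ℝ, ¬ LinearIndependent ℝ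
        ![![v₀, c₀ * Real.cos θ, c₀ * Real.sin θ],
          ![μ₁ * u₀, c₀ * Real.cos θ + μ₂ * u₀, c₀ * Real.sin θ + μ₃ * u₀],
          ![0, c₀ * Real.sin θ, -(c₀ * Real.cos θ)]])
      ↔ (μ₁ = v₀ / u₀ ∧ μ₂ = 0 ∧ μ₃ = 0) :=
  (forall_cos_sin_iff_forall_sq_add_sq_eq_one
    (p := fun x y => ¬ LinearIndependent ℝ (lopatinskiiMatrix v₀ u₀ c₀ μ₁ μ₂ μ₃ x y).row)).trans
    (stmt19_general hv₀.ne' hu₀.ne' hc₀.ne')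
end
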